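/- arXiv:2402.09647 — 3 statements merged into one kernel-verified Lean document; each statement's English description precedes it below -/
import Mathlib

section
/- Let Q ⊆ ℤ⁴ satisfy: (Q1) for every (x₀, x₁, x₂, x₃) ∈ Q there exist k, l, m ∈ ℤ with (x₀, x₁, x₂, x₃) = (m, k·m, l·m, k·l·m); and (Q2) for every finite set F ⊆ ℤ² there exists m ∈ ℤ with m ≠ 0 such that (m, k·m, l·m, k·l·m) ∈ Q for all (k, l) ∈ F. Then the first-order theory of the structure (ℤ; +, 1, Q) is undecidable; that is, the set of sentences of the first-order language with one binary function symbol +, one constant symbol 1, and one 4-ary relation symbol Q that are true in ℤ (with the standard addition, the constant interpreted as 1, and Q interpreted as above) is not a computable set of sentences (under an effective encoding of sentences). -/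
/-!
STATEMENT 3: Let Q ⊆ ℤ⁴ satisfy (Q1) every element of Q has the form (m, k·m, l·m, k·l·m),
and (Q2) for every finite F ⊆ ℤ² there is m ≠ 0 with (m, k·m, l·m, k·l·m) ∈ Q for all
(k, l) ∈ F. Then the first-order theory of (ℤ; +, 1, Q) is undecidable.
-/

open FirstOrder Language

namespace Stmt3

/-- The language with one binary function `+`, one constant `1`,
and one 4-ary relation `Q`. -/
def L : Language :=
  ⟨fun n => match n with | 0 => Unit | 2 => Unit | _ => Empty,
   fun n => match n with | 4 => Unit | _ => Empty⟩

instance instEncF : (n : ℕ) → Encodable (L.Functions n)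
  | 0 => inferInstanceAs (Encodable Unit)
  | 1 => inferInstanceAs (Encodable Empty)
  | 2 => inferInstanceAs (Encodable Unit)
  | (_ + 3) => inferInstanceAs (Encodable Empty)

instance instEncR : (n : ℕ) → Encodable (L.Relations n)
  | 0 => inferInstanceAs (Encodable Empty)
  | 1 => inferInstanceAs (Encodable Empty)
  | 2 => inferInstanceAs (Encodable Empty)
  | 3 => inferInstanceAs (Encodable Empty)
  | 4 => inferInstanceAs (Encodable Unit)
  | (_ + 5) => inferInstanceAs (Encodable Empty)

/-- Partial inverse to `BoundedFormula.listEncode` on sentences. -/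
def decodeSentence
    (l : List ((Σ k, L.Term (Empty ⊕ Fin k)) ⊕ ((Σ n, L.Relations n) ⊕ ℕ))) :
    Option L.Sentence :=
  (BoundedFormula.listDecode l)[0]?.bind
    (fun x => if h : x.1 = 0 then
      some (cast (congrArg (L.BoundedFormula Empty) h) x.2) else none)

/-- An effective encoding of sentences (via their encodings as lists of symbols). -/
instance instEncSentence : Encodable L.Sentence :=
  Encodable.ofLeftInjection
    (fun φ => BoundedFormula.listEncode φ)
    decodeSentence
    (fun φ => by
      have h := BoundedFormula.listDecode_encode_list (L := L) (α := Empty) [⟨0, φ⟩]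
      rw [List.flatMap_singleton] at h
      have h' : BoundedFormula.listDecode (BoundedFormula.listEncode φ) =
          [⟨0, φ⟩] := h
      simp [decodeSentence, h'])

/-- The structure on ℤ interpreting `+`, `1` and `Q`. -/
def S (Q : Set (ℤ × ℤ × ℤ × ℤ)) : L.Structure ℤ where
  funMap {n} f x :=
    match n, f with
    | 0, _ => 1
    | 2, _ => x 0 + x 1
  RelMap {n} r x :=
    match n, r with
    | 4, _ => (x 0, x 1, x 2, x 3) ∈ Q

/-- The first-order theory of (ℤ; +, 1, Q), as a set of codes of sentences. -/
def theoryCodes (Q : Set (ℤ × ℤ × ℤ × ℤ)) : Set ℕ :=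
  {c | ∃ φ : L.Sentence, Encodable.encode φ = c ∧ @Sentence.Realize L ℤ (S Q) φ}

/-! ### Definable predicates -/

/-- A predicate on valuations which is defined by a formula. -/
def Dfn (Q : Set (ℤ × ℤ × ℤ × ℤ)) {α : Type} (P : (α → ℤ) → Prop) : Prop :=
  ∃ φ : L.Formula α, ∀ v, @Formula.Realize L ℤ (S Q) α φ v ↔ P v

/-- The addition symbol. -/
def plusS : L.Functions 2 := (() : Unit)

/-- The relation symbol. -/
def relS : L.Relations 4 := (() : Unit)

/-- The addition symbol applied to two terms. -/
def addT {α : Type} (s t : L.Term α) : L.Term α :=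
  Term.func plusS ![s, t]

lemma realize_addT (Q : Set (ℤ × ℤ × ℤ × ℤ)) {α : Type} (s t : L.Term α) (v : α → ℤ) :
    @Term.realize L ℤ (S Q) α v (addT s t) =
      @Term.realize L ℤ (S Q) α v s + @Term.realize L ℤ (S Q) α v t := by
  rfl

section
variable {Q : Set (ℤ × ℤ × ℤ × ℤ)} {α β : Type}

lemma Dfn.congr {P P' : (α → ℤ) → Prop} (h : Dfn Q P) (e : ∀ v, P v ↔ P' v) : Dfn Q P' := by
  obtain ⟨φ, h⟩ := h
  exact ⟨φ, fun v => (h v).trans (e v)⟩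

lemma Dfn.eq (i j : α) : Dfn Q (fun v => v i = v j) := by
  let _ := S Q
  refine ⟨Term.equal (Term.var i) (Term.var j), fun v => ?_⟩
  simp

lemma Dfn.add (i j k : α) : Dfn Q (fun v => v i + v j = v k) := by
  let _ := S Q
  refine ⟨Term.equal (addT (Term.var i) (Term.var j)) (Term.var k), fun v => ?_⟩
  rw [Formula.realize_equal, realize_addT]
  rfl

lemma Dfn.q (i j k l : α) : Dfn Q (fun v => (v i, v j, v k, v l) ∈ Q) := by
  let _ := S Q
  refine ⟨Relations.formula relS
    ![Term.var i, Term.var j, Term.var k, Term.var l], fun v => ?_⟩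
  rw [Formula.realize_rel]
  rfl

lemma Dfn.not {P : (α → ℤ) → Prop} (h : Dfn Q P) : Dfn Q (fun v => ¬ P v) := by
  let _ := S Q
  obtain ⟨φ, h⟩ := h
  refine ⟨φ.not, fun v => ?_⟩
  rw [Formula.realize_not, h]

lemma Dfn.and {P R : (α → ℤ) → Prop} (h : Dfn Q P) (h' : Dfn Q R) :
    Dfn Q (fun v => P v ∧ R v) := by
  let _ := S Q
  obtain ⟨φ, h⟩ := h
  obtain ⟨ψ, h'⟩ := h'
  refine ⟨φ ⊓ ψ, fun v => ?_⟩
  rw [Formula.realize_inf, h, h']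

lemma Dfn.imp {P R : (α → ℤ) → Prop} (h : Dfn Q P) (h' : Dfn Q R) :
    Dfn Q (fun v => P v → R v) :=
  (h.and h'.not).not.congr (fun v => by tauto)

lemma Dfn.or {P R : (α → ℤ) → Prop} (h : Dfn Q P) (h' : Dfn Q R) :
    Dfn Q (fun v => P v ∨ R v) :=
  (h.not.and h'.not).not.congr (fun v => by tauto)

lemma Dfn.ex {P : (α → ℤ) → ℤ → Prop}
    (h : Dfn Q (fun v : Option α → ℤ => P (fun i => v (some i)) (v none))) :
    Dfn Q (fun v => ∃ y, P v y) := by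
  let _ := S Q
  obtain ⟨φ, h⟩ := h
  refine ⟨Formula.iExs Unit (φ.relabel (fun o : Option α => o.elim (Sum.inr ()) Sum.inl)),
    fun v => ?_⟩
  rw [Formula.realize_iExs]
  constructor
  · rintro ⟨y, hy⟩
    rw [Formula.realize_relabel] at hy
    exact ⟨y (), (h _).1 hy⟩
  · rintro ⟨y, hy⟩
    refine ⟨fun _ => y, ?_⟩
    rw [Formula.realize_relabel]
    exact (h _).2 hy

lemma Dfn.all {P : (α → ℤ) → ℤ → Prop}
    (h : Dfn Q (fun v : Option α → ℤ => P (fun i => v (some i)) (v none))) :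
    Dfn Q (fun v => ∀ y, P v y) := by
  have h2 : Dfn Q (fun v => ∃ y, ¬ P v y) := Dfn.ex h.not
  exact h2.not.congr (fun v => by simp)

end

/-! ### Computability of the reduction -/

/-- The term `m + (m + (... + m))` with `n + 1` summands, where `m` is the second variable. -/
def numT : ℕ → L.Term (Empty ⊕ Fin 2)
  | 0 => Term.var (Sum.inr 1)
  | n + 1 => addT (Term.var (Sum.inr 1)) (numT n)

/-- The sentence `∀ x m, x = (n + 1) m → ψ`. -/
def sent (ψ : L.BoundedFormula Empty 2) (n : ℕ) : L.Sentence :=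
  BoundedFormula.all (n := 0) (BoundedFormula.all (n := 1) (BoundedFormula.imp
    (BoundedFormula.equal (n := 2) (Term.var (Sum.inr 0)) (numT n)) ψ))

lemma realize_numT (Q : Set (ℤ × ℤ × ℤ × ℤ)) (n : ℕ) (v : Empty ⊕ Fin 2 → ℤ) :
    @Term.realize L ℤ (S Q) _ v (numT n) = (n + 1 : ℕ) * v (Sum.inr 1) := by
  induction n with
  | zero => simp [numT]
  | succ n ih =>
    rw [numT, realize_addT, ih]
    simp only [Term.realize]
    push_cast
    ring

lemma realize_sent (Q : Set (ℤ × ℤ × ℤ × ℤ)) {P : ℤ → ℤ → Prop}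
    (hP : Dfn Q (fun v : Fin 2 → ℤ => P (v 0) (v 1))) :
    ∃ ψ : L.BoundedFormula Empty 2, ∀ n : ℕ,
      @Sentence.Realize L ℤ (S Q) (sent ψ n) ↔ ∀ m : ℤ, P ((n + 1 : ℕ) * m) m := by
  let _ := S Q
  obtain ⟨φ, hφ⟩ := hP
  refine ⟨BoundedFormula.relabel (n := 2) (k := 0) Sum.inr φ, fun n => ?_⟩
  unfold Sentence.Realize Formula.Realize sent
  rw [BoundedFormula.realize_all]
  constructor
  · intro h m
    have h1 := h ((n + 1 : ℕ) * m)
    rw [BoundedFormula.realize_all] at h1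
    have h2 := h1 m
    rw [BoundedFormula.realize_imp] at h2
    have h3 := h2 (by
      change Term.realize _ _ = Term.realize _ (numT n)
      rw [realize_numT]
      rfl)
    exact (hφ _).1 ((Formula.realize_relabel_sumInr (n := 2) φ).1 h3)
  · intro h x
    rw [BoundedFormula.realize_all]
    intro m
    rw [BoundedFormula.realize_imp]
    intro he
    change Term.realize _ _ = Term.realize _ (numT n) at he
    rw [realize_numT] at he
    refine (Formula.realize_relabel_sumInr (n := 2) φ).2 ((hφ _).2 ?_)
    have he' : x = (n + 1 : ℕ) * m := he
    have := h m
    rw [← he'] at this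
    exact this

lemma encode_numT : ∃ f : ℕ → ℕ, Primrec f ∧ ∀ n, Encodable.encode (numT n) = f n := by
  let a : ℕ := Encodable.encode (Sum.inr ⟨2, plusS⟩ : (Empty ⊕ Fin 2) ⊕ (Σ i, L.Functions i))
  let b : ℕ := Encodable.encode (Sum.inl (Sum.inr 1) : (Empty ⊕ Fin 2) ⊕ (Σ i, L.Functions i))
  let z : ℕ := Encodable.encode ([Sum.inl (Sum.inr 1)] : List ((Empty ⊕ Fin 2) ⊕ (Σ i, L.Functions i)))
  let g : ℕ → ℕ := fun c => Nat.succ (Nat.pair a (Nat.succ (Nat.pair b c)))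
  have hg : Primrec g := Primrec.succ.comp (Primrec₂.natPair.comp (Primrec.const a)
    (Primrec.succ.comp (Primrec₂.natPair.comp (Primrec.const b) Primrec.id)))
  refine ⟨fun n => g^[n] z, ?_, fun n => ?_⟩
  · exact Primrec.nat_iterate Primrec.id (Primrec.const z) (hg.comp Primrec.snd).to₂
  · change Encodable.encode (Term.listEncode (numT n)) = _
    induction n with
    | zero => rfl
    | succ n ih =>
      beta_reduce at ih ⊢
      rw [Function.iterate_succ_apply', ← ih]
      have : (numT (n + 1)).listEncode =
        Sum.inr ⟨2, plusS⟩ :: Sum.inl (Sum.inr 1) :: (numT n).listEncode := by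
        rw [numT, addT, Term.listEncode]
        simp [List.finRange_succ, Term.listEncode]
      rw [this, Encodable.encode_list_cons, Encodable.encode_list_cons]

lemma encode_sent (ψ : L.BoundedFormula Empty 2) :
    Primrec (fun n => Encodable.encode (sent ψ n)) := by
  obtain ⟨f, hf, h⟩ := encode_numT
  have e : ∀ n, Encodable.encode (sent ψ n) =
      Encodable.encode (BoundedFormula.listEncode (sent ψ n)) := fun n => rfl
  have e2 : ∀ n, BoundedFormula.listEncode (sent ψ n) =
      Sum.inr (Sum.inr 1) :: Sum.inr (Sum.inr 1) :: Sum.inr (Sum.inr 0) ::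
      Sum.inl ⟨2, Term.var (Sum.inr 0)⟩ :: Sum.inl ⟨2, numT n⟩ :: BoundedFormula.listEncode ψ := by
    intro n
    rfl
  simp only [e, e2, Encodable.encode_list_cons]
  have e3 : ∀ n, Encodable.encode (Sum.inl ⟨2, numT n⟩ :
    (Σ k, L.Term (Empty ⊕ Fin k)) ⊕ ((Σ n, L.Relations n) ⊕ ℕ)) = 2 * (Nat.pair 2 (f n)) := by
    intro n
    rw [← h n]
    rfl
  simp only [e3]
  have h2 : Primrec (fun n => 2 * (Nat.pair 2 (f n))) :=
    Primrec.nat_mul.comp (Primrec.const 2) (Primrec₂.natPair.comp (Primrec.const 2) hf)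
  have st : ∀ (a : ℕ) {g : ℕ → ℕ}, Primrec g → Primrec (fun n => Nat.succ (Nat.pair a (g n))) :=
    fun a g hg => Primrec.succ.comp (Primrec₂.natPair.comp (Primrec.const a) hg)
  exact st _ (st _ (st _ (st _ (Primrec.succ.comp (Primrec₂.natPair.comp h2 (Primrec.const _))))))

/-- The reduction: an undecidable problem expressed through sentences. -/
lemma reduce (Q : Set (ℤ × ℤ × ℤ × ℤ)) {P : ℤ → ℤ → Prop}
    (hP : Dfn Q (fun v : Fin 2 → ℤ => P (v 0) (v 1)))
    (hc : ComputablePred (fun c => c ∈ theoryCodes Q)) :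
    ComputablePred (fun n : ℕ => ∀ m : ℤ, P ((n + 1 : ℕ) * m) m) := by
  obtain ⟨ψ, hψ⟩ := realize_sent Q hP
  obtain ⟨f, hf, hfe⟩ := ComputablePred.computable_iff.1 hc
  refine ComputablePred.computable_iff.2
    ⟨fun n => f (Encodable.encode (sent ψ n)), hf.comp (encode_sent ψ).to_comp, ?_⟩
  funext n
  rw [← congrFun hfe (Encodable.encode (sent ψ n)), ← hψ n]
  apply propext
  constructor
  · intro h
    exact ⟨_, rfl, h⟩
  · rintro ⟨φ, h1, h2⟩
    rw [Encodable.encode_injective h1] at h2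
    exact h2

/-! ### Initial segments -/

/-- `x` is a square in units of `m`. -/
def Sq (Q : Set (ℤ × ℤ × ℤ × ℤ)) (m x : ℤ) : Prop := ∃ a, (m, a, a, x) ∈ Q

/-- `x` is a sum of four squares in units of `m`. -/
def Nn (Q : Set (ℤ × ℤ × ℤ × ℤ)) (m x : ℤ) : Prop :=
  ∃ a b c d s t, Sq Q m a ∧ Sq Q m b ∧ Sq Q m c ∧ Sq Q m d ∧ a + b = s ∧ s + c = t ∧ t + d = x

/-- `x` is between `0` and `N` in units of `m`. -/
def Dom (Q : Set (ℤ × ℤ × ℤ × ℤ)) (m N x : ℤ) : Prop :=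
  Nn Q m x ∧ ∃ y, x + y = N ∧ Nn Q m y

/-- The pair `(m, N)` describes a good initial segment; definable version. -/
def GoodF (Q : Set (ℤ × ℤ × ℤ × ℤ)) (m N : ℤ) : Prop :=
  (¬ m + m = m) ∧ (∃ o, o + o = o ∧ Dom Q m N o) ∧
  (∀ x, Dom Q m N x → (x = N ∨ ∃ y, x + m = y ∧ Dom Q m N y)) ∧
  (∀ x y, Dom Q m N x → Dom Q m N y → ∃ z, (m, x, y, z) ∈ Q)

/-- The pair `(m, n m)` describes a good initial segment; semantic version. -/
structure Good (Q : Set (ℤ × ℤ × ℤ × ℤ)) (m : ℤ) (n : ℕ) : Prop where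
  ne : m ≠ 0
  dom : ∀ x, Dom Q m (n * m) x ↔ ∃ i : ℕ, i ≤ n ∧ x = i * m
  mul : ∀ i j : ℕ, i ≤ n → j ≤ n → ((m, i * m, j * m, i * j * m) : ℤ × ℤ × ℤ × ℤ) ∈ Q

section
variable {Q : Set (ℤ × ℤ × ℤ × ℤ)} {α β : Type}

lemma dfn_Sq (i j : α) : Dfn Q (fun v => Sq Q (v i) (v j)) := by
  unfold Sq
  apply Dfn.ex
  exact Dfn.q _ _ _ _

lemma dfn_Nn (i j : α) : Dfn Q (fun v => Nn Q (v i) (v j)) := by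
  unfold Nn
  iterate 6 apply Dfn.ex
  exact (dfn_Sq _ _).and <| (dfn_Sq _ _).and <| (dfn_Sq _ _).and <| (dfn_Sq _ _).and <|
    (Dfn.add _ _ _).and <| (Dfn.add _ _ _).and <| Dfn.add _ _ _

lemma dfn_Dom (i j k : α) : Dfn Q (fun v => Dom Q (v i) (v j) (v k)) := by
  unfold Dom
  refine (dfn_Nn _ _).and ?_
  apply Dfn.ex
  exact (Dfn.add _ _ _).and (dfn_Nn _ _)

lemma dfn_GoodF (i j : α) : Dfn Q (fun v => GoodF Q (v i) (v j)) := by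
  unfold GoodF
  refine (Dfn.add _ _ _).not.and (Dfn.and ?_ (Dfn.and ?_ ?_))
  · apply Dfn.ex
    exact (Dfn.add _ _ _).and (dfn_Dom _ _ _)
  · apply Dfn.all
    refine (dfn_Dom _ _ _).imp ((Dfn.eq _ _).or ?_)
    apply Dfn.ex
    exact (Dfn.add _ _ _).and (dfn_Dom _ _ _)
  · apply Dfn.all
    apply Dfn.all
    refine (dfn_Dom _ _ _).imp ((dfn_Dom _ _ _).imp ?_)
    apply Dfn.ex
    exact Dfn.q _ _ _ _

variable (hQ1 : ∀ x ∈ Q, ∃ k l m : ℤ, x = (m, k * m, l * m, k * l * m))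
include hQ1

lemma q_sound {m : ℤ} (hm : m ≠ 0) {i j z : ℤ} (h : (m, i * m, j * m, z) ∈ Q) :
    z = i * j * m := by
  obtain ⟨k, l, m', h⟩ := hQ1 _ h
  simp only [Prod.mk.injEq] at h
  obtain ⟨rfl, h1, h2, h3⟩ := h
  rw [mul_right_cancel₀ hm h1, mul_right_cancel₀ hm h2, h3]

lemma nn_sound {m x : ℤ} (h : Nn Q m x) : ∃ i : ℕ, x = i * m := by
  have sq : ∀ {y}, Sq Q m y → ∃ i : ℕ, y = i * m := by
    rintro y ⟨a, ha⟩
    obtain ⟨k, l, m', h⟩ := hQ1 _ ha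
    simp only [Prod.mk.injEq] at h
    obtain ⟨rfl, h1, h2, h3⟩ := h
    by_cases hm : m = 0
    · exact ⟨0, by simp [h3, hm]⟩
    · have : k = l := mul_right_cancel₀ hm (h1.symm.trans h2)
      subst this
      refine ⟨(k * k).toNat, ?_⟩
      rw [Int.toNat_of_nonneg (mul_self_nonneg k), h3]
  obtain ⟨a, b, c, d, s, t, ha, hb, hc, hd, h1, h2, h3⟩ := h
  obtain ⟨i, rfl⟩ := sq ha
  obtain ⟨j, rfl⟩ := sq hb
  obtain ⟨k, rfl⟩ := sq hc
  obtain ⟨l, rfl⟩ := sq hd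
  refine ⟨i + j + k + l, ?_⟩
  subst h3 h2 h1
  push_cast
  ring

lemma dom_sound {m : ℤ} (hm : m ≠ 0) {n : ℕ} {x : ℤ} (h : Dom Q m (n * m) x) :
    ∃ i : ℕ, i ≤ n ∧ x = i * m := by
  obtain ⟨h1, y, hy, h2⟩ := h
  obtain ⟨i, rfl⟩ := nn_sound hQ1 h1
  obtain ⟨j, rfl⟩ := nn_sound hQ1 h2
  refine ⟨i, ?_, rfl⟩
  have : ((i : ℤ) + j) * m = n * m := by linarith
  have := mul_right_cancel₀ hm this
  omega

lemma good_of_goodF {m N : ℤ} (h : GoodF Q m N) : ∃ n : ℕ, N = n * m ∧ Good Q m n := by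
  obtain ⟨h0, ⟨o, ho, h1⟩, h2, h3⟩ := h
  have hm : m ≠ 0 := by
    rintro rfl
    exact h0 rfl
  have ho' : o = 0 := by omega
  subst ho'
  obtain ⟨n, hn⟩ : ∃ n : ℕ, N = n * m := by
    obtain ⟨_, y, hy, hy'⟩ := h1
    obtain ⟨n, rfl⟩ := nn_sound hQ1 hy'
    exact ⟨n, by omega⟩
  subst hn
  have key : ∀ i : ℕ, i ≤ n → Dom Q m (n * m) (i * m) := by
    intro i
    induction i with
    | zero => intro _; simpa using h1
    | succ i ih =>
      intro hi
      rcases h2 _ (ih (by omega)) with h | ⟨y, hy, h⟩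
      · have := mul_right_cancel₀ hm h
        omega
      · convert h using 1
        rw [← hy]
        push_cast
        ring
  refine ⟨n, rfl, hm, fun x => ⟨dom_sound hQ1 hm, ?_⟩, ?_⟩
  · rintro ⟨i, hi, rfl⟩
    exact key i hi
  · intro i j hi hj
    obtain ⟨z, hz⟩ := h3 _ _ (key i hi) (key j hj)
    rw [← q_sound hQ1 hm hz]
    exact hz

lemma exists_goodF (hQ2 : ∀ F : Finset (ℤ × ℤ), ∃ m : ℤ, m ≠ 0 ∧
      ∀ p ∈ F, (m, p.1 * m, p.2 * m, p.1 * p.2 * m) ∈ Q) (n : ℕ) :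
    ∃ m : ℤ, GoodF Q m (n * m) ∧ Good Q m n := by
  obtain ⟨m, hm, hF⟩ := hQ2 (Finset.Icc 0 (n : ℤ) ×ˢ Finset.Icc 0 (n : ℤ))
  have mul : ∀ i j : ℕ, i ≤ n → j ≤ n →
      ((m, i * m, j * m, i * j * m) : ℤ × ℤ × ℤ × ℤ) ∈ Q := by
    intro i j hi hj
    exact hF (i, j) (by simp; omega)
  have nn : ∀ i : ℕ, i ≤ n → Nn Q m (i * m) := by
    intro i hi
    obtain ⟨a, b, c, d, h⟩ := Nat.sum_four_squares i
    have sq : ∀ a : ℕ, a ^ 2 ≤ i → Sq Q m ((a * a : ℤ) * m) := by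
      intro a ha
      have : a ≤ n := by nlinarith
      exact ⟨a * m, mul a a this this⟩
    refine ⟨_, _, _, _, _, _, sq a (by omega), sq b (by omega), sq c (by omega), sq d (by omega),
      rfl, rfl, ?_⟩
    rw [← h]
    push_cast
    ring
  have dom : ∀ x, Dom Q m (n * m) x ↔ ∃ i : ℕ, i ≤ n ∧ x = i * m := by
    intro x
    refine ⟨dom_sound hQ1 hm, ?_⟩
    rintro ⟨i, hi, rfl⟩
    refine ⟨nn i hi, _, ?_, nn (n - i) (by omega)⟩
    rw [Nat.cast_sub hi]
    ring
  refine ⟨m, ⟨by omega, ⟨0, by simp, (dom 0).2 ⟨0, by simp⟩⟩, ?_, ?_⟩, hm, dom, mul⟩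
  · intro x hx
    obtain ⟨i, hi, rfl⟩ := (dom x).1 hx
    by_cases h : i = n
    · left
      rw [h]
    · right
      refine ⟨_, rfl, (dom _).2 ⟨i + 1, by omega, ?_⟩⟩
      push_cast
      ring
  · intro x y hx hy
    obtain ⟨i, hi, rfl⟩ := (dom x).1 hx
    obtain ⟨j, hj, rfl⟩ := (dom y).1 hy
    exact ⟨_, mul i j hi hj⟩

end

/-! ### Semidecidable relations -/

/-- A relation on the natural numbers which can be expressed on large initial segments. -/
def Sig (Q : Set (ℤ × ℤ × ℤ × ℤ)) {α : Type} (R : (α → ℕ) → Prop) : Prop :=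
  ∃ E : (α → ℤ) → ℤ → ℤ → Prop,
    (∀ (β : Type) (f : α → β) (a b : β),
      Dfn Q (fun w : β → ℤ => E (fun i => w (f i)) (w a) (w b))) ∧
    (∀ (m : ℤ) (n : ℕ) (v : α → ℕ), Good Q m n → (∀ i, v i ≤ n) →
      E (fun i => v i * m) m (n * m) → R v) ∧
    (∀ v : α → ℕ, R v → ∃ n₀ : ℕ, ∀ (m : ℤ) (n : ℕ), n₀ ≤ n → Good Q m n → (∀ i, v i ≤ n) →
      E (fun i => v i * m) m (n * m))

section
variable {Q : Set (ℤ × ℤ × ℤ × ℤ)} {α β : Type}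

lemma Sig.congr {P P' : (α → ℕ) → Prop} (h : Sig Q P) (e : ∀ v, P v ↔ P' v) : Sig Q P' := by
  have : P = P' := funext fun v => propext (e v)
  exact this ▸ h

lemma Sig.and {P R : (α → ℕ) → Prop} (h : Sig Q P) (h' : Sig Q R) :
    Sig Q (fun v => P v ∧ R v) := by
  obtain ⟨E, h1, h2, h3⟩ := h
  obtain ⟨E', h1', h2', h3'⟩ := h'
  refine ⟨fun v m N => E v m N ∧ E' v m N, fun β f a b => (h1 β f a b).and (h1' β f a b),
    fun m n v hg hv hE => ⟨h2 m n v hg hv hE.1, h2' m n v hg hv hE.2⟩, ?_⟩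
  rintro v ⟨hv, hv'⟩
  obtain ⟨n₀, h⟩ := h3 v hv
  obtain ⟨n₁, h'⟩ := h3' v hv'
  exact ⟨max n₀ n₁, fun m n hn hg hb => ⟨h m n (le_trans (le_max_left _ _) hn) hg hb,
    h' m n (le_trans (le_max_right _ _) hn) hg hb⟩⟩

lemma Sig.or {P R : (α → ℕ) → Prop} (h : Sig Q P) (h' : Sig Q R) :
    Sig Q (fun v => P v ∨ R v) := by
  obtain ⟨E, h1, h2, h3⟩ := h
  obtain ⟨E', h1', h2', h3'⟩ := h'
  refine ⟨fun v m N => E v m N ∨ E' v m N, fun β f a b => (h1 β f a b).or (h1' β f a b),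
    fun m n v hg hv hE => hE.imp (h2 m n v hg hv) (h2' m n v hg hv), ?_⟩
  rintro v (hv | hv)
  · obtain ⟨n₀, h⟩ := h3 v hv
    exact ⟨n₀, fun m n hn hg hb => Or.inl (h m n hn hg hb)⟩
  · obtain ⟨n₀, h⟩ := h3' v hv
    exact ⟨n₀, fun m n hn hg hb => Or.inr (h m n hn hg hb)⟩

lemma Sig.comp {P : (α → ℕ) → Prop} (h : Sig Q P) (g : α → β) :
    Sig Q (fun v => P (fun i => v (g i))) := by
  obtain ⟨E, h1, h2, h3⟩ := h
  refine ⟨fun v m N => E (fun i => v (g i)) m N, fun γ f a b => h1 γ (fun i => f (g i)) a b,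
    fun m n v hg hv hE => h2 m n _ hg (fun i => hv (g i)) hE, ?_⟩
  intro v hv
  obtain ⟨n₀, h⟩ := h3 _ hv
  exact ⟨n₀, fun m n hn hg hb => h m n hn hg (fun i => hb (g i))⟩

lemma Sig.ex {P : (α → ℕ) → ℕ → Prop}
    (h : Sig Q (fun v : Option α → ℕ => P (fun i => v (some i)) (v none))) :
    Sig Q (fun v => ∃ y, P v y) := by
  obtain ⟨E, h1, h2, h3⟩ := h
  refine ⟨fun v m N => ∃ y, Dom Q m N y ∧ E (fun o => o.elim y v) m N, ?_, ?_, ?_⟩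
  · intro β f a b
    apply Dfn.ex
    refine (dfn_Dom _ _ _).and ?_
    refine (h1 (Option β) (fun o => o.elim none (fun i => some (f i))) (some a) (some b)).congr
      fun w => ?_
    have : (fun i => w ((fun o : Option α => o.elim none (fun i => some (f i))) i)) =
        (fun o : Option α => o.elim (w none) (fun i => w (some (f i)))) := by
      funext o
      cases o <;> rfl
    rw [this]
  · rintro m n v hg hv ⟨y, hy, hE⟩
    obtain ⟨i, hi, rfl⟩ := (hg.dom y).1 hy
    refine ⟨i, h2 m n (fun o => o.elim i v) hg ?_ ?_⟩
    · rintro (_ | j)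
      · exact hi
      · exact hv j
    · convert hE using 1
      funext o
      cases o <;> rfl
  · rintro v ⟨i, hi⟩
    obtain ⟨n₀, h⟩ := h3 (fun o => o.elim i v) hi
    refine ⟨max n₀ i, fun m n hn hg hb => ⟨i * m, (hg.dom _).2 ⟨i, ?_, rfl⟩, ?_⟩⟩
    · exact le_trans (le_max_right _ _) hn
    · convert h m n (le_trans (le_max_left _ _) hn) hg ?_ using 1
      · funext o
        cases o <;> rfl
      · rintro (_ | j)
        · exact le_trans (le_max_right _ _) hn
        · exact hb j

/-- Bounded universal quantification. -/
lemma Sig.ball {P : (α → ℕ) → ℕ → Prop} (k : α)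
    (h : Sig Q (fun v : Option α → ℕ => P (fun i => v (some i)) (v none))) :
    Sig Q (fun v => ∀ y, y < v k → P v y) := by
  obtain ⟨E, h1, h2, h3⟩ := h
  refine ⟨fun v m N => ∀ y, Dom Q m N y →
    (∃ z, Dom Q m N z ∧ ∃ u, y + m = u ∧ u + z = v k) → E (fun o => o.elim y v) m N, ?_, ?_, ?_⟩
  · intro β f a b
    apply Dfn.all
    refine (dfn_Dom _ _ _).imp (Dfn.imp ?_ ?_)
    · apply Dfn.ex
      refine (dfn_Dom _ _ _).and ?_
      apply Dfn.ex
      exact (Dfn.add _ _ _).and (Dfn.add _ _ _)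
    refine (h1 (Option β) (fun o => o.elim none (fun i => some (f i))) (some a) (some b)).congr
      fun w => ?_
    have : (fun i => w ((fun o : Option α => o.elim none (fun i => some (f i))) i)) =
        (fun o : Option α => o.elim (w none) (fun i => w (some (f i)))) := by
      funext o
      cases o <;> rfl
    rw [this]
  · rintro m n v hg hv hE i hi
    have hk := hv k
    refine h2 m n (fun o => o.elim i v) hg ?_ ?_
    · rintro (_ | j)
      · simp only [Option.elim_none]
        omega
      · exact hv j
    · convert hE (i * m) ((hg.dom _).2 ⟨i, by omega, rfl⟩)
        ⟨(v k - (i + 1) : ℕ) * m, (hg.dom _).2 ⟨_, by omega, rfl⟩, _, rfl, ?_⟩ using 1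
      · funext o
        cases o <;> rfl
      · rw [Nat.cast_sub (by omega)]
        push_cast
        ring
  · rintro v hi
    choose! n₀ h using fun (y : ℕ) (hy : y < v k) => h3 (fun o => o.elim y v) (hi y hy)
    refine ⟨(Finset.range (v k)).sup n₀, fun m n hn hg hb y hy hlt => ?_⟩
    obtain ⟨i, hi', rfl⟩ := (hg.dom y).1 hy
    obtain ⟨z, hz, u, rfl, hu⟩ := hlt
    obtain ⟨j, hj, rfl⟩ := (hg.dom z).1 hz
    have hlt : i < v k := by
      have : ((i : ℤ) + 1 + j) * m = (v k) * m := by linarith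
      have := mul_right_cancel₀ hg.ne this
      omega
    convert h i hlt m n (le_trans (Finset.le_sup (f := n₀) (Finset.mem_range.2 hlt)) hn) hg ?_
      using 1
    · funext o
      cases o <;> rfl
    · rintro (_ | j)
      · exact hi'
      · exact hb j

lemma Sig.eq (i j : α) : Sig Q (fun v => v i = v j) := by
  refine ⟨fun v m N => v i = v j, fun β f a b => Dfn.eq _ _, ?_, ?_⟩
  · intro m n v hg hv h
    exact_mod_cast mul_right_cancel₀ hg.ne h
  · intro v h
    exact ⟨0, fun m n _ _ _ => by simp only [h]⟩

lemma Sig.one (i : α) : Sig Q (fun v => v i = 1) := by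
  refine ⟨fun v m N => v i = m, fun β f a b => Dfn.eq _ _, ?_, ?_⟩
  · intro m n v hg hv h
    have h : (v i : ℤ) * m = 1 * m := by simpa using h
    exact_mod_cast mul_right_cancel₀ hg.ne h
  · intro v h
    exact ⟨0, fun m n _ _ _ => by simp only [h]; simp⟩

lemma Sig.add (i j k : α) : Sig Q (fun v => v i + v j = v k) := by
  refine ⟨fun v m N => v i + v j = v k, fun β f a b => Dfn.add _ _ _, ?_, ?_⟩
  · intro m n v hg hv h
    have h : (v i + v j : ℤ) * m = v k * m := by
      beta_reduce at h
      rw [← h]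
      ring
    exact_mod_cast mul_right_cancel₀ hg.ne h
  · intro v h
    exact ⟨0, fun m n _ _ _ => by simp only [← h]; push_cast; ring⟩

lemma Sig.mul (hQ1 : ∀ x ∈ Q, ∃ k l m : ℤ, x = (m, k * m, l * m, k * l * m))
    (i j k : α) : Sig Q (fun v => v i * v j = v k) := by
  refine ⟨fun v m N => (m, v i, v j, v k) ∈ Q, fun β f a b => Dfn.q _ _ _ _, ?_, ?_⟩
  · intro m n v hg hv h
    have h := q_sound hQ1 hg.ne h
    exact_mod_cast (mul_right_cancel₀ hg.ne h).symm
  · intro v h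
    refine ⟨0, fun m n _ hg hv => ?_⟩
    simp only [← h]
    push_cast
    exact hg.mul _ _ (hv i) (hv j)

end

/-! ### Partial recursive functions -/

/-- A function of several variables whose graph is expressible. -/
def SigF (Q : Set (ℤ × ℤ × ℤ × ℤ)) {α : Type} (f : (α → ℕ) → ℕ) : Prop :=
  Sig Q (fun w : Option α → ℕ => f (fun i => w (some i)) = w none)

section
variable {Q : Set (ℤ × ℤ × ℤ × ℤ)} {α β : Type}

lemma Sig.subst1 {G : ℕ → Prop} (hG : Sig Q (fun v : Unit → ℕ => G (v ())))
    {f : (α → ℕ) → ℕ} (hf : SigF Q f) : Sig Q (fun v => G (f v)) := by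
  have : Sig Q (fun v : α → ℕ => ∃ y, f v = y ∧ G y) := by
    apply Sig.ex
    exact hf.and (hG.comp (fun _ => none))
  exact this.congr fun v => by simp

lemma Sig.subst2 {G : ℕ → ℕ → Prop} (hG : Sig Q (fun v : Fin 2 → ℕ => G (v 0) (v 1)))
    {f g : (α → ℕ) → ℕ} (hf : SigF Q f) (hg : SigF Q g) : Sig Q (fun v => G (f v) (g v)) := by
  have : Sig Q (fun v : α → ℕ => ∃ y, f v = y ∧ ∃ z, g v = z ∧ G y z) := by
    apply Sig.ex
    refine hf.and ?_
    apply Sig.ex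
    refine Sig.and ?_ (hG.comp ![some none, none])
    have := hg.comp (fun o : Option α => o.elim none (fun i => some (some i)))
    exact this
  exact this.congr fun v => by simp

lemma Sig.subst3 {G : ℕ → ℕ → ℕ → Prop}
    (hG : Sig Q (fun v : Fin 3 → ℕ => G (v 0) (v 1) (v 2)))
    {f g h : (α → ℕ) → ℕ} (hf : SigF Q f) (hg : SigF Q g) (hh : SigF Q h) :
    Sig Q (fun v => G (f v) (g v) (h v)) := by
  have : Sig Q (fun v : α → ℕ => ∃ y, f v = y ∧ ∃ z, g v = z ∧ ∃ u, h v = u ∧ G y z u) := by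
    apply Sig.ex
    refine hf.and ?_
    apply Sig.ex
    refine Sig.and ?_ ?_
    · exact hg.comp (fun o : Option α => o.elim none (fun i => some (some i)))
    · apply Sig.ex
      refine Sig.and ?_ (hG.comp ![some (some none), some none, none])
      exact hh.comp (fun o : Option α => o.elim none (fun i => some (some (some i))))
  exact this.congr fun v => by simp

lemma SigF.var (i : α) : SigF Q (fun v => v i) := Sig.eq _ _

lemma SigF.one : SigF Q (fun _ : α → ℕ => 1) :=
  (Sig.one (Q := Q) (none : Option α)).congr fun v => by simp [eq_comm]

lemma SigF.zero : SigF Q (fun _ : α → ℕ => 0) :=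
  (Sig.add (Q := Q) (none : Option α) none none).congr fun v => by simp [eq_comm]

lemma SigF.weak {f : (α → ℕ) → ℕ} (hf : SigF Q f) :
    SigF Q (fun w : Option α → ℕ => f (fun i => w (some i))) :=
  Sig.comp hf (fun o : Option α => o.elim none (fun i => some (some i)))

lemma SigF.add {f g : (α → ℕ) → ℕ} (hf : SigF Q f) (hg : SigF Q g) :
    SigF Q (fun v => f v + g v) :=
  Sig.subst3 (G := fun a b c => a + b = c) (Sig.add _ _ _) hf.weak hg.weak (SigF.var none)

lemma Sig.eq' {f g : (α → ℕ) → ℕ} (hf : SigF Q f) (hg : SigF Q g) :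
    Sig Q (fun v => f v = g v) :=
  Sig.subst2 (G := fun a b => a = b) (Sig.eq _ _) hf hg

lemma Sig.le {f g : (α → ℕ) → ℕ} (hf : SigF Q f) (hg : SigF Q g) :
    Sig Q (fun v => f v ≤ g v) := by
  refine Sig.subst2 (G := fun a b => a ≤ b) ?_ hf hg
  have : Sig Q (fun v : Fin 2 → ℕ => ∃ y, v 0 + y = v 1) := by
    apply Sig.ex
    exact Sig.add _ _ _
  exact this.congr fun v => (le_iff_exists_add.trans (by simp [eq_comm])).symm

lemma Sig.lt {f g : (α → ℕ) → ℕ} (hf : SigF Q f) (hg : SigF Q g) :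
    Sig Q (fun v => f v < g v) :=
  Sig.le (hf.add SigF.one) hg

variable (hQ1 : ∀ x ∈ Q, ∃ k l m : ℤ, x = (m, k * m, l * m, k * l * m))
include hQ1

lemma SigF.mul {f g : (α → ℕ) → ℕ} (hf : SigF Q f) (hg : SigF Q g) :
    SigF Q (fun v => f v * g v) :=
  Sig.subst3 (G := fun a b c => a * b = c) (Sig.mul hQ1 _ _ _) hf.weak hg.weak (SigF.var none)

lemma SigF.pair {f g : (α → ℕ) → ℕ} (hf : SigF Q f) (hg : SigF Q g) :
    SigF Q (fun v => Nat.pair (f v) (g v)) := by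
  refine Sig.subst3 (G := fun a b c => Nat.pair a b = c) ?_ hf.weak hg.weak (SigF.var none)
  have h0 : SigF Q (fun v : Fin 3 → ℕ => v 0) := SigF.var 0
  have h1 : SigF Q (fun v : Fin 3 → ℕ => v 1) := SigF.var 1
  have h2 : SigF Q (fun v : Fin 3 → ℕ => v 2) := SigF.var 2
  have := ((Sig.lt h0 h1).and (Sig.eq' ((SigF.mul hQ1 h1 h1).add h0) h2)).or
    ((Sig.le h1 h0).and (Sig.eq' (((SigF.mul hQ1 h0 h0).add h0).add h1) h2))
  refine this.congr fun v => ?_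
  unfold Nat.pair
  split_ifs with h
  · simp [h]
  · simp [h, not_lt.1 h]

lemma sig_beta {f g h k : (α → ℕ) → ℕ} (hf : SigF Q f) (hg : SigF Q g) (hh : SigF Q h)
    (hk : SigF Q k) : Sig Q (fun v => f v % ((h v + 1) * g v + 1) = k v) := by
  have : Sig Q (fun v => ∃ q, q * ((h v + 1) * g v + 1) + k v = f v ∧
      k v < (h v + 1) * g v + 1) := by
    apply Sig.ex
    have hd := (SigF.mul hQ1 (hh.weak.add SigF.one) hg.weak).add SigF.one
    exact (Sig.eq' ((SigF.mul hQ1 (SigF.var none) hd).add hk.weak) hf.weak).and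
      (Sig.lt hk.weak hd)
  refine this.congr fun v => ?_
  constructor
  · rintro ⟨q, h1, h2⟩
    rw [← h1, Nat.mul_add_mod_self_right, Nat.mod_eq_of_lt h2]
  · intro e
    refine ⟨f v / ((h v + 1) * g v + 1), ?_, ?_⟩
    · rw [← e]
      exact Nat.div_add_mod' _ _
    · rw [← e]
      exact Nat.mod_lt _ (by omega)

lemma sig_prec {f g : ℕ → Part ℕ}
    (hf : Sig Q (fun v : Fin 2 → ℕ => v 1 ∈ f (v 0)))
    (hg : Sig Q (fun v : Fin 2 → ℕ => v 1 ∈ g (v 0))) :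
    Sig Q (fun v : Fin 2 → ℕ => v 1 ∈ Nat.unpaired (fun a n =>
      Nat.rec (motive := fun _ => Part ℕ) (f a)
        (fun y IH => IH.bind fun i => g (Nat.pair a (Nat.pair y i))) n) (v 0)) := by
  have : Sig Q (fun v : Fin 2 → ℕ => ∃ a, ∃ k, Nat.pair a k = v 0 ∧ ∃ s, ∃ t,
      (∃ z, s % ((0 + 1) * t + 1) = z ∧ z ∈ f a) ∧
      s % ((k + 1) * t + 1) = v 1 ∧
      ∀ i, i < k → ∃ x, ∃ y, s % ((i + 1) * t + 1) = x ∧ s % ((i + 1 + 1) * t + 1) = y ∧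
        y ∈ g (Nat.pair a (Nat.pair i x))) := by
    apply Sig.ex
    apply Sig.ex
    refine (Sig.eq' (SigF.pair hQ1 (SigF.var _) (SigF.var _)) (SigF.var _)).and ?_
    apply Sig.ex
    apply Sig.ex
    refine Sig.and ?_ (Sig.and ?_ ?_)
    · apply Sig.ex
      exact (sig_beta hQ1 (SigF.var _) (SigF.var _) SigF.zero (SigF.var _)).and
        (Sig.subst2 (G := fun a z => z ∈ f a) hf (SigF.var _) (SigF.var _))
    · exact sig_beta hQ1 (SigF.var _) (SigF.var _) (SigF.var _) (SigF.var _)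
    · apply Sig.ball
      apply Sig.ex
      apply Sig.ex
      refine (sig_beta hQ1 (SigF.var _) (SigF.var _) (SigF.var _) (SigF.var _)).and ?_
      refine (sig_beta hQ1 (SigF.var _) (SigF.var _) ((SigF.var _).add SigF.one)
        (SigF.var _)).and ?_
      exact Sig.subst2 (G := fun a z => z ∈ g a) hg
        (SigF.pair hQ1 (SigF.var _) (SigF.pair hQ1 (SigF.var _) (SigF.var _))) (SigF.var _)
  refine this.congr fun v => ?_
  generalize v 0 = p
  generalize v 1 = r
  constructor
  · rintro ⟨a, k, rfl, s, t, ⟨z, hz, hfz⟩, hr, hstep⟩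
    simp only [Nat.unpaired, Nat.unpair_pair]
    have key : ∀ i, i ≤ k → s % ((i + 1) * t + 1) ∈ Nat.rec (motive := fun _ => Part ℕ) (f a)
        (fun y IH => IH.bind fun i => g (Nat.pair a (Nat.pair y i))) i := by
      intro i
      induction i with
      | zero => intro _; rw [hz]; exact hfz
      | succ i ih =>
        intro hi
        obtain ⟨x, y, hx, hy, hxy⟩ := hstep i (by omega)
        rw [hy]
        refine Part.mem_bind_iff.2 ⟨x, ?_, hxy⟩
        rw [← hx]
        exact ih (by omega)
    rw [← hr]
    exact key k le_rfl
  · intro h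
    obtain ⟨a, k, rfl⟩ : ∃ a k, Nat.pair a k = p := ⟨_, _, Nat.pair_unpair p⟩
    simp only [Nat.unpaired, Nat.unpair_pair] at h
    have key : ∀ k r, r ∈ Nat.rec (motive := fun _ => Part ℕ) (f a)
        (fun y IH => IH.bind fun i => g (Nat.pair a (Nat.pair y i))) k →
        ∃ σ : ℕ → ℕ, σ 0 ∈ f a ∧ σ k = r ∧
          ∀ i, i < k → σ (i + 1) ∈ g (Nat.pair a (Nat.pair i (σ i))) := by
      intro k
      induction k with
      | zero => exact fun r hr => ⟨fun _ => r, hr, rfl, fun i hi => by omega⟩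
      | succ k ih =>
        intro r hr
        obtain ⟨x, hx, hxr⟩ := Part.mem_bind_iff.1 hr
        obtain ⟨σ, h0, hk, hs⟩ := ih x hx
        refine ⟨fun i => if i ≤ k then σ i else r, by simpa using h0, by simp, ?_⟩
        intro i hi
        rcases Nat.lt_succ_iff_lt_or_eq.1 hi with h | rfl
        · have h1 : i + 1 ≤ k := h
          have h2 : i ≤ k := by omega
          simp only [h1, h2, if_true]
          exact hs i h
        · simp only [le_refl, if_true]
          rw [if_neg (by omega), hk]
          exact hxr
    obtain ⟨σ, h0, hk, hs⟩ := key k r h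
    obtain ⟨s, t, hst⟩ : ∃ s t, ∀ i, i ≤ k → s % ((i + 1) * t + 1) = σ i := by
      let l := List.ofFn (fun i : Fin (k + 1) => σ i)
      refine ⟨(Nat.unbeta l).unpair.1, (Nat.unbeta l).unpair.2, fun i hi => ?_⟩
      have := Nat.beta_unbeta_coe l ⟨i, by simp [l]; omega⟩
      simpa [Nat.beta, l, -List.ofFn_succ] using this
    refine ⟨a, k, rfl, s, t, ⟨_, rfl, ?_⟩, ?_, ?_⟩
    · rw [hst 0 (by omega)]
      exact h0
    · rw [hst k le_rfl, hk]
    · intro i hi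
      refine ⟨_, _, rfl, rfl, ?_⟩
      rw [hst i (by omega), hst (i + 1) (by omega)]
      exact hs i hi

lemma sig_rfind {f : ℕ → Part ℕ}
    (hf : Sig Q (fun v : Fin 2 → ℕ => v 1 ∈ f (v 0))) :
    Sig Q (fun v : Fin 2 → ℕ => v 1 ∈
      Nat.rfind fun n => (f (Nat.pair (v 0) n)).map (fun m => (decide (m = 0) : Bool))) := by
  have : Sig Q (fun v : Fin 2 → ℕ => (∃ z, z = 0 ∧ z ∈ f (Nat.pair (v 0) (v 1))) ∧
      ∀ i, i < v 1 → ∃ z, 0 < z ∧ z ∈ f (Nat.pair (v 0) i)) := by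
    refine Sig.and ?_ ?_
    · apply Sig.ex
      exact (Sig.eq' (SigF.var _) SigF.zero).and (Sig.subst2 (G := fun a z => z ∈ f a) hf
        (SigF.pair hQ1 (SigF.var _) (SigF.var _)) (SigF.var _))
    · apply Sig.ball
      apply Sig.ex
      exact (Sig.lt SigF.zero (SigF.var _)).and (Sig.subst2 (G := fun a z => z ∈ f a) hf
        (SigF.pair hQ1 (SigF.var _) (SigF.var _)) (SigF.var _))
  refine this.congr fun v => ?_
  refine Iff.trans ?_ Nat.mem_rfind.symm
  simp [Nat.pos_iff_ne_zero, and_comm]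

lemma sig_partrec {f : ℕ →. ℕ} (hf : Nat.Partrec f) :
    Sig Q (fun v : Fin 2 → ℕ => v 1 ∈ f (v 0)) := by
  induction hf with
  | zero =>
    exact (Sig.eq' (Q := Q) (SigF.var (1 : Fin 2)) SigF.zero).congr fun v => Part.mem_some_iff.symm
  | succ =>
    exact (Sig.eq' (Q := Q) (SigF.var (1 : Fin 2)) ((SigF.var 0).add SigF.one)).congr
      fun v => Part.mem_some_iff.symm
  | left =>
    have : Sig Q (fun v : Fin 2 → ℕ => ∃ b, Nat.pair (v 1) b = v 0) := by
      apply Sig.ex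
      exact Sig.eq' (SigF.pair hQ1 (SigF.var _) (SigF.var _)) (SigF.var _)
    refine this.congr fun v => Iff.trans ?_ Part.mem_some_iff.symm
    constructor
    · rintro ⟨b, h⟩
      beta_reduce
      rw [← h, Nat.unpair_pair]
    · intro h
      exact ⟨(v 0).unpair.2, by rw [h, Nat.pair_unpair]⟩
  | right =>
    have : Sig Q (fun v : Fin 2 → ℕ => ∃ b, Nat.pair b (v 1) = v 0) := by
      apply Sig.ex
      exact Sig.eq' (SigF.pair hQ1 (SigF.var _) (SigF.var _)) (SigF.var _)
    refine this.congr fun v => Iff.trans ?_ Part.mem_some_iff.symm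
    constructor
    · rintro ⟨b, h⟩
      beta_reduce
      rw [← h, Nat.unpair_pair]
    · intro h
      exact ⟨(v 0).unpair.1, by rw [h, Nat.pair_unpair]⟩
  | @pair f g _ _ hf hg =>
    have : Sig Q (fun v : Fin 2 → ℕ => ∃ a, a ∈ f (v 0) ∧ ∃ b, b ∈ g (v 0) ∧
        Nat.pair a b = v 1) := by
      apply Sig.ex
      refine (Sig.subst2 (G := fun a z => z ∈ f a) hf (SigF.var _) (SigF.var _)).and ?_
      apply Sig.ex
      exact (Sig.subst2 (G := fun a z => z ∈ g a) hg (SigF.var _) (SigF.var _)).and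
        (Sig.eq' (SigF.pair hQ1 (SigF.var _) (SigF.var _)) (SigF.var _))
    refine this.congr fun v => ?_
    simp [Seq.seq]
  | @comp f g _ _ hf hg =>
    have : Sig Q (fun v : Fin 2 → ℕ => ∃ a, a ∈ g (v 0) ∧ v 1 ∈ f a) := by
      apply Sig.ex
      exact (Sig.subst2 (G := fun a z => z ∈ g a) hg (SigF.var _) (SigF.var _)).and
        (Sig.subst2 (G := fun a z => z ∈ f a) hf (SigF.var _) (SigF.var _))
    exact this.congr fun v => Part.mem_bind_iff.symm
  | prec _ _ hf hg => exact sig_prec hQ1 hf hg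
  | rfind _ hf => exact sig_rfind hQ1 hf

end

theorem undecidable (Q : Set (ℤ × ℤ × ℤ × ℤ))
    (hQ1 : ∀ x ∈ Q, ∃ k l m : ℤ, x = (m, k * m, l * m, k * l * m))
    (hQ2 : ∀ F : Finset (ℤ × ℤ), ∃ m : ℤ, m ≠ 0 ∧
      ∀ p ∈ F, (m, p.1 * m, p.2 * m, p.1 * p.2 * m) ∈ Q) :
    ¬ ComputablePred (fun c => c ∈ theoryCodes Q) := by
  intro hc
  let f : ℕ →. ℕ := fun k => Nat.Partrec.Code.eval (Denumerable.ofNat Nat.Partrec.Code k) 0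
  have hf : Nat.Partrec f := Partrec.nat_iff.1
    (Nat.Partrec.Code.eval_part.comp (Computable.ofNat _) (Computable.const 0))
  have hs : Sig Q (fun v : Unit → ℕ => ∃ k, k + 1 = v () ∧ ∃ y, y ∈ f k) := by
    apply Sig.ex
    refine (Sig.eq' ((SigF.var _).add SigF.one) (SigF.var _)).and ?_
    apply Sig.ex
    exact Sig.subst2 (G := fun a z => z ∈ f a) (sig_partrec hQ1 hf) (SigF.var _) (SigF.var _)
  obtain ⟨E, h1, h2, h3⟩ := hs
  have hd : Dfn Q (fun v : Fin 2 → ℤ => (fun x m =>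
      ¬ ∃ N, GoodF Q m N ∧ Dom Q m N x ∧ E (fun _ => x) m N) (v 0) (v 1)) := by
    refine Dfn.not ?_
    apply Dfn.ex
    exact (dfn_GoodF _ _).and ((dfn_Dom _ _ _).and (h1 _ (fun _ => some 0) _ _))
  have hr := (reduce Q (P := fun x m =>
    ¬ ∃ N, GoodF Q m N ∧ Dom Q m N x ∧ E (fun _ => x) m N) hd hc).not
  have hk : ComputablePred (fun k => (f k).Dom) := by
    refine hr.of_eq fun k => ?_
    constructor
    · intro h
      push Not at h
      obtain ⟨m, N, hgF, hdom, hE⟩ := h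
      obtain ⟨n, rfl, hg⟩ := good_of_goodF hQ1 hgF
      obtain ⟨i, hi, he⟩ := (hg.dom _).1 hdom
      have he := mul_right_cancel₀ hg.ne he
      have he : k + 1 = i := by exact_mod_cast he
      subst he
      obtain ⟨k', hk', y, hy⟩ := h2 m n (fun _ => k + 1) hg (fun _ => hi) hE
      have : k' = k := Nat.succ.inj hk'
      subst this
      exact Part.dom_iff_mem.2 ⟨y, hy⟩
    · intro h
      obtain ⟨n₀, hn⟩ := h3 (fun _ => k + 1) ⟨k, rfl, Part.dom_iff_mem.1 h⟩
      obtain ⟨m, hgF, hg⟩ := exists_goodF hQ1 hQ2 (max n₀ (k + 1))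
      push Not
      exact ⟨m, _, hgF, (hg.dom _).2 ⟨k + 1, le_max_right _ _, rfl⟩,
        hn m _ (le_max_left _ _) hg (fun _ => le_max_right _ _)⟩
  refine ComputablePred.halting_problem 0 ?_
  obtain ⟨b, hb, hbe⟩ := ComputablePred.computable_iff.1 hk
  refine ComputablePred.computable_iff.2 ⟨fun c => b (Encodable.encode c),
    hb.comp Computable.encode, ?_⟩
  funext c
  rw [← congrFun hbe (Encodable.encode c)]
  simp [f]

end Stmt3
end

section
/- Fix an integer k ≥ 2 and let g : ℤ → ℤ be given by g(n) = n² if n = k^(k^m) for some integer m ≥ 0, and g(n) = 0 otherwise. Then the first-order theory of the structure (ℤ; <, +, g) is decidable; that is, the set of sentences of the first-order language with one binary relation symbol <, one binary function symbol +, and one unary function symbol g that are true in ℤ (with the standard order and addition, and g interpreted as above) is a computable set of sentences (under an effective encoding of sentences). -/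
/-!
STATEMENT 4: Fix an integer k ≥ 2 and let g : ℤ → ℤ be given by g(n) = n² if
n = k^(k^m) for some integer m ≥ 0, and g(n) = 0 otherwise. Then the first-order
theory of (ℤ; <, +, g) is decidable.
-/

open FirstOrder Language

namespace Stmt4

/-- The language with one binary relation `<`, one binary function `+`,
and one unary function `g`. -/
def L : Language :=
  ⟨fun n => match n with | 1 => Unit | 2 => Unit | _ => Empty,
   fun n => match n with | 2 => Unit | _ => Empty⟩

instance instEncF : (n : ℕ) → Encodable (L.Functions n)
  | 0 => inferInstanceAs (Encodable Empty)
  | 1 => inferInstanceAs (Encodable Unit)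
  | 2 => inferInstanceAs (Encodable Unit)
  | (_ + 3) => inferInstanceAs (Encodable Empty)

instance instEncR : (n : ℕ) → Encodable (L.Relations n)
  | 0 => inferInstanceAs (Encodable Empty)
  | 1 => inferInstanceAs (Encodable Empty)
  | 2 => inferInstanceAs (Encodable Unit)
  | (_ + 3) => inferInstanceAs (Encodable Empty)

/-- Partial inverse to `BoundedFormula.listEncode` on sentences. -/
def decodeSentence
    (l : List ((Σ k, L.Term (Empty ⊕ Fin k)) ⊕ ((Σ n, L.Relations n) ⊕ ℕ))) :
    Option L.Sentence :=
  (BoundedFormula.listDecode l)[0]?.bind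
    (fun x => if h : x.1 = 0 then
      some (cast (congrArg (L.BoundedFormula Empty) h) x.2) else none)

/-- An effective encoding of sentences (via their encodings as lists of symbols). -/
instance instEncSentence : Encodable L.Sentence :=
  Encodable.ofLeftInjection
    (fun φ => BoundedFormula.listEncode φ)
    decodeSentence
    (fun φ => by
      have h := BoundedFormula.listDecode_encode_list (L := L) (α := Empty) [⟨0, φ⟩]
      rw [List.flatMap_singleton] at h
      have h' : BoundedFormula.listDecode (BoundedFormula.listEncode φ) =
          [⟨0, φ⟩] := h
      simp [decodeSentence, h'])

/-- The structure on ℤ interpreting `<`, `+` and `g`. -/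
def S (g : ℤ → ℤ) : L.Structure ℤ where
  funMap {n} f x :=
    match n, f with
    | 1, _ => g (x 0)
    | 2, _ => x 0 + x 1
  RelMap {n} r x :=
    match n, r with
    | 2, _ => x 0 < x 1

/-- The first-order theory of (ℤ; <, +, g), as a set of codes of sentences. -/
def theoryCodes (g : ℤ → ℤ) : Set ℕ :=
  {c | ∃ φ : L.Sentence, Encodable.encode φ = c ∧ @Sentence.Realize L ℤ (S g) φ}

/-! ### Finite types of tuples, and their composition -/

/-- Atomic facts about a tuple of integers indexed by `Fin R`. -/
abbrev Atom (R : ℕ) : Type :=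
  (Fin R × Fin R × Fin R × Bool × Bool) ⊕ (Fin 4 × Fin R)

/-- The `n`-types. -/
def Ty (R : ℕ) : ℕ → Type
  | 0 => Set (Atom R)
  | n + 1 => Fin R → Set (Ty R n)

instance Ty.finite (R : ℕ) : ∀ n, Finite (Ty R n)
  | 0 => inferInstanceAs (Finite (Set (Atom R)))
  | n + 1 =>
    have := Ty.finite R n
    inferInstanceAs (Finite (Fin R → Set (Ty R n)))

/-- A bound for the number of `n`-types. -/
def cardBound (R : ℕ) : ℕ → ℕ
  | 0 => 2 ^ (R * R * R * 4 + 4 * R)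
  | n + 1 => 2 ^ (R * cardBound R n)

lemma card_set_le {α : Type} [Finite α] : Nat.card (Set α) = 2 ^ Nat.card α := by
  have := Fintype.ofFinite α
  classical
  simp [Nat.card_eq_fintype_card, Fintype.card_set]

lemma card_Ty (R n : ℕ) : Nat.card (Ty R n) = cardBound R n := by
  induction n with
  | zero =>
    change Nat.card (Set (Atom R)) = _
    rw [card_set_le]
    simp [cardBound, Nat.card_eq_fintype_card]
    ring
  | succ n ih =>
    change Nat.card (Fin R → Set (Ty R n)) = _
    rw [Nat.card_fun, card_set_le, ih, cardBound]
    simp [← pow_mul]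
    ring

lemma cardBound_zero_le (R n : ℕ) (hR : 1 ≤ R) : cardBound R n ≤ cardBound R (n + 1) := by
  rw [cardBound]
  exact le_trans (Nat.le_mul_of_pos_left _ hR) Nat.lt_two_pow_self.le

lemma cardBound_mono (R : ℕ) (hR : 1 ≤ R) : Monotone (cardBound R) :=
  monotone_nat_of_le_succ fun n => cardBound_zero_le R n hR

/-- A piece of a `k`-adic expansion. -/
structure Piece where
  dom : ℤ → Prop
  add : ℤ → ℤ → ℤ → Bool → Bool → Prop
  neg : ℤ → Prop
  u : ℤ → Prop
  v : ℤ → Prop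

/-- Truth of an atom. -/
def Piece.sat (P : Piece) {R : ℕ} (p : ℕ → ℤ) : Atom R → Prop
  | .inl (i, j, l, ε, δ) => P.add (p i) (p j) (p l) ε δ
  | .inr (0, i) => p i = 0
  | .inr (1, i) => P.neg (p i)
  | .inr (2, i) => P.u (p i)
  | .inr (3, i) => P.v (p i)

open Function in
/-- The `n`-type of a tuple in a piece. -/
def tau (R : ℕ) (P : Piece) : (n : ℕ) → (ℕ → ℤ) → Ty R n
  | 0, p => {a | P.sat p a}
  | n + 1, p => fun j => {x | ∃ d, P.dom d ∧ tau R P n (update p j d) = x}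

/-- `M` is the concatenation of `P` and `Q`. -/
structure IsComp (P Q M : Piece) (f : ℤ → ℤ → ℤ) : Prop where
  dom : ∀ x y, P.dom x → Q.dom y → M.dom (f x y)
  surj : ∀ z, M.dom z → ∃ x y, P.dom x ∧ Q.dom y ∧ f x y = z
  add : ∀ x y z x' y' z' ε ε', P.dom x → P.dom y → P.dom z → Q.dom x' → Q.dom y' → Q.dom z' →
    (M.add (f x x') (f y y') (f z z') ε ε' ↔ ∃ δ, P.add x y z ε δ ∧ Q.add x' y' z' δ ε')
  zero : ∀ x y, P.dom x → Q.dom y → (f x y = 0 ↔ x = 0 ∧ y = 0)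
  neg : ∀ x y, P.dom x → Q.dom y → (M.neg (f x y) ↔ Q.neg y)
  u : ∀ x y, P.dom x → Q.dom y → (M.u (f x y) ↔ (P.u x ∧ y = 0) ∨ (x = 0 ∧ Q.u y))
  v : ∀ x y, P.dom x → Q.dom y → (M.v (f x y) ↔ (P.v x ∧ y = 0) ∨ (x = 0 ∧ Q.v y))

lemma dom_update {P : Piece} {p : ℕ → ℤ} (hp : ∀ i, P.dom (p i)) (j : ℕ) {d : ℤ}
    (hd : P.dom d) : ∀ i, P.dom (Function.update p j d i) := by
  intro i
  by_cases h : i = j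
  · subst h; simpa using hd
  · simpa [h] using hp i

lemma comb_update (f : ℤ → ℤ → ℤ) (p q : ℕ → ℤ) (j : ℕ) (x y : ℤ) :
    (fun i => f (Function.update p j x i) (Function.update q j y i)) =
      Function.update (fun i => f (p i) (q i)) j (f x y) := by
  funext i
  by_cases h : i = j
  · subst h; simp
  · simp [h]

lemma sat_comp {P Q M P' Q' M' : Piece} {f f' : ℤ → ℤ → ℤ} (h : IsComp P Q M f)
    (h' : IsComp P' Q' M' f') {R : ℕ} {p q p' q' : ℕ → ℤ} (hp : ∀ i, P.dom (p i))
    (hq : ∀ i, Q.dom (q i)) (hp' : ∀ i, P'.dom (p' i)) (hq' : ∀ i, Q'.dom (q' i))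
    (e1 : ∀ a : Atom R, P.sat p a ↔ P'.sat p' a) (e2 : ∀ a : Atom R, Q.sat q a ↔ Q'.sat q' a)
    (a : Atom R) :
    M.sat (fun i => f (p i) (q i)) a ↔ M'.sat (fun i => f' (p' i) (q' i)) a := by
  rcases a with ⟨i, j, l, ε, δ⟩ | ⟨t, i⟩
  · simp only [Piece.sat]
    rw [h.add _ _ _ _ _ _ _ _ (hp _) (hp _) (hp _) (hq _) (hq _) (hq _),
      h'.add _ _ _ _ _ _ _ _ (hp' _) (hp' _) (hp' _) (hq' _) (hq' _) (hq' _)]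
    refine exists_congr fun δ' => and_congr ?_ ?_
    · exact e1 (.inl (i, j, l, ε, δ'))
    · exact e2 (.inl (i, j, l, δ', δ))
  · have a0 := e1 (.inr (0, i))
    have a1 := e1 (.inr (1, i))
    have a2 := e1 (.inr (2, i))
    have a3 := e1 (.inr (3, i))
    have b0 := e2 (.inr (0, i))
    have b1 := e2 (.inr (1, i))
    have b2 := e2 (.inr (2, i))
    have b3 := e2 (.inr (3, i))
    simp only [Piece.sat] at a0 a1 a2 a3 b0 b1 b2 b3
    fin_cases t
    · simp only [Piece.sat]
      rw [h.zero _ _ (hp _) (hq _), h'.zero _ _ (hp' _) (hq' _), a0, b0]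
    · simp only [Piece.sat]
      rw [h.neg _ _ (hp _) (hq _), h'.neg _ _ (hp' _) (hq' _), b1]
    · simp only [Piece.sat]
      rw [h.u _ _ (hp _) (hq _), h'.u _ _ (hp' _) (hq' _), a0, b0, a2, b2]
    · simp only [Piece.sat]
      rw [h.v _ _ (hp _) (hq _), h'.v _ _ (hp' _) (hq' _), a0, b0, a3, b3]

lemma tau_zero_iff {R : ℕ} {P Q : Piece} {p q : ℕ → ℤ} :
    tau R P 0 p = tau R Q 0 q ↔ ∀ a : Atom R, P.sat p a ↔ Q.sat q a := by
  change ({a | P.sat p a} : Set (Atom R)) = {a | Q.sat q a} ↔ _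
  rw [Set.ext_iff]; rfl

lemma tau_succ_iff {R n : ℕ} {P Q : Piece} {p q : ℕ → ℤ} :
    tau R P (n + 1) p = tau R Q (n + 1) q ↔ ∀ j < R,
      (∀ d, P.dom d → ∃ e, Q.dom e ∧
        tau R P n (Function.update p j d) = tau R Q n (Function.update q j e)) ∧
      (∀ e, Q.dom e → ∃ d, P.dom d ∧
        tau R P n (Function.update p j d) = tau R Q n (Function.update q j e)) := by
  constructor
  · intro h j hj
    have h1 := congrFun h ⟨j, hj⟩
    have h2 := Set.ext_iff.1 h1
    constructor
    · intro d hd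
      obtain ⟨e, he, h3⟩ := (h2 _).1 ⟨d, hd, rfl⟩
      exact ⟨e, he, h3.symm⟩
    · intro e he
      obtain ⟨d, hd, h3⟩ := (h2 _).2 ⟨e, he, rfl⟩
      exact ⟨d, hd, h3⟩
  · intro h
    funext j
    obtain ⟨h1, h2⟩ := h j j.2
    refine Set.ext fun x => ⟨?_, ?_⟩
    · rintro ⟨d, hd, rfl⟩
      obtain ⟨e, he, h3⟩ := h1 d hd
      exact ⟨e, he, h3.symm⟩
    · rintro ⟨d, hd, rfl⟩
      obtain ⟨e, he, h3⟩ := h2 d hd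
      exact ⟨e, he, h3⟩

lemma tau_comp {P Q M P' Q' M' : Piece} {f f' : ℤ → ℤ → ℤ} (h : IsComp P Q M f)
    (h' : IsComp P' Q' M' f') (R n : ℕ) : ∀ {p q p' q' : ℕ → ℤ}, (∀ i, P.dom (p i)) →
    (∀ i, Q.dom (q i)) → (∀ i, P'.dom (p' i)) → (∀ i, Q'.dom (q' i)) →
    tau R P n p = tau R P' n p' → tau R Q n q = tau R Q' n q' →
    tau R M n (fun i => f (p i) (q i)) = tau R M' n (fun i => f' (p' i) (q' i)) := by
  induction n with
  | zero =>
    intro p q p' q' hp hq hp' hq' e1 e2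
    rw [tau_zero_iff] at *
    exact sat_comp h h' hp hq hp' hq' e1 e2
  | succ n ih =>
    intro p q p' q' hp hq hp' hq' e1 e2
    rw [tau_succ_iff] at *
    intro j hj
    constructor
    · intro d hd
      obtain ⟨x, y, hx, hy, rfl⟩ := h.surj d hd
      obtain ⟨x', hx', ex⟩ := (e1 j hj).1 x hx
      obtain ⟨y', hy', ey⟩ := (e2 j hj).1 y hy
      refine ⟨f' x' y', h'.dom _ _ hx' hy', ?_⟩
      rw [← comb_update, ← comb_update]
      exact ih (dom_update hp j hx) (dom_update hq j hy) (dom_update hp' j hx')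
        (dom_update hq' j hy') ex ey
    · intro d hd
      obtain ⟨x', y', hx', hy', rfl⟩ := h'.surj d hd
      obtain ⟨x, hx, ex⟩ := (e1 j hj).2 x' hx'
      obtain ⟨y, hy, ey⟩ := (e2 j hj).2 y' hy'
      refine ⟨f x y, h.dom _ _ hx hy, ?_⟩
      rw [← comb_update, ← comb_update]
      exact ih (dom_update hp j hx) (dom_update hq j hy) (dom_update hp' j hx')
        (dom_update hq' j hy') ex ey

/-! ### Segments and tails -/

/-- The segment of length `s` with marks `A`, `B`. -/
def Seg (k s : ℕ) (A B : ℕ → Prop) : Piece where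
  dom x := 0 ≤ x ∧ x < (k : ℤ) ^ s
  add x y z ε δ := x + y + (if ε then 1 else 0) = z + (if δ then (k : ℤ) ^ s else 0)
  neg _ := False
  u x := ∃ e, A e ∧ x = (k : ℤ) ^ e
  v x := ∃ e, B e ∧ x = (k : ℤ) ^ e

/-- The infinite tail with marks `A`, `B`. -/
def Tail (k : ℕ) (A B : ℕ → Prop) : Piece where
  dom _ := True
  add x y z ε δ := δ = false ∧ x + y + (if ε then 1 else 0) = z
  neg x := x < 0
  u x := ∃ e, A e ∧ x = (k : ℤ) ^ e
  v x := ∃ e, B e ∧ x = (k : ℤ) ^ e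

lemma pow_split {k s : ℕ} (hk : 2 ≤ k) (A : ℕ → Prop) (x y : ℤ) (hx : 0 ≤ x ∧ x < (k : ℤ) ^ s) :
    (∃ e, A e ∧ x + (k : ℤ) ^ s * y = (k : ℤ) ^ e) ↔
      ((∃ e, A e ∧ x = (k : ℤ) ^ e) ∧ y = 0) ∨ (x = 0 ∧ ∃ e, A (s + e) ∧ y = (k : ℤ) ^ e) := by
  have hk0 : (0 : ℤ) < k := by exact_mod_cast (by omega : 0 < k)
  have hs : (0 : ℤ) < (k : ℤ) ^ s := by positivity
  constructor
  · rintro ⟨e, hA, he⟩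
    by_cases hes : e < s
    · left
      have h1 : (k : ℤ) ^ e < (k : ℤ) ^ s := by
        apply pow_lt_pow_right₀ _ hes
        exact_mod_cast (by omega : 1 < k)
      have hy : y = 0 := by
        have h2 : (0 : ℤ) < (k : ℤ) ^ e := by positivity
        have : y < 1 := by nlinarith
        have : -1 < y := by nlinarith
        omega
      subst hy
      exact ⟨⟨e, hA, by simpa using he⟩, rfl⟩
    · right
      obtain ⟨t, rfl⟩ := Nat.exists_eq_add_of_le (not_lt.1 hes)
      rw [pow_add] at he
      have h1 : x = (k : ℤ) ^ s * ((k : ℤ) ^ t - y) := by linarith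
      have h2 : (k : ℤ) ^ t - y = 0 := by
        have : (k : ℤ) ^ t - y < 1 := by nlinarith
        have : -1 < (k : ℤ) ^ t - y := by nlinarith
        omega
      rw [h2] at h1
      exact ⟨by simpa using h1, t, hA, by omega⟩
  · rintro (⟨⟨e, hA, rfl⟩, rfl⟩ | ⟨rfl, e, hA, rfl⟩)
    · exact ⟨e, hA, by simp⟩
    · exact ⟨s + e, hA, by rw [pow_add]; ring⟩

lemma add_split {K : ℤ} (hK : 0 < K) {x y z x' y' z' w : ℤ} (ε : Bool) (hx : 0 ≤ x ∧ x < K)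
    (hy : 0 ≤ y ∧ y < K) (hz : 0 ≤ z ∧ z < K) :
    ((x + K * x') + (y + K * y') + (if ε then 1 else 0) = (z + K * z') + K * w) ↔
      ∃ δ : Bool, x + y + (if ε then 1 else 0) = z + (if δ then K else 0) ∧
        x' + y' + (if δ then 1 else 0) = z' + w := by
  set c : ℤ := if ε then 1 else 0 with hc
  have hc' : 0 ≤ c ∧ c ≤ 1 := by rw [hc]; split <;> simp
  constructor
  · intro h
    have h1 : x + y + c - z = K * (z' + w - x' - y') := by linarith
    have h2 : -1 < z' + w - x' - y' := by nlinarith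
    have h3 : z' + w - x' - y' < 2 := by nlinarith
    have h4 : z' + w - x' - y' = 0 ∨ z' + w - x' - y' = 1 := by omega
    rcases h4 with h4 | h4
    · refine ⟨false, ?_, ?_⟩
      · rw [h4] at h1; simp; linarith
      · simp; linarith
    · refine ⟨true, ?_, ?_⟩
      · rw [h4] at h1; simp; linarith
      · simp; linarith
  · rintro ⟨δ, h1, h2⟩
    cases δ
    · simp at h1 h2
      have : K * (x' + y') = K * (z' + w) := by rw [h2]
      linarith
    · simp at h1 h2
      have : K * (x' + y' + 1) = K * (z' + w) := by rw [h2]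
      linarith

lemma zero_split {K : ℤ} (hK : 0 < K) {x y : ℤ} (hx : 0 ≤ x ∧ x < K) :
    x + K * y = 0 ↔ x = 0 ∧ y = 0 := by
  constructor
  · intro h
    have : y < 1 := by nlinarith
    have : -1 < y := by nlinarith
    have : y = 0 := by omega
    subst this
    simpa using h
  · rintro ⟨rfl, rfl⟩; simp

lemma segSeg {k : ℕ} (hk : 2 ≤ k) (s t : ℕ) (A B : ℕ → Prop) :
    IsComp (Seg k s A B) (Seg k t (fun e => A (s + e)) (fun e => B (s + e))) (Seg k (s + t) A B)
      (fun x y => x + (k : ℤ) ^ s * y) := by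
  have hk0 : (0 : ℤ) < k := by exact_mod_cast (by omega : 0 < k)
  have hs : (0 : ℤ) < (k : ℤ) ^ s := by positivity
  have ht : (0 : ℤ) < (k : ℤ) ^ t := by positivity
  refine ⟨?_, ?_, ?_, ?_, ?_, ?_, ?_⟩
  · rintro x y ⟨hx, hx'⟩ ⟨hy, hy'⟩
    refine ⟨by positivity, ?_⟩
    rw [pow_add]
    have : (k : ℤ) ^ s * (y + 1) ≤ (k : ℤ) ^ s * (k : ℤ) ^ t :=
      mul_le_mul_of_nonneg_left (by omega) hs.le
    linarith
  · rintro z ⟨hz, hz'⟩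
    refine ⟨z % (k : ℤ) ^ s, z / (k : ℤ) ^ s, ⟨Int.emod_nonneg _ hs.ne', Int.emod_lt_of_pos _ hs⟩,
      ⟨Int.ediv_nonneg hz hs.le, ?_⟩, Int.emod_add_mul_ediv z _⟩
    apply Int.ediv_lt_of_lt_mul hs
    rwa [← pow_add, add_comm t s]
  · intro x y z x' y' z' ε ε' hx hy hz hx' hy' hz'
    have := add_split hs (x' := x') (y' := y') (z' := z')
      (w := if ε' then (k : ℤ) ^ t else 0) ε hx hy hz
    simp only [Seg]
    rw [← this]
    cases ε' <;> simp [pow_add]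
  · intro x y hx hy
    exact zero_split hs hx
  · intro x y _ _; simp [Seg]
  · intro x y hx hy
    exact pow_split hk A x y hx
  · intro x y hx hy
    exact pow_split hk B x y hx

lemma segTail {k : ℕ} (hk : 2 ≤ k) (s : ℕ) (A B : ℕ → Prop) :
    IsComp (Seg k s A B) (Tail k (fun e => A (s + e)) (fun e => B (s + e))) (Tail k A B)
      (fun x y => x + (k : ℤ) ^ s * y) := by
  have hk0 : (0 : ℤ) < k := by exact_mod_cast (by omega : 0 < k)
  have hs : (0 : ℤ) < (k : ℤ) ^ s := by positivity
  refine ⟨fun _ _ _ _ => trivial, ?_, ?_, ?_, ?_, ?_, ?_⟩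
  · rintro z -
    exact ⟨z % (k : ℤ) ^ s, z / (k : ℤ) ^ s, ⟨Int.emod_nonneg _ hs.ne', Int.emod_lt_of_pos _ hs⟩,
      trivial, Int.emod_add_mul_ediv z _⟩
  · intro x y z x' y' z' ε ε' hx hy hz hx' hy' hz'
    have := add_split hs (x' := x') (y' := y') (z' := z') (w := 0) ε hx hy hz
    simp only [mul_zero, add_zero] at this
    simp only [Seg, Tail]
    rw [this]
    constructor
    · rintro ⟨h, δ, h1, h2⟩
      exact ⟨δ, h1, h, h2⟩
    · rintro ⟨δ, h1, h, h2⟩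
      exact ⟨h, δ, h1, h2⟩
  · intro x y hx hy
    exact zero_split hs hx
  · rintro x y ⟨hx, hx'⟩ _
    simp only [Tail]
    constructor
    · intro h; by_contra h'; push Not at h'; nlinarith [mul_nonneg hs.le h']
    · intro h; nlinarith
  · intro x y hx hy
    exact pow_split hk A x y hx
  · intro x y hx hy
    exact pow_split hk B x y hx

/-! ### Periodicity -/

lemma tau_congr {R n : ℕ} {P Q : Piece} (hd : ∀ x, P.dom x ↔ Q.dom x)
    (hs : ∀ p : ℕ → ℤ, (∀ i, P.dom (p i)) → ∀ a : Atom R, P.sat p a ↔ Q.sat p a) :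
    ∀ p : ℕ → ℤ, (∀ i, P.dom (p i)) → tau R P n p = tau R Q n p := by
  induction n with
  | zero => intro p hp; rw [tau_zero_iff]; exact hs p hp
  | succ n ih =>
    intro p hp
    rw [tau_succ_iff]
    intro j _
    exact ⟨fun d h => ⟨d, (hd d).1 h, ih _ (dom_update hp j h)⟩,
      fun d h => ⟨d, (hd d).2 h, ih _ (dom_update hp j ((hd d).2 h))⟩⟩

lemma lt_of_pow_lt' {k s e : ℕ} (hk : 2 ≤ k) (h : (k : ℤ) ^ e < (k : ℤ) ^ s) : e < s := by
  by_contra h'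
  push Not at h'
  have : (k : ℤ) ^ s ≤ (k : ℤ) ^ e :=
    pow_le_pow_right₀ (by exact_mod_cast (by omega : 1 ≤ k)) h'
  omega

lemma tau_seg_congr {k : ℕ} (hk : 2 ≤ k) {R n s : ℕ} {A B A' B' : ℕ → Prop}
    (hA : ∀ e < s, A e ↔ A' e) (hB : ∀ e < s, B e ↔ B' e) (p : ℕ → ℤ)
    (hp : ∀ i, (Seg k s A B).dom (p i)) :
    tau R (Seg k s A B) n p = tau R (Seg k s A' B') n p := by
  refine tau_congr (P := Seg k s A B) (Q := Seg k s A' B') (fun _ => Iff.rfl) ?_ p hp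
  intro p hp a
  rcases a with ⟨i, j, l, ε, δ⟩ | ⟨t, i⟩
  · exact Iff.rfl
  · fin_cases t
    · exact Iff.rfl
    · exact Iff.rfl
    · simp only [Piece.sat, Seg]
      refine exists_congr fun e => and_congr_left fun he => hA e (lt_of_pow_lt' hk ?_)
      rw [← he]; exact (hp i).2
    · simp only [Piece.sat, Seg]
      refine exists_congr fun e => and_congr_left fun he => hB e (lt_of_pow_lt' hk ?_)
      rw [← he]; exact (hp i).2

open Nat in
lemma per_aux {α : Type} [Finite α] {N : ℕ} (hN : Nat.card α ≤ N) (a : ℕ → α)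
    (h : ∀ s t, a s = a t → a (s + 1) = a (t + 1)) : ∀ s, N ≤ s → a (s + N !) = a s := by
  have hadd : ∀ s t d, a s = a t → a (s + d) = a (t + d) := by
    intro s t d hst
    induction d with
    | zero => exact hst
    | succ d ih => exact h _ _ ih
  have := Fintype.ofFinite α
  rw [Nat.card_eq_fintype_card] at hN
  obtain ⟨i, j, hij, hEq⟩ := Fintype.exists_ne_map_eq_of_card_lt (fun i : Fin (N + 1) => a i)
    (by simpa using Nat.lt_succ_of_le hN)
  wlog hlt : i < j generalizing i j
  · exact this j i hij.symm hEq.symm (lt_of_le_of_ne (not_lt.1 hlt) hij.symm)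
  obtain ⟨d, hd⟩ := Nat.exists_eq_add_of_lt (Fin.lt_def.1 hlt)
  change a i = a j at hEq
  have hstep : ∀ s, (i : ℕ) ≤ s → a (s + (d + 1)) = a s := by
    intro s hs
    obtain ⟨r, rfl⟩ := Nat.exists_eq_add_of_le hs
    have := hadd _ _ r hEq
    rw [this]
    congr 1; omega
  have hmul : ∀ m s, (i : ℕ) ≤ s → a (s + (d + 1) * m) = a s := by
    intro m
    induction m with
    | zero => simp
    | succ m ih =>
      intro s hs
      rw [Nat.mul_succ, ← add_assoc, hstep _ (by omega), ih s hs]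
  intro s hs
  have hi := i.2
  have hj := j.2
  obtain ⟨m, hm⟩ := Nat.dvd_factorial (Nat.succ_pos d) (by omega : d + 1 ≤ N)
  rw [hm]
  exact hmul m s (by omega)

open Nat in
lemma per {α : Type} [Finite α] {N : ℕ} (hN : Nat.card α ≤ N) (a : ℕ → α)
    (h : ∀ s t, a s = a t → a (s + 1) = a (t + 1)) {s t : ℕ} (hs : N ≤ s) (ht : N ≤ t)
    (hst : s ≡ t [MOD N !]) : a s = a t := by
  wlog hle : s ≤ t generalizing s t
  · exact (this ht hs hst.symm (by omega)).symm
  obtain ⟨m, hm⟩ := (Nat.modEq_iff_dvd' hle).1 hst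
  obtain rfl : t = s + N ! * m := by omega
  clear hst ht hm hle
  induction m with
  | zero => simp
  | succ m ih =>
    rw [Nat.mul_succ, ← add_assoc, per_aux hN a h _ (by omega), ← ih]

/-- Constant tuples. -/
def IsC (z : ℕ → ℤ) : Prop := ∀ i, z i = 0 ∨ z i = -1

lemma negone_emod {m : ℤ} (hm : 0 < m) : (-1 : ℤ) % m = m - 1 := by
  have : (-1 : ℤ) = (m - 1) + m * (-1) := by ring
  rw [this, Int.add_mul_emod_self_left, Int.emod_eq_of_lt (by omega) (by omega)]

lemma const_div {m z : ℤ} (hm : 0 < m) (hz : z = 0 ∨ z = -1) : z / m = z := by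
  have h := Int.emod_add_mul_ediv z m
  rcases hz with rfl | rfl
  · simp
  · rw [negone_emod hm] at h
    have : m * ((-1) / m + 1) = 0 := by linarith
    rcases mul_eq_zero.1 this with h | h <;> omega

lemma const_split {a b z : ℤ} (ha : 0 < a) (hb : 0 < b) (hz : z = 0 ∨ z = -1) :
    z % (a * b) = z % a + a * (z % b) := by
  rcases hz with rfl | rfl
  · simp
  · rw [negone_emod ha, negone_emod hb, negone_emod (by positivity)]; ring

section
variable {k : ℕ} (hk : 2 ≤ k)
include hk

lemma kpow_pos (s : ℕ) : (0 : ℤ) < (k : ℤ) ^ s := by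
  have hk0 : (0 : ℤ) < k := by exact_mod_cast (by omega : 0 < k)
  positivity

lemma dom_emod (s : ℕ) (A B : ℕ → Prop) (z : ℕ → ℤ) :
    ∀ i, (Seg k s A B).dom (z i % (k : ℤ) ^ s) := fun _ =>
  ⟨Int.emod_nonneg _ (kpow_pos hk s).ne', Int.emod_lt_of_pos _ (kpow_pos hk s)⟩

/-- concatenation of constant segments -/
lemma tau_segSeg {R n : ℕ} {s t s' t' : ℕ} {A B A' B' : ℕ → Prop} {z : ℕ → ℤ} (hz : IsC z)
    (h1 : tau R (Seg k s A B) n (fun i => z i % (k : ℤ) ^ s) =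
      tau R (Seg k s' A' B') n (fun i => z i % (k : ℤ) ^ s'))
    (h2 : tau R (Seg k t (fun e => A (s + e)) (fun e => B (s + e))) n
        (fun i => z i % (k : ℤ) ^ t) =
      tau R (Seg k t' (fun e => A' (s' + e)) (fun e => B' (s' + e))) n
        (fun i => z i % (k : ℤ) ^ t')) :
    tau R (Seg k (s + t) A B) n (fun i => z i % (k : ℤ) ^ (s + t)) =
      tau R (Seg k (s' + t') A' B') n (fun i => z i % (k : ℤ) ^ (s' + t')) := by
  have := tau_comp (segSeg hk s t A B) (segSeg hk s' t' A' B') R n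
    (dom_emod hk s A B z) (dom_emod hk t _ _ z) (dom_emod hk s' A' B' z)
    (dom_emod hk t' _ _ z) h1 h2
  simp only [pow_add]
  simp only [const_split (kpow_pos hk _) (kpow_pos hk _) (hz _)]
  exact this

open Nat in
lemma blank_per {R n N : ℕ} (hN : cardBound R n ≤ N) {z : ℕ → ℤ} (hz : IsC z) {s t : ℕ}
    (hs : N ≤ s) (ht : N ≤ t) (hst : s ≡ t [MOD N !]) :
    tau R (Seg k s (fun _ => False) (fun _ => False)) n (fun i => z i % (k : ℤ) ^ s) =
    tau R (Seg k t (fun _ => False) (fun _ => False)) n (fun i => z i % (k : ℤ) ^ t) := by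
  refine per (N := N) (by rw [card_Ty]; exact hN) (fun s =>
    tau R (Seg k s (fun _ => False) (fun _ => False)) n (fun i => z i % (k : ℤ) ^ s)) ?_ hs ht hst
  intro s t h
  exact tau_segSeg hk hz h rfl

open Nat in
lemma mark_per {R n N : ℕ} (hN : cardBound R n ≤ N) {z : ℕ → ℤ} (hz : IsC z) {s t : ℕ}
    (hs : N < s) (ht : N < t) (hst : s ≡ t [MOD N !]) {A B A' B' : ℕ → Prop}
    (hA0 : A 0 ↔ A' 0) (hB0 : B 0 ↔ B' 0)
    (hA : ∀ e, 0 < e → e < s → ¬ A e) (hB : ∀ e, 0 < e → e < s → ¬ B e)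
    (hA' : ∀ e, 0 < e → e < t → ¬ A' e) (hB' : ∀ e, 0 < e → e < t → ¬ B' e) :
    tau R (Seg k s A B) n (fun i => z i % (k : ℤ) ^ s) =
    tau R (Seg k t A' B') n (fun i => z i % (k : ℤ) ^ t) := by
  obtain ⟨s, rfl⟩ : ∃ r, s = 1 + r := ⟨s - 1, by omega⟩
  obtain ⟨t, rfl⟩ : ∃ r, t = 1 + r := ⟨t - 1, by omega⟩
  have hst' : s ≡ t [MOD N !] := Nat.ModEq.add_left_cancel' 1 hst
  refine tau_segSeg hk hz ?_ ?_
  · refine tau_seg_congr hk ?_ ?_ _ (dom_emod hk _ _ _ z)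
    · intro e he
      obtain rfl : e = 0 := by omega
      exact hA0
    · intro e he
      obtain rfl : e = 0 := by omega
      exact hB0
  · rw [tau_seg_congr hk (A' := fun _ => False) (B' := fun _ => False) _ _ _
        (dom_emod hk _ _ _ z),
      tau_seg_congr hk (s := t) (A' := fun _ => False) (B' := fun _ => False) _ _ _
        (dom_emod hk _ _ _ z)]
    · exact blank_per hk hN hz (by omega) (by omega) hst'
    · intro e he; simpa using hA' (1 + e) (by omega) (by omega)
    · intro e he; simpa using hB' (1 + e) (by omega) (by omega)
    · intro e he; simpa using hA (1 + e) (by omega) (by omega)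
    · intro e he; simpa using hB (1 + e) (by omega) (by omega)

end

/-- positions of digits of the elements of `U`. -/
def PU (k e : ℕ) : Prop := ∃ m, e = k ^ m
/-- positions of digits of the squares of the elements of `U`. -/
def PV (k e : ℕ) : Prop := ∃ m, e = 2 * k ^ m

abbrev SegAt (k lo s : ℕ) : Piece := Seg k s (fun e => PU k (lo + e)) (fun e => PV k (lo + e))
abbrev TailAt (k lo : ℕ) : Piece := Tail k (fun e => PU k (lo + e)) (fun e => PV k (lo + e))

/-- length of the block starting at `k ^ a`. -/
def len (k a : ℕ) : ℕ := k ^ a + (k - 2) * k ^ a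

section
variable {k : ℕ} (hk : 2 ≤ k)
include hk

lemma pow_add_len (a : ℕ) : k ^ a + len k a = k ^ (a + 1) := by
  obtain ⟨r, rfl⟩ := Nat.exists_eq_add_of_le hk
  simp [len]; ring

lemma no_pow {a e : ℕ} (h1 : k ^ a < e) (h2 : e < k ^ (a + 1)) : ¬ PU k e := by
  rintro ⟨m, rfl⟩
  rw [Nat.pow_lt_pow_iff_right (by omega)] at h1 h2
  omega

lemma no_two_pow {a e : ℕ} (h1 : k ^ a < e) (h2 : e < 2 * k ^ a) : ¬ PV k e := by
  rintro ⟨m, rfl⟩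
  have h3 : m < a := by
    rw [← Nat.pow_lt_pow_iff_right (a := k) (by omega)]; omega
  have h4 : k ^ (m + 1) ≤ k ^ a := Nat.pow_le_pow_right (by omega) h3
  rw [pow_succ] at h4
  nlinarith [Nat.mul_le_mul_left (k ^ m) hk]

lemma no_two_pow' {a e : ℕ} (h1 : 2 * k ^ a < e) (h2 : e < k ^ (a + 1)) : ¬ PV k e := by
  rintro ⟨m, rfl⟩
  have h3 : a < m := by
    rw [← Nat.pow_lt_pow_iff_right (a := k) (by omega)]; omega
  have h4 : k ^ (a + 1) ≤ k ^ m := Nat.pow_le_pow_right (by omega) h3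
  omega

lemma PV_pow {a : ℕ} (ha : 1 ≤ a) : PV k (k ^ a) ↔ k = 2 := by
  constructor
  · rintro ⟨m, hm⟩
    have hp : 0 < k ^ m := Nat.pow_pos (by omega)
    have h3 : m < a := by
      rw [← Nat.pow_lt_pow_iff_right (a := k) (by omega)]; omega
    have h4 : k ^ (m + 1) ≤ k ^ a := Nat.pow_le_pow_right (by omega) h3
    rw [pow_succ] at h4
    have : k ≤ 2 := by
      by_contra hh
      push Not at hh
      nlinarith
    omega
  · rintro rfl
    obtain ⟨b, rfl⟩ : ∃ b, a = b + 1 := ⟨a - 1, by omega⟩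
    exact ⟨b, by ring⟩

open Nat in
lemma pow_modEq {Q a b : ℕ} (hQ : 0 < Q) (ha : Q ≤ a) (hb : Q ≤ b) (h : a ≡ b [MOD Q !]) :
    k ^ a ≡ k ^ b [MOD Q] := by
  have : NeZero Q := ⟨hQ.ne'⟩
  have := per (α := ZMod Q) (N := Q) (by simp) (fun a => ((k : ZMod Q)) ^ a)
    (by intro s t h; simp only [pow_succ]; rw [h]) ha hb h
  rw [← ZMod.natCast_eq_natCast_iff]
  push_cast
  exact this

open Nat in
lemma block_per {R n N : ℕ} (hN : cardBound R n ≤ N) {z : ℕ → ℤ} (hz : IsC z) {a b : ℕ}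
    (ha : N + N ! ≤ a) (hb : N + N ! ≤ b) (hab : a ≡ b [MOD (N !) !]) :
    tau R (SegAt k (k ^ a) (len k a)) n (fun i => z i % (k : ℤ) ^ (len k a)) =
    tau R (SegAt k (k ^ b) (len k b)) n (fun i => z i % (k : ℤ) ^ (len k b)) := by
  have hQ : 0 < N ! := Nat.factorial_pos N
  have hpow : k ^ a ≡ k ^ b [MOD N !] := pow_modEq hk hQ (by omega) (by omega) hab
  have hNa : ∀ a, N + N ! ≤ a → N < k ^ a := fun a ha =>
    lt_of_le_of_lt (by omega) (Nat.lt_pow_self (n := a) (by omega : 1 < k))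
  have hk1 : ∀ a, 2 * k ^ a ≤ k ^ (a + 1) := by
    intro a; rw [pow_succ, mul_comm]; exact Nat.mul_le_mul_left _ hk
  unfold len
  refine tau_segSeg hk hz ?_ ?_
  · refine mark_per hk hN hz (hNa a ha) (hNa b hb) hpow ?_ ?_ ?_ ?_ ?_ ?_
    · exact ⟨fun _ => ⟨b, rfl⟩, fun _ => ⟨a, rfl⟩⟩
    · simp only [add_zero]
      rw [PV_pow hk (by omega), PV_pow hk (by omega)]
    · intro e h1 h2; have := hk1 a; exact no_pow hk (a := a) (by omega) (by omega)
    · intro e h1 h2; exact no_two_pow hk (a := a) (by omega) (by omega)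
    · intro e h1 h2; have := hk1 b; exact no_pow hk (a := b) (by omega) (by omega)
    · intro e h1 h2; exact no_two_pow hk (a := b) (by omega) (by omega)
  · by_cases hk2 : k = 2
    · subst hk2
      simp only [Nat.sub_self, zero_mul]
      exact tau_seg_congr hk (by omega) (by omega) _ (dom_emod hk _ _ _ z)
    · have h3 : 1 ≤ k - 2 := by omega
      have hl : ∀ a, k ^ (a + 1) = 2 * k ^ a + (k - 2) * k ^ a := by
        intro a; rw [← pow_add_len hk a, len]; ring
      have hp : ∀ a, 0 < k ^ a := fun a => Nat.pow_pos (by omega)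
      have hU : ∀ a, ¬ PU k (2 * k ^ a) := fun a =>
        no_pow hk (a := a) (by have := hp a; omega) (by
          rw [hl]; have := hp a; have := Nat.mul_le_mul_right (k ^ a) h3; omega)
      refine mark_per hk hN hz ?_ ?_ (hpow.mul_left _) ?_ ?_ ?_ ?_ ?_ ?_
      · exact lt_of_lt_of_le (hNa a ha) (Nat.le_mul_of_pos_left _ h3)
      · exact lt_of_lt_of_le (hNa b hb) (Nat.le_mul_of_pos_left _ h3)
      · simp only [add_zero, ← two_mul]
        exact iff_of_false (hU a) (hU b)
      · simp only [add_zero, ← two_mul]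
        exact iff_of_true ⟨a, rfl⟩ ⟨b, rfl⟩
      · intro e h1 h2; have := hl a; have := hp a; exact no_pow hk (a := a) (by omega) (by omega)
      · intro e h1 h2; have := hl a; exact no_two_pow' hk (a := a) (by omega) (by omega)
      · intro e h1 h2; have := hl b; have := hp b; exact no_pow hk (a := b) (by omega) (by omega)
      · intro e h1 h2; have := hl b; exact no_two_pow' hk (a := b) (by omega) (by omega)
end

/-! ### Bounding witnesses -/

/-- Removing the first `i` blocks from an integer starting at block `a`. -/
def cut (k : ℕ) : ℕ → ℕ → ℤ → ℤ
  | _, 0, c => c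
  | a, i + 1, c => cut k (a + 1) i (c / (k : ℤ) ^ (len k a))

/-- only `I` blocks are needed -/
def fits (k a I : ℕ) (c : ℤ) : Prop := cut k a I c = 0 ∨ cut k a I c = -1

lemma cut_add (k a i I : ℕ) (c : ℤ) : cut k a (i + I) c = cut k (a + i) I (cut k a i c) := by
  induction i generalizing a c with
  | zero => simp [cut]
  | succ i ih =>
    rw [Nat.succ_add, cut, ih, cut, show a + 1 + i = a + (i + 1) by ring]

lemma IsC.update {z : ℕ → ℤ} (hz : IsC z) (j : ℕ) {c : ℤ} (hc : c = 0 ∨ c = -1) :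
    IsC (Function.update z j c) := by
  intro i
  by_cases h : i = j
  · subst h; simpa using hc
  · simpa [h] using hz i

lemma div_const_iff {K x : ℤ} (hK : 0 < K) : (x / K = 0 ∨ x / K = -1) ↔ -K ≤ x ∧ x < K := by
  have h1 := Int.emod_add_mul_ediv x K
  have h2 := Int.emod_nonneg x hK.ne'
  have h3 := Int.emod_lt_of_pos x hK
  constructor
  · rintro (h | h) <;> rw [h] at h1 <;> constructor <;> linarith
  · rintro ⟨h4, h5⟩
    have : x / K < 1 := by nlinarith
    have : -2 < x / K := by nlinarith
    omega

section
variable {k : ℕ} (hk : 2 ≤ k)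
include hk

lemma segTailAt (lo s : ℕ) : IsComp (SegAt k lo s) (TailAt k (lo + s)) (TailAt k lo)
    (fun x y => x + (k : ℤ) ^ s * y) := by
  have := segTail hk s (fun e => PU k (lo + e)) (fun e => PV k (lo + e))
  simpa only [← add_assoc] using this

lemma comb_const {z : ℕ → ℤ} (hz : IsC z) (s : ℕ) :
    (fun i => z i % (k : ℤ) ^ s + (k : ℤ) ^ s * z i) = z := by
  funext i
  have h := Int.emod_add_mul_ediv (z i) ((k : ℤ) ^ s)
  rwa [const_div (kpow_pos hk s) (hz i)] at h

lemma tail_block {R n j a b : ℕ} {z : ℕ → ℤ} (hz : IsC z) {x y x' y' : ℤ}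
    (hx : (SegAt k (k ^ a) (len k a)).dom x) (hx' : (SegAt k (k ^ b) (len k b)).dom x')
    (h1 : tau R (SegAt k (k ^ a) (len k a)) n
        (Function.update (fun i => z i % (k : ℤ) ^ (len k a)) j x) =
      tau R (SegAt k (k ^ b) (len k b)) n
        (Function.update (fun i => z i % (k : ℤ) ^ (len k b)) j x'))
    (h2 : tau R (TailAt k (k ^ (a + 1))) n (Function.update z j y) =
      tau R (TailAt k (k ^ (b + 1))) n (Function.update z j y')) :
    tau R (TailAt k (k ^ a)) n (Function.update z j (x + (k : ℤ) ^ (len k a) * y)) =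
      tau R (TailAt k (k ^ b)) n (Function.update z j (x' + (k : ℤ) ^ (len k b) * y')) := by
  have ha := segTailAt hk (k ^ a) (len k a)
  have hb := segTailAt hk (k ^ b) (len k b)
  rw [pow_add_len hk] at ha hb
  have := tau_comp ha hb R n
    (dom_update (dom_emod hk _ _ _ z) j hx) (fun _ => trivial)
    (dom_update (dom_emod hk _ _ _ z) j hx') (fun _ => trivial) h1 h2
  simpa only [comb_update (fun x y => x + (k : ℤ) ^ (len k a) * y),
    comb_update (fun x y => x + (k : ℤ) ^ (len k b) * y), comb_const hk hz] using this

lemma comb_div {s : ℕ} {x y : ℤ} (hx : 0 ≤ x ∧ x < (k : ℤ) ^ s) :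
    (x + (k : ℤ) ^ s * y) / (k : ℤ) ^ s = y := by
  rw [Int.add_mul_ediv_left _ _ (kpow_pos hk s).ne', Int.ediv_eq_zero_of_lt hx.1 hx.2, zero_add]

lemma comb_mod {s : ℕ} {x y : ℤ} (hx : 0 ≤ x ∧ x < (k : ℤ) ^ s) :
    (x + (k : ℤ) ^ s * y) % (k : ℤ) ^ s = x := by
  rw [Int.add_mul_emod_self_left, Int.emod_eq_of_lt hx.1 hx.2]

open Nat in
/-- Move a choice from tail `a` to tail `b`. -/
lemma transfer {R n N j : ℕ} (hj : j < R) (hN : cardBound R (n + 1) ≤ N)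
    (hcl : ∀ a b, N + N ! ≤ a → N + N ! ≤ b → a ≡ b [MOD (N !) !] → ∀ z, IsC z →
      tau R (TailAt k (k ^ a)) n z = tau R (TailAt k (k ^ b)) n z)
    {z : ℕ → ℤ} (hz : IsC z) (I : ℕ) :
    ∀ (a b : ℕ) (c : ℤ), N + N ! ≤ a → N + N ! ≤ b → a ≡ b [MOD (N !) !] → fits k a I c →
      ∃ d, fits k b I d ∧ tau R (TailAt k (k ^ a)) n (Function.update z j c) =
        tau R (TailAt k (k ^ b)) n (Function.update z j d) := by
  induction I with
  | zero =>
    intro a b c ha hb hab hc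
    exact ⟨c, hc, hcl a b ha hb hab _ (hz.update j hc)⟩
  | succ I ih =>
    intro a b c ha hb hab hc
    obtain ⟨y', hy', h2⟩ := ih (a + 1) (b + 1) (c / (k : ℤ) ^ (len k a)) (by omega) (by omega)
      (hab.add_right 1) hc
    have hx : (SegAt k (k ^ a) (len k a)).dom (c % (k : ℤ) ^ (len k a)) :=
      dom_emod hk (len k a) (fun e => PU k (k ^ a + e)) (fun e => PV k (k ^ a + e)) (fun _ => c) 0
    obtain ⟨x', hx', h1⟩ := (tau_succ_iff.1 (block_per hk hN hz ha hb hab) j hj).1 _ hx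
    have h3 := tail_block hk hz hx hx' h1 h2
    rw [Int.emod_add_mul_ediv] at h3
    refine ⟨_, ?_, h3⟩
    simp only [fits, cut]
    rw [comb_div hk hx']
    exact hy'

lemma fits_exists (a : ℕ) (c : ℤ) : ∃ I, fits k a I c := by
  have key : ∀ (t a : ℕ) (c : ℤ), -(t : ℤ) - 1 ≤ c → c ≤ t → fits k a t c := by
    intro t
    induction t with
    | zero => intro a c h1 h2; simp only [fits, cut]; push_cast at h1 h2; omega
    | succ t ih =>
      intro a c h1 h2
      simp only [fits, cut]
      apply ih
      all_goals
        have hm : (2 : ℤ) ≤ (k : ℤ) ^ (len k a) := by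
          have h3 : 1 ≤ len k a := by
            have : 0 < k ^ a := Nat.pow_pos (by omega)
            unfold len; omega
          have h4 : (2 : ℤ) ≤ k := by exact_mod_cast hk
          calc (2 : ℤ) ≤ (k : ℤ) ^ 1 := by simpa using h4
            _ ≤ _ := pow_le_pow_right₀ (by omega) h3
        have h5 := Int.emod_add_mul_ediv c ((k : ℤ) ^ (len k a))
        have h6 := Int.emod_nonneg c (by omega : (k : ℤ) ^ (len k a) ≠ 0)
        have h7 := Int.emod_lt_of_pos c (by omega : 0 < (k : ℤ) ^ (len k a))
        push_cast at h1 h2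
        generalize c / (k : ℤ) ^ (len k a) = q at *
        generalize (k : ℤ) ^ (len k a) = m at *
        by_contra hcon
        push Not at hcon
        nlinarith
  exact ⟨c.natAbs, key _ a c (by omega) (by omega)⟩

lemma sat_const {a b R : ℕ} {z : ℕ → ℤ} (hz : IsC z) :
    tau R (TailAt k (k ^ a)) 0 z = tau R (TailAt k (k ^ b)) 0 z := by
  have hno : ∀ (A : ℕ → Prop) i, ¬ ∃ e, A e ∧ z i = (k : ℤ) ^ e := by
    rintro A i ⟨e, -, he⟩
    have := kpow_pos hk e
    rcases hz i with h | h <;> omega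
  rw [tau_zero_iff]
  rintro (⟨i, j, l, ε, δ⟩ | ⟨t, i⟩)
  · exact Iff.rfl
  · fin_cases t
    · exact Iff.rfl
    · exact Iff.rfl
    · exact iff_of_false (hno _ i) (hno _ i)
    · exact iff_of_false (hno _ i) (hno _ i)

open Nat in
lemma claim {R N : ℕ} (n : ℕ) (hN : cardBound R n ≤ N) :
    ∀ a b, N + N ! ≤ a → N + N ! ≤ b → a ≡ b [MOD (N !) !] → ∀ z, IsC z →
      tau R (TailAt k (k ^ a)) n z = tau R (TailAt k (k ^ b)) n z := by
  induction n with
  | zero => intro a b _ _ _ z hz; exact sat_const hk hz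
  | succ n ih =>
    intro a b ha hb hab z hz
    rw [tau_succ_iff]
    intro j hj
    have hcl := ih ((cardBound_zero_le R n (by omega)).trans hN)
    constructor
    · intro d _
      obtain ⟨I, hI⟩ := fits_exists hk a d
      obtain ⟨e, -, he⟩ := transfer hk hj hN hcl hz I a b d ha hb hab hI
      exact ⟨e, trivial, he⟩
    · intro d _
      obtain ⟨I, hI⟩ := fits_exists hk b d
      obtain ⟨e, -, he⟩ := transfer hk hj hN hcl hz I b a d hb ha hab.symm hI
      exact ⟨e, trivial, he.symm⟩

lemma repl {R n j : ℕ} {z : ℕ → ℤ} (hz : IsC z) {e : ℤ} (i : ℕ) :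
    ∀ (a : ℕ) (c : ℤ), tau R (TailAt k (k ^ (a + i))) n (Function.update z j (cut k a i c)) =
      tau R (TailAt k (k ^ (a + i))) n (Function.update z j e) →
    ∃ d, cut k a i d = e ∧ tau R (TailAt k (k ^ a)) n (Function.update z j c) =
      tau R (TailAt k (k ^ a)) n (Function.update z j d) := by
  induction i with
  | zero => intro a c h; exact ⟨e, rfl, h⟩
  | succ i ih =>
    intro a c h
    rw [show a + (i + 1) = a + 1 + i by ring] at h
    obtain ⟨d, hd, h2⟩ := ih (a + 1) _ h
    have hx : (SegAt k (k ^ a) (len k a)).dom (c % (k : ℤ) ^ (len k a)) :=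
      dom_emod hk (len k a) (fun e => PU k (k ^ a + e)) (fun e => PV k (k ^ a + e)) (fun _ => c) 0
    have h3 := tail_block hk hz hx hx rfl h2
    rw [Int.emod_add_mul_ediv] at h3
    refine ⟨_, ?_, h3⟩
    rw [cut, comb_div hk hx, hd]

open Nat in
lemma shrink {R n N j : ℕ} (hj : j < R) (hN : cardBound R (n + 1) ≤ N) {z : ℕ → ℤ} (hz : IsC z)
    (a I : ℕ) : ∀ c, fits k a I c → ∃ d, (∃ I' ≤ N + N ! + (N !)! * N, fits k a I' d) ∧
      tau R (TailAt k (k ^ a)) n (Function.update z j c) =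
      tau R (TailAt k (k ^ a)) n (Function.update z j d) := by
  have hN0 : cardBound R n ≤ N := (cardBound_zero_le R n (by omega)).trans hN
  induction I using Nat.strong_induction_on with
  | _ I ih =>
    intro c hc
    by_cases hI : I ≤ N + N ! + (N !)! * N
    · exact ⟨c, ⟨I, hI, hc⟩, rfl⟩
    have := Fintype.ofFinite (Ty R n)
    obtain ⟨t, t', hne, hEq⟩ := Fintype.exists_ne_map_eq_of_card_lt (fun t : Fin (N + 1) =>
      tau R (TailAt k (k ^ (a + (N + N ! + (N !)! * t)))) n
        (Function.update z j (cut k a (N + N ! + (N !)! * t) c))) (by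
        rw [← Nat.card_eq_fintype_card, card_Ty]; simpa using Nat.lt_succ_of_le hN0)
    wlog hlt : t < t' generalizing t t'
    · exact this t' t hne.symm hEq.symm (lt_of_le_of_ne (not_lt.1 hlt) hne.symm)
    have hlt' : (t : ℕ) < t' := hlt
    have ht' : (t' : ℕ) ≤ N := by have := t'.2; omega
    generalize (t : ℕ) = u at *
    generalize (t' : ℕ) = u' at *
    have hM : 0 < (N !)! := Nat.factorial_pos _
    have h1 : (N !)! * u < (N !)! * u' := Nat.mul_lt_mul_of_pos_left hlt' hM
    have h2 : (N !)! * u' ≤ (N !)! * N := Nat.mul_le_mul_left _ ht'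
    have hc' : fits k (a + (N + N ! + (N !)! * u')) (I - (N + N ! + (N !)! * u'))
        (cut k a (N + N ! + (N !)! * u') c) := by
      unfold fits
      rw [← cut_add, Nat.add_sub_cancel' (by omega)]
      exact hc
    have hmod : a + (N + N ! + (N !)! * u') ≡ a + (N + N ! + (N !)! * u) [MOD (N !)!] := by
      apply Nat.ModEq.add_left
      apply Nat.ModEq.add_left
      exact (Nat.modEq_zero_iff_dvd.2 (dvd_mul_right _ _)).trans
        (Nat.modEq_zero_iff_dvd.2 (dvd_mul_right _ _)).symm
    obtain ⟨e, he, hte⟩ := transfer hk hj hN (claim hk n hN0) hz _ _ _ _ (by omega) (by omega)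
      hmod hc'
    obtain ⟨d, hd, htd⟩ := repl hk hz _ a c (hEq.trans hte)
    have hfd : fits k a (N + N ! + (N !)! * u + (I - (N + N ! + (N !)! * u'))) d := by
      unfold fits
      rw [cut_add, hd]; exact he
    obtain ⟨d', hd', h3⟩ := ih _ (by omega) d hfd
    exact ⟨d', hd', htd.trans h3⟩

lemma cut_eq (i : ℕ) : ∀ (a : ℕ) (c : ℤ), cut k a i c = c / (k : ℤ) ^ (k ^ (a + i) - k ^ a) := by
  induction i with
  | zero => simp [cut]
  | succ i ih =>
    intro a c
    rw [cut, ih, Int.ediv_ediv_of_nonneg (kpow_pos hk _).le, ← pow_add]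
    congr 2
    have h1 := pow_add_len hk a
    have h2 : k ^ (a + 1) ≤ k ^ (a + 1 + i) := Nat.pow_le_pow_right (by omega) (by omega)
    rw [show a + (i + 1) = a + 1 + i by ring]
    omega

open Nat in
theorem mainBound {R n N j : ℕ} (hj : j < R) (hN : cardBound R (n + 1) ≤ N) {p : ℕ → ℤ} (a : ℕ)
    (hp : ∀ i, -(k : ℤ) ^ (k ^ a) ≤ p i ∧ p i < (k : ℤ) ^ (k ^ a)) (c : ℤ) :
    ∃ d, (-(k : ℤ) ^ (k ^ (a + (N + N ! + (N !)! * N))) ≤ d ∧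
        d < (k : ℤ) ^ (k ^ (a + (N + N ! + (N !)! * N)))) ∧
      tau R (TailAt k 0) n (Function.update p j c) =
      tau R (TailAt k 0) n (Function.update p j d) := by
  set s := k ^ a with hs
  have hz : IsC (fun i => p i / (k : ℤ) ^ s) := fun i => (div_const_iff (kpow_pos hk s)).2 (hp i)
  obtain ⟨I, hI⟩ := fits_exists hk a (c / (k : ℤ) ^ s)
  obtain ⟨y, ⟨I', hI', hy⟩, h2⟩ := shrink hk hj hN hz a I _ hI
  have hcomp := segTailAt hk 0 s
  rw [zero_add] at hcomp
  have hx : (SegAt k 0 s).dom (c % (k : ℤ) ^ s) :=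
    dom_emod hk s (fun e => PU k (0 + e)) (fun e => PV k (0 + e)) (fun _ => c) 0
  have := tau_comp hcomp hcomp R n (dom_update (dom_emod hk _ _ _ p) j hx) (fun _ => trivial)
    (dom_update (dom_emod hk _ _ _ p) j hx) (fun _ => trivial) rfl h2
  simp only [comb_update (fun x y => x + (k : ℤ) ^ s * y), Int.emod_add_mul_ediv] at this
  refine ⟨_, ?_, this⟩
  have hmono : (k : ℤ) ^ (k ^ (a + I')) ≤ (k : ℤ) ^ (k ^ (a + (N + N ! + (N !)! * N))) :=
    pow_le_pow_right₀ (by exact_mod_cast (by omega : 1 ≤ k))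
      (Nat.pow_le_pow_right (by omega) (by omega))
  have hle : k ^ a ≤ k ^ (a + I') := Nat.pow_le_pow_right (by omega) (by omega)
  have : -(k : ℤ) ^ (k ^ (a + I')) ≤ c % (k : ℤ) ^ s + (k : ℤ) ^ s * y ∧
      c % (k : ℤ) ^ s + (k : ℤ) ^ s * y < (k : ℤ) ^ (k ^ (a + I')) := by
    rw [← div_const_iff (kpow_pos hk _)]
    have h5 : (k : ℤ) ^ (k ^ (a + I')) = (k : ℤ) ^ s * (k : ℤ) ^ (k ^ (a + I') - k ^ a) := by
      rw [← pow_add]; congr 1; omega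
    rw [h5, ← Int.ediv_ediv_of_nonneg (kpow_pos hk _).le, comb_div hk hx, ← cut_eq hk]
    exact hy
  constructor <;> omega
end

/-! ### Definable predicates are invariant under equality of types -/

/-- `P` only depends on coordinates `< R - 1` and on the `n`-type. -/
def Df (k R n : ℕ) (P : (ℕ → ℤ) → Prop) : Prop :=
  (∀ p q : ℕ → ℤ, (∀ i, i + 1 < R → p i = q i) → (P p ↔ P q)) ∧
  ∀ p q : ℕ → ℤ, tau R (TailAt k 0) n p = tau R (TailAt k 0) n q → (P p ↔ P q)

lemma Df.succ {k R n : ℕ} {P : (ℕ → ℤ) → Prop} (hR : 1 ≤ R) (h : Df k R n P) :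
    Df k R (n + 1) P := by
  refine ⟨h.1, fun p q hpq => ?_⟩
  obtain ⟨e, -, he⟩ := (tau_succ_iff.1 hpq (R - 1) (by omega)).1 0 trivial
  have h1 : ∀ (p : ℕ → ℤ) d, P p ↔ P (Function.update p (R - 1) d) := by
    intro p d
    apply h.1
    intro i hi
    rw [Function.update_of_ne (by omega)]
  rw [h1 p 0, h1 q e]
  exact h.2 _ _ he

lemma Df.mono {k R n m : ℕ} {P : (ℕ → ℤ) → Prop} (hR : 1 ≤ R) (h : Df k R n P) (hnm : n ≤ m) :
    Df k R m P := by
  induction hnm with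
  | refl => exact h
  | step _ ih => exact ih.succ hR

lemma Df.not {k R n : ℕ} {P : (ℕ → ℤ) → Prop} (h : Df k R n P) : Df k R n (fun p => ¬ P p) :=
  ⟨fun p q e => not_congr (h.1 p q e), fun p q e => not_congr (h.2 p q e)⟩

lemma Df.and {k R n : ℕ} {P Q : (ℕ → ℤ) → Prop} (h : Df k R n P) (h' : Df k R n Q) :
    Df k R n (fun p => P p ∧ Q p) :=
  ⟨fun p q e => and_congr (h.1 p q e) (h'.1 p q e),
   fun p q e => and_congr (h.2 p q e) (h'.2 p q e)⟩

lemma Df.or {k R n : ℕ} {P Q : (ℕ → ℤ) → Prop} (h : Df k R n P) (h' : Df k R n Q) :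
    Df k R n (fun p => P p ∨ Q p) :=
  ⟨fun p q e => or_congr (h.1 p q e) (h'.1 p q e),
   fun p q e => or_congr (h.2 p q e) (h'.2 p q e)⟩

lemma Df.congr {k R n : ℕ} {P Q : (ℕ → ℤ) → Prop} (h : Df k R n P) (hPQ : ∀ p, P p ↔ Q p) :
    Df k R n Q := by
  have : P = Q := funext fun p => propext (hPQ p)
  exact this ▸ h

lemma Df.ex {k R n j : ℕ} {P : (ℕ → ℤ) → Prop} (h : Df k R n P) (hj : j < R) :
    Df k R (n + 1) (fun p => ∃ x, P (Function.update p j x)) := by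
  refine ⟨fun p q e => exists_congr fun x => h.1 _ _ ?_, fun p q e => ?_⟩
  · intro i hi
    by_cases hij : i = j
    · subst hij; simp
    · simp [hij, e i hi]
  · obtain ⟨h1, h2⟩ := tau_succ_iff.1 e j hj
    constructor
    · rintro ⟨x, hx⟩
      obtain ⟨y, -, hy⟩ := h1 x trivial
      exact ⟨y, (h.2 _ _ hy).1 hx⟩
    · rintro ⟨x, hx⟩
      obtain ⟨y, -, hy⟩ := h2 x trivial
      exact ⟨y, (h.2 _ _ hy).2 hx⟩

lemma Df.all {k R n j : ℕ} {P : (ℕ → ℤ) → Prop} (h : Df k R n P) (hj : j < R) :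
    Df k R (n + 1) (fun p => ∀ x, P (Function.update p j x)) :=
  ((h.not.ex hj).not).congr fun p => by simp

lemma df_atom {k R : ℕ} (a : Atom R) {P : (ℕ → ℤ) → Prop}
    (h1 : ∀ p q : ℕ → ℤ, (∀ i, i + 1 < R → p i = q i) → (P p ↔ P q))
    (hP : ∀ p, (TailAt k 0).sat p a ↔ P p) : Df k R 0 P :=
  ⟨h1, fun p q e => by
    rw [← hP, ← hP]
    exact tau_zero_iff.1 e a⟩

def UU (k : ℕ) (x : ℤ) : Prop := ∃ e, PU k e ∧ x = (k : ℤ) ^ e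
def VV (k : ℕ) (x : ℤ) : Prop := ∃ e, PV k e ∧ x = (k : ℤ) ^ e

section
variable {k R : ℕ}

lemma df_add {i j l : ℕ} (hi : i + 1 < R) (hj : j + 1 < R) (hl : l + 1 < R) :
    Df k R 0 (fun p => p i + p j = p l) :=
  df_atom (.inl (⟨i, by omega⟩, ⟨j, by omega⟩, ⟨l, by omega⟩, false, false))
    (fun p q h => by rw [h i hi, h j hj, h l hl])
    (fun p => by simp [Piece.sat, Tail])

lemma df_zero {i : ℕ} (hi : i + 1 < R) : Df k R 0 (fun p => p i = 0) :=
  df_atom (.inr (0, ⟨i, by omega⟩)) (fun p q h => by rw [h i hi])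
    (fun p => by simp [Piece.sat])

lemma df_neg {i : ℕ} (hi : i + 1 < R) : Df k R 0 (fun p => p i < 0) :=
  df_atom (.inr (1, ⟨i, by omega⟩)) (fun p q h => by rw [h i hi])
    (fun p => by simp [Piece.sat, Tail])

lemma df_U {i : ℕ} (hi : i + 1 < R) : Df k R 0 (fun p => UU k (p i)) :=
  df_atom (.inr (2, ⟨i, by omega⟩)) (fun p q h => by rw [h i hi])
    (fun p => by simp [Piece.sat, Tail, UU])

lemma df_V {i : ℕ} (hi : i + 1 < R) : Df k R 0 (fun p => VV k (p i)) :=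
  df_atom (.inr (3, ⟨i, by omega⟩)) (fun p q h => by rw [h i hi])
    (fun p => by simp [Piece.sat, Tail, VV])

lemma df_lt {i j t : ℕ} (hi : i < t) (hj : j < t) (ht : t + 1 < R) :
    Df k R 1 (fun p => p i < p j) := by
  have := ((df_add (k := k) (R := R) (i := t) (j := i) (l := j) (by omega) (by omega)
    (by omega)).and ((df_neg (i := t) (by omega)).not.and (df_zero (i := t) (by omega)).not)).ex
    (j := t) (by omega)
  refine this.congr fun p => ?_
  simp only [Function.update_self, Function.update_of_ne hi.ne, Function.update_of_ne hj.ne]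
  constructor
  · rintro ⟨x, h⟩; omega
  · intro h; exact ⟨p j - p i, by omega⟩

lemma df_eq {i j t : ℕ} (hi : i < t) (hj : j < t) (ht : t + 1 < R) :
    Df k R 1 (fun p => p i = p j) := by
  have := ((df_add (k := k) (R := R) (i := t) (j := i) (l := j) (by omega) (by omega)
    (by omega)).and (df_zero (i := t) (by omega))).ex (j := t) (by omega)
  refine this.congr fun p => ?_
  simp only [Function.update_self, Function.update_of_ne hi.ne, Function.update_of_ne hj.ne]
  constructor
  · rintro ⟨x, h⟩; omega
  · intro h; exact ⟨0, by omega⟩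

variable (hk : 2 ≤ k) {g : ℤ → ℤ}
  (hg1 : ∀ n : ℤ, (∃ m : ℕ, n = (k : ℤ) ^ (k ^ m)) → g n = n ^ 2)
  (hg2 : ∀ n : ℤ, (¬ ∃ m : ℕ, n = (k : ℤ) ^ (k ^ m)) → g n = 0)
include hk hg1 hg2

lemma g_char (x y : ℤ) : g x = y ↔
    (UU k x ∧ VV k y ∧ x < y ∧ ¬ ∃ z, VV k z ∧ x < z ∧ z < y) ∨ (¬ UU k x ∧ y = 0) := by
  have hU : UU k x ↔ ∃ m : ℕ, x = (k : ℤ) ^ (k ^ m) := by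
    constructor
    · rintro ⟨e, ⟨m, rfl⟩, h⟩; exact ⟨m, h⟩
    · rintro ⟨m, h⟩; exact ⟨_, ⟨m, rfl⟩, h⟩
  by_cases hx : UU k x
  · rw [hg1 x (hU.1 hx)]
    obtain ⟨m, rfl⟩ := hU.1 hx
    have hpw : ∀ {a b : ℕ}, (k : ℤ) ^ a < (k : ℤ) ^ b ↔ a < b := fun {a b} =>
      pow_lt_pow_iff_right₀ (by exact_mod_cast (by omega : 1 < k))
    have hpos : ∀ m, 0 < k ^ m := fun m => Nat.pow_pos (by omega)
    have hgap : ∀ m', k ^ m < 2 * k ^ m' → m ≤ m' := by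
      intro m' h
      by_contra hc
      push Not at hc
      have h4 : k ^ (m' + 1) ≤ k ^ m := Nat.pow_le_pow_right (by omega) hc
      rw [pow_succ] at h4
      nlinarith [Nat.mul_le_mul_left (k ^ m') hk]
    have hsq : ((k : ℤ) ^ (k ^ m)) ^ 2 = (k : ℤ) ^ (2 * k ^ m) := by
      rw [← pow_mul]; congr 1; ring
    have h1 : ((k : ℤ) ^ (k ^ m)) < (k : ℤ) ^ (2 * k ^ m) := hpw.2 (by have := hpos m; omega)
    rw [hsq]
    constructor
    · rintro rfl
      left
      refine ⟨hx, ⟨_, ⟨m, rfl⟩, rfl⟩, h1, ?_⟩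
      rintro ⟨z, ⟨_, ⟨m', rfl⟩, rfl⟩, h2, h3⟩
      rw [hpw] at h2 h3
      have := Nat.pow_le_pow_right (n := k) (by omega) (hgap m' h2)
      omega
    · rintro (⟨-, ⟨_, ⟨m', rfl⟩, rfl⟩, h2, h3⟩ | ⟨h2, -⟩)
      · rw [hpw] at h2
        have h4 := Nat.pow_le_pow_right (n := k) (by omega) (hgap m' h2)
        by_contra hne
        apply h3
        refine ⟨_, ⟨_, ⟨m, rfl⟩, rfl⟩, h1, ?_⟩
        rw [hpw]
        rcases h4.lt_or_eq with h5 | h5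
        · omega
        · rw [h5] at hne; exact absurd rfl hne
      · exact absurd hx h2
  · rw [hg2 x (fun h => hx (hU.2 h))]
    constructor
    · rintro rfl; exact Or.inr ⟨hx, rfl⟩
    · rintro (⟨h, -⟩ | ⟨-, rfl⟩)
      · exact absurd h hx
      · rfl

lemma df_g {i j t : ℕ} (hi : i < t) (hj : j < t) (ht : t + 2 < R) :
    Df k R 2 (fun p => g (p i) = p j) := by
  have hR : 1 ≤ R := by omega
  have hU := (df_U (k := k) (R := R) (i := i) (by omega)).mono hR (show 0 ≤ 2 by omega)
  have hV := (df_V (k := k) (R := R) (i := j) (by omega)).mono hR (show 0 ≤ 2 by omega)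
  have hL := (df_lt (k := k) (R := R) hi hj (by omega)).mono hR (show 1 ≤ 2 by omega)
  have hZ := (df_zero (k := k) (R := R) (i := j) (by omega)).mono hR (show 0 ≤ 2 by omega)
  have hE := (((df_V (k := k) (R := R) (i := t) (by omega)).mono hR (show 0 ≤ 1 by omega)).and
    ((df_lt (k := k) (R := R) (i := i) (j := t) (t := t + 1) (by omega) (by omega)
      (by omega)).and
    (df_lt (k := k) (R := R) (i := t) (j := j) (t := t + 1) (by omega) (by omega)
      (by omega)))).ex (j := t) (by omega)
  refine ((hU.and (hV.and (hL.and hE.not))).or (hU.not.and hZ)).congr fun p => ?_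
  rw [g_char hk hg1 hg2]
  simp only [Function.update_self, Function.update_of_ne hi.ne, Function.update_of_ne hj.ne]

end

/-- size of terms -/
def tsz {α : Type} : L.Term α → ℕ
  | .var _ => 4
  | .func _ ts => 4 + ∑ i, tsz (ts i)

lemma tsz_pos {α : Type} (t : L.Term α) : 4 ≤ tsz t := by
  cases t <;> simp [tsz]

/-- value of terms -/
def tval (g : ℤ → ℤ) {d : ℕ} (t : L.Term (Empty ⊕ Fin d)) (p : ℕ → ℤ) : ℤ :=
  @Term.realize L ℤ (S g) _ (Sum.elim (default : Empty → ℤ) (fun i : Fin d => p i)) t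

lemma tval_congr (g : ℤ → ℤ) {d : ℕ} (t : L.Term (Empty ⊕ Fin d)) {p q : ℕ → ℤ}
    (h : ∀ i < d, p i = q i) : tval g t p = tval g t q := by
  unfold tval
  congr 2
  funext i
  exact h i i.2

lemma tval_update (g : ℤ → ℤ) {d j : ℕ} (t : L.Term (Empty ⊕ Fin d)) (p : ℕ → ℤ) (x : ℤ)
    (h : d ≤ j) : tval g t (Function.update p j x) = tval g t p :=
  tval_congr g t fun i hi => by rw [Function.update_of_ne (by omega)]

lemma tval_var (g : ℤ → ℤ) {d : ℕ} (i : Fin d) (p : ℕ → ℤ) :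
    tval g (.var (.inr i)) p = p i := rfl

lemma tval_one (g : ℤ → ℤ) {d : ℕ} (f : L.Functions 1) (ts : Fin 1 → L.Term (Empty ⊕ Fin d))
    (p : ℕ → ℤ) : tval g (.func f ts) p = g (tval g (ts 0) p) := rfl

lemma tval_two (g : ℤ → ℤ) {d : ℕ} (f : L.Functions 2) (ts : Fin 2 → L.Term (Empty ⊕ Fin d))
    (p : ℕ → ℤ) : tval g (.func f ts) p = tval g (ts 0) p + tval g (ts 1) p := rfl

/-- induction principle for terms of `L` -/
lemma term_ind {d : ℕ} {C : L.Term (Empty ⊕ Fin d) → Prop} (h0 : ∀ i, C (.var (.inr i)))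
    (h1 : ∀ (f : L.Functions 1) ts, C (ts 0) → C (.func f ts))
    (h2 : ∀ (f : L.Functions 2) ts, C (ts 0) → C (ts 1) → C (.func f ts)) (t) : C t := by
  induction t with
  | var i =>
    rcases i with i | i
    · exact i.elim
    · exact h0 i
  | @func l f ts ih =>
    match l, f with
    | 0, f => exact Empty.elim f
    | 1, f => exact h1 f ts (ih 0)
    | 2, f => exact h2 f ts (ih 0) (ih 1)
    | n + 3, f => exact Empty.elim f

section
variable {k R : ℕ} (hk : 2 ≤ k) {g : ℤ → ℤ}
  (hg1 : ∀ n : ℤ, (∃ m : ℕ, n = (k : ℤ) ^ (k ^ m)) → g n = n ^ 2)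
  (hg2 : ∀ n : ℤ, (¬ ∃ m : ℕ, n = (k : ℤ) ^ (k ^ m)) → g n = 0)
include hk hg1 hg2

lemma df_term {d : ℕ} (t : L.Term (Empty ⊕ Fin d)) :
    ∀ j, d ≤ j → j + tsz t < R → Df k R (tsz t) (fun p => tval g t p = p j) := by
  induction t using term_ind with
  | h0 i =>
    intro j hj hR
    simp only [tsz] at hR ⊢
    have hi := i.2
    exact (df_eq (t := j + 1) (by omega) (by omega) (by omega)).mono (by omega) (by omega)
  | h1 f ts ih =>
    intro j hj hR
    simp only [tsz, Fin.sum_univ_one] at hR ⊢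
    have h1 := (ih (j + 1) (by omega) (by omega)).mono (by omega)
      (show tsz (ts 0) ≤ tsz (ts 0) + 2 by omega)
    have h2 := (df_g hk hg1 hg2 (R := R) (i := j + 1) (j := j) (t := j + 2) (by omega) (by omega)
      (by omega)).mono (by omega) (show 2 ≤ tsz (ts 0) + 2 by omega)
    refine (((h1.and h2).ex (j := j + 1) (by omega)).mono (by omega)
      (show _ ≤ 4 + tsz (ts 0) by omega)).congr fun p => ?_
    simp only [tval_update g (ts 0) p _ (show d ≤ j + 1 by omega), Function.update_self,
      Function.update_of_ne (show j ≠ j + 1 by omega), tval_one]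
    simp
  | h2 f ts ih1 ih2 =>
    intro j hj hR
    simp only [tsz, Fin.sum_univ_two] at hR ⊢
    have h1 := (ih1 (j + 1) (by omega) (by omega)).mono (by omega)
      (show tsz (ts 0) ≤ tsz (ts 0) + tsz (ts 1) by omega)
    have h2 := (ih2 (j + 2) (by omega) (by omega)).mono (by omega)
      (show tsz (ts 1) ≤ tsz (ts 0) + tsz (ts 1) by omega)
    have h3 := (df_add (k := k) (R := R) (i := j + 1) (j := j + 2) (l := j) (by omega)
      (by omega) (by omega)).mono (by omega) (show 0 ≤ tsz (ts 0) + tsz (ts 1) by omega)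
    refine ((((h1.and (h2.and h3)).ex (j := j + 2) (by omega)).ex (j := j + 1)
      (by omega)).mono (by omega) (show _ ≤ 4 + (tsz (ts 0) + tsz (ts 1)) by omega)).congr
      fun p => ?_
    simp only [tval_update g _ _ _ (show d ≤ j + 1 by omega),
      tval_update g _ _ _ (show d ≤ j + 2 by omega), Function.update_self,
      Function.update_of_ne (show j ≠ j + 1 by omega),
      Function.update_of_ne (show j ≠ j + 2 by omega),
      Function.update_of_ne (show j + 1 ≠ j + 2 by omega), tval_two]
    simp

end

/-- size of formulas -/
def fsz : {d : ℕ} → L.BoundedFormula Empty d → ℕ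
  | _, .falsum => 1
  | _, .equal t₁ t₂ => tsz t₁ + tsz t₂
  | _, .rel _ ts => 1 + ∑ i, tsz (ts i)
  | _, .imp f₁ f₂ => fsz f₁ + fsz f₂
  | _, .all f => fsz f + 1

/-- truth of formulas -/
def fval (g : ℤ → ℤ) {d : ℕ} (φ : L.BoundedFormula Empty d) (p : ℕ → ℤ) : Prop :=
  @BoundedFormula.Realize L ℤ (S g) _ _ φ (default : Empty → ℤ) (fun i : Fin d => p i)

lemma fval_congr (g : ℤ → ℤ) {d : ℕ} (φ : L.BoundedFormula Empty d) {p q : ℕ → ℤ}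
    (h : ∀ i < d, p i = q i) : fval g φ p ↔ fval g φ q := by
  unfold fval
  have : (fun i : Fin d => p i) = (fun i : Fin d => q i) := funext fun i => h i i.2
  rw [this]

lemma fval_falsum (g : ℤ → ℤ) {d : ℕ} (p : ℕ → ℤ) :
    ¬ fval g (.falsum : L.BoundedFormula Empty d) p := fun h => h

lemma fval_equal (g : ℤ → ℤ) {d : ℕ} (t₁ t₂ : L.Term (Empty ⊕ Fin d)) (p : ℕ → ℤ) :
    fval g (.equal t₁ t₂) p ↔ tval g t₁ p = tval g t₂ p := Iff.rfl

lemma fval_rel (g : ℤ → ℤ) {d : ℕ} (r : L.Relations 2) (ts : Fin 2 → L.Term (Empty ⊕ Fin d))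
    (p : ℕ → ℤ) : fval g (.rel r ts) p ↔ tval g (ts 0) p < tval g (ts 1) p := Iff.rfl

lemma fval_imp (g : ℤ → ℤ) {d : ℕ} (φ ψ : L.BoundedFormula Empty d) (p : ℕ → ℤ) :
    fval g (.imp φ ψ) p ↔ (fval g φ p → fval g ψ p) := Iff.rfl

lemma fval_all (g : ℤ → ℤ) {d : ℕ} (φ : L.BoundedFormula Empty (d + 1)) (p : ℕ → ℤ) :
    fval g (.all φ) p ↔ ∀ x, fval g φ (Function.update p d x) := by
  have : ∀ x : ℤ, (fun i : Fin (d + 1) => Function.update p d x i) =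
      Fin.snoc (fun i : Fin d => p i) x := by
    intro x
    funext i
    refine Fin.lastCases ?_ (fun i => ?_) i
    · simp
    · have := i.2
      simp [Function.update_of_ne (show (i : ℕ) ≠ d by omega)]
  unfold fval
  simp only [this]
  exact Iff.rfl

/-- induction principle for formulas of `L` -/
lemma form_ind {C : ∀ d, L.BoundedFormula Empty d → Prop} (h0 : ∀ d, C d .falsum)
    (h1 : ∀ d t₁ t₂, C d (.equal t₁ t₂))
    (h2 : ∀ d (r : L.Relations 2) ts, C d (.rel r ts))
    (h3 : ∀ d φ ψ, C d φ → C d ψ → C d (.imp φ ψ))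
    (h4 : ∀ d φ, C (d + 1) φ → C d (.all φ)) (d) (φ) : C d φ := by
  induction φ with
  | falsum => exact h0 _
  | equal t₁ t₂ => exact h1 _ _ _
  | @rel d l r ts =>
    match l, r with
    | 0, r => exact Empty.elim r
    | 1, r => exact Empty.elim r
    | 2, r => exact h2 _ r ts
    | n + 3, r => exact Empty.elim r
  | imp φ ψ ih1 ih2 => exact h3 _ _ _ ih1 ih2
  | all φ ih => exact h4 _ _ ih

section
variable {k R : ℕ} (hk : 2 ≤ k) {g : ℤ → ℤ}
  (hg1 : ∀ n : ℤ, (∃ m : ℕ, n = (k : ℤ) ^ (k ^ m)) → g n = n ^ 2)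
  (hg2 : ∀ n : ℤ, (¬ ∃ m : ℕ, n = (k : ℤ) ^ (k ^ m)) → g n = 0)
include hk hg1 hg2

lemma df_form (d : ℕ) (φ : L.BoundedFormula Empty d) :
    d + fsz φ < R → Df k R (fsz φ) (fun p => fval g φ p) := by
  induction d, φ using form_ind with
  | h0 d =>
    intro _
    exact ⟨fun p q _ => iff_of_false (fval_falsum g p) (fval_falsum g q),
      fun p q _ => iff_of_false (fval_falsum g p) (fval_falsum g q)⟩
  | h1 d t₁ t₂ =>
    intro hR
    simp only [fsz] at hR ⊢
    have a1 := tsz_pos t₁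
    have a2 := tsz_pos t₂
    have h1 := (df_term hk hg1 hg2 t₁ (R := R) d le_rfl (by omega)).mono (by omega)
      (show tsz t₁ ≤ tsz t₁ + tsz t₂ - 1 by omega)
    have h2 := (df_term hk hg1 hg2 t₂ (R := R) d le_rfl (by omega)).mono (by omega)
      (show tsz t₂ ≤ tsz t₁ + tsz t₂ - 1 by omega)
    refine (((h1.and h2).ex (j := d) (by omega)).mono (by omega)
      (show _ ≤ tsz t₁ + tsz t₂ by omega)).congr fun p => ?_
    simp only [tval_update g _ _ _ (le_refl d), Function.update_self, fval_equal]
    simp [eq_comm]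
  | h2 d r ts =>
    intro hR
    simp only [fsz, Fin.sum_univ_two] at hR ⊢
    have a1 := tsz_pos (ts 0)
    have a2 := tsz_pos (ts 1)
    have h1 := (df_term hk hg1 hg2 (ts 0) (R := R) d le_rfl (by omega)).mono (by omega)
      (show tsz (ts 0) ≤ tsz (ts 0) + tsz (ts 1) - 1 by omega)
    have h2 := (df_term hk hg1 hg2 (ts 1) (R := R) (d + 1) (by omega) (by omega)).mono (by omega)
      (show tsz (ts 1) ≤ tsz (ts 0) + tsz (ts 1) - 1 by omega)
    have h3 := (df_lt (k := k) (R := R) (i := d) (j := d + 1) (t := d + 2) (by omega)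
      (by omega) (by omega)).mono (by omega) (show 1 ≤ tsz (ts 0) + tsz (ts 1) - 1 by omega)
    refine ((((h1.and (h2.and h3)).ex (j := d + 1) (by omega)).ex (j := d)
      (by omega)).mono (by omega) (show _ ≤ 1 + (tsz (ts 0) + tsz (ts 1)) by omega)).congr
      fun p => ?_
    simp only [tval_update g _ _ _ (show d ≤ d + 1 by omega),
      tval_update g _ _ _ (le_refl d), Function.update_self,
      Function.update_of_ne (show d ≠ d + 1 by omega), fval_rel]
    simp
  | h3 d φ ψ ih1 ih2 =>
    intro hR
    simp only [fsz] at hR ⊢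
    have h1 := (ih1 (by omega)).mono (by omega) (show fsz φ ≤ fsz φ + fsz ψ by omega)
    have h2 := (ih2 (by omega)).mono (by omega) (show fsz ψ ≤ fsz φ + fsz ψ by omega)
    refine (h1.not.or h2).congr fun p => ?_
    rw [fval_imp, imp_iff_not_or]
  | h4 d φ ih =>
    intro hR
    simp only [fsz] at hR ⊢
    refine ((ih (by omega)).all (j := d) (by omega)).congr fun p => ?_
    rw [fval_all]

open Nat in
/-- Quantifiers can be bounded. -/
theorem bounded_all {N d : ℕ} (ψ : L.BoundedFormula Empty (d + 1)) (hR : d + 1 + fsz ψ < R)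
    (hN : cardBound R R ≤ N) (a : ℕ) (p : ℕ → ℤ)
    (hp : ∀ i, -(k : ℤ) ^ (k ^ a) ≤ p i ∧ p i < (k : ℤ) ^ (k ^ a)) :
    fval g (.all ψ) p ↔ ∀ x, (-(k : ℤ) ^ (k ^ (a + (N + N ! + (N !)! * N))) ≤ x ∧
      x < (k : ℤ) ^ (k ^ (a + (N + N ! + (N !)! * N)))) → fval g ψ (Function.update p d x) := by
  rw [fval_all]
  constructor
  · intro h x _; exact h x
  · intro h c
    have hD := df_form hk hg1 hg2 (R := R) _ ψ (by omega)
    obtain ⟨x, hx, hx'⟩ := mainBound hk (R := R) (n := fsz ψ) (N := N) (j := d) (by omega)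
      ((cardBound_mono R (by omega) (by omega)).trans hN) a hp c
    exact (hD.2 _ _ hx').2 (h x hx)
end

/-! ### Codes -/

lemma encode_map_encode {α : Type} [Encodable α] (l : List α) :
    Encodable.encode (l.map Encodable.encode) = Encodable.encode l := by
  induction l with
  | nil => rfl
  | cons a l ih => simp [Encodable.encode_list_cons, ih]

/-- tokens of a term -/
def ttoks {d : ℕ} (t : L.Term (Empty ⊕ Fin d)) : List ℕ := t.listEncode.map Encodable.encode

/-- tokens of a formula -/
def ftoks {d : ℕ} (f : L.BoundedFormula Empty d) : List ℕ := f.listEncode.map Encodable.encode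

lemma encode_ttoks {d : ℕ} (t : L.Term (Empty ⊕ Fin d)) :
    Encodable.encode (ttoks t) = Encodable.encode t := encode_map_encode _

lemma encode_ftoks (f : L.Sentence) :
    Encodable.encode (ftoks f) = Encodable.encode f := encode_map_encode _

def gTok : ℕ := 2 * Nat.pair 1 0 + 1
def pTok : ℕ := 2 * Nat.pair 2 0 + 1
def rTok : ℕ := 2 * (2 * Nat.pair 2 0) + 1

lemma ttoks_var {d : ℕ} (i : Fin d) : ttoks (.var (.inr i)) = [4 * (i : ℕ) + 2] := by
  simp only [ttoks, Term.listEncode, List.map_cons, List.map_nil]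
  congr 1
  change 2 * (2 * (i : ℕ) + 1) = _
  ring

lemma ttoks_one {d : ℕ} (f : L.Functions 1) (ts : Fin 1 → L.Term (Empty ⊕ Fin d)) :
    ttoks (.func f ts) = gTok :: ttoks (ts 0) := by
  simp only [ttoks, Term.listEncode, List.map_cons]
  congr 1
  simp [List.finRange]

lemma ttoks_two {d : ℕ} (f : L.Functions 2) (ts : Fin 2 → L.Term (Empty ⊕ Fin d)) :
    ttoks (.func f ts) = pTok :: (ttoks (ts 0) ++ ttoks (ts 1)) := by
  simp only [ttoks, Term.listEncode, List.map_cons]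
  congr 1
  simp [List.finRange]

lemma ftoks_falsum (d : ℕ) : ftoks (.falsum : L.BoundedFormula Empty d) = [4 * (d + 2) + 3] := by
  simp only [ftoks, BoundedFormula.listEncode, List.map_cons, List.map_nil]
  congr 1
  change 2 * (2 * (d + 2) + 1) + 1 = _
  ring

lemma ftoks_equal {d : ℕ} (t₁ t₂ : L.Term (Empty ⊕ Fin d)) :
    ftoks (.equal t₁ t₂) =
      [2 * Nat.pair d (Encodable.encode t₁), 2 * Nat.pair d (Encodable.encode t₂)] := rfl

lemma ftoks_rel {d : ℕ} (r : L.Relations 2) (ts : Fin 2 → L.Term (Empty ⊕ Fin d)) :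
    ftoks (.rel r ts) = [rTok, 4 * d + 3,
      2 * Nat.pair d (Encodable.encode (ts 0)), 2 * Nat.pair d (Encodable.encode (ts 1))] := by
  have h : 4 * d + 3 = 2 * (2 * d + 1) + 1 := by ring
  rw [h]
  rfl

lemma ftoks_imp {d : ℕ} (f₁ f₂ : L.BoundedFormula Empty d) :
    ftoks (.imp f₁ f₂) = 3 :: (ftoks f₁ ++ ftoks f₂) := by
  simp only [ftoks, BoundedFormula.listEncode, List.map_cons, List.map_append,
    List.cons_append]
  congr 1

lemma ftoks_all {d : ℕ} (f : L.BoundedFormula Empty (d + 1)) :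
    ftoks (.all f) = 7 :: ftoks f := by
  simp only [ftoks, BoundedFormula.listEncode, List.map_cons]
  congr 1

/-! ### Sizes of codes -/

/-- weight of a list -/
def wt (l : List ℕ) : ℕ := l.sum + l.length

lemma wt_cons (a : ℕ) (l : List ℕ) : wt (a :: l) = a + 1 + wt l := by simp [wt]; ring
lemma wt_append (l l' : List ℕ) : wt (l ++ l') = wt l + wt l' := by simp [wt]; ring
lemma wt_nil : wt [] = 0 := rfl

lemma encode_cons (a : ℕ) (l : List ℕ) :
    Encodable.encode (a :: l) = Nat.pair a (Encodable.encode l) + 1 := rfl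

lemma wt_le (l : List ℕ) : wt l ≤ Encodable.encode l := by
  induction l with
  | nil => simp [wt]
  | cons a l ih =>
    rw [wt_cons, encode_cons]
    have := Nat.add_le_pair a (Encodable.encode l)
    omega

lemma lt_encode_cons (a : ℕ) (l : List ℕ) : Encodable.encode l < Encodable.encode (a :: l) := by
  rw [encode_cons]
  have := Nat.add_le_pair a (Encodable.encode l)
  omega

lemma encode_le_append_right (l l' : List ℕ) :
    Encodable.encode l' ≤ Encodable.encode (l ++ l') := by
  induction l with
  | nil => simp
  | cons a l ih => exact ih.trans (lt_encode_cons a _).le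

lemma encode_le_append_left (l l' : List ℕ) :
    Encodable.encode l ≤ Encodable.encode (l ++ l') := by
  induction l with
  | nil => simp
  | cons a l ih =>
    rw [List.cons_append, encode_cons, encode_cons]
    have : Nat.pair a (Encodable.encode l) ≤ Nat.pair a (Encodable.encode (l ++ l')) := by
      rcases ih.lt_or_eq with h | h
      · exact (Nat.pair_lt_pair_right a h).le
      · rw [h]
    omega

lemma tsz_le {d : ℕ} (t : L.Term (Empty ⊕ Fin d)) : tsz t ≤ 4 * wt (ttoks t) := by
  induction t using term_ind with
  | h0 i => rw [ttoks_var, wt_cons, tsz]; omega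
  | h1 f ts ih => rw [ttoks_one, wt_cons, tsz, Fin.sum_univ_one]; omega
  | h2 f ts ih1 ih2 => rw [ttoks_two, wt_cons, wt_append, tsz, Fin.sum_univ_two]; omega

lemma tsz_le' {d : ℕ} (t : L.Term (Empty ⊕ Fin d)) :
    tsz t ≤ 4 * (2 * Nat.pair d (Encodable.encode t)) := by
  have h1 := tsz_le t
  have h2 := wt_le (ttoks t)
  rw [encode_ttoks] at h2
  have := Nat.add_le_pair d (Encodable.encode t)
  omega

lemma fsz_le (d : ℕ) (f : L.BoundedFormula Empty d) : fsz f ≤ 4 * wt (ftoks f) := by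
  induction d, f using form_ind with
  | h0 d => rw [ftoks_falsum, wt_cons, fsz]; omega
  | h1 d t₁ t₂ =>
    have := tsz_le' t₁
    have := tsz_le' t₂
    rw [ftoks_equal, wt_cons, wt_cons, fsz]; omega
  | h2 d r ts =>
    have := tsz_le' (ts 0)
    have := tsz_le' (ts 1)
    rw [ftoks_rel, wt_cons, wt_cons, wt_cons, wt_cons, fsz, Fin.sum_univ_two]; omega
  | h3 d f₁ f₂ ih1 ih2 => rw [ftoks_imp, wt_cons, wt_append, fsz]; omega
  | h4 d f ih => rw [ftoks_all, wt_cons, fsz]; omega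

/-! ### Tables -/

/-- course of values -/
def tbl {σ : Type} (step : List σ → σ) : ℕ → List σ
  | 0 => []
  | n + 1 => tbl step n ++ [step (tbl step n)]

lemma tbl_length {σ : Type} (step : List σ → σ) (n : ℕ) : (tbl step n).length = n := by
  induction n with
  | zero => rfl
  | succ n ih => simp [tbl, ih]

lemma tbl_get {σ : Type} (step : List σ → σ) (x : σ) {m n : ℕ} (h : m < n) :
    (tbl step n).getD m x = step (tbl step m) := by
  induction n with
  | zero => omega
  | succ n ih =>
    rw [tbl]
    rcases (Nat.lt_succ_iff.1 h).lt_or_eq with h' | rfl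
    · rw [List.getD_append _ _ _ _ (by rw [tbl_length]; exact h'), ih h']
    · rw [List.getD_append_right _ _ _ _ (by rw [tbl_length]), tbl_length]
      simp

/-- selection of the elements of a list -/
noncomputable def sel {α : Type} (l : List α) (P : α → Prop) : List α :=
  open scoped Classical in l.flatMap fun e => if P e then [e] else []

lemma mem_sel {α : Type} {l : List α} {P : α → Prop} {e : α} : e ∈ sel l P ↔ e ∈ l ∧ P e := by
  simp only [sel, List.mem_flatMap]
  constructor
  · rintro ⟨a, ha, h⟩
    split at h
    · simp at h; subst h; exact ⟨ha, by assumption⟩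
    · simp at h
  · rintro ⟨h1, h2⟩
    exact ⟨e, h1, by simp [h2]⟩

/-- conditional singleton / empty list -/
noncomputable def cnd {α : Type} (P : Prop) (l : List α) : List α :=
  open scoped Classical in if P then l else []

lemma mem_cnd {α : Type} {l : List α} {P : Prop} {e : α} : e ∈ cnd P l ↔ P ∧ e ∈ l := by
  unfold cnd
  split <;> simp [*]

section prim
variable {α β σ τ : Type} [Primcodable α] [Primcodable β] [Primcodable σ] [Primcodable τ]

lemma pr_tbl {step : α → List σ → σ} (h : Primrec₂ step) :
    Primrec₂ (fun a n => tbl (step a) n) := by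
  have := Primrec.nat_rec (α := α) (β := List σ) (f := fun _ => [])
    (g := fun a x => x.2 ++ [step a x.2]) (Primrec.const _)
    (Primrec.list_append.comp (Primrec.snd.comp Primrec.snd) (Primrec.list_cons.comp
      (h.comp Primrec.fst (Primrec.snd.comp Primrec.snd)) (Primrec.const []))).to₂
  refine this.of_eq fun a n => ?_
  induction n with
  | zero => rfl
  | succ n ih => simp only [tbl, ← ih]

lemma pr_cnd {P : α → Prop} {f : α → List β} (hP : PrimrecPred P) (hf : Primrec f) :
    Primrec fun a => cnd (P a) (f a) := by
  classical
  have := Primrec.ite hP hf (Primrec.const [])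
  refine this.of_eq fun a => ?_
  unfold cnd
  congr

lemma pr_flatMap {f : α → List β} {h : α → β → List σ} (hf : Primrec f)
    (hh : Primrec fun x : α × β => h x.1 x.2) : Primrec fun a => (f a).flatMap (h a) :=
  Primrec.list_flatMap hf hh.to₂

lemma pr_sel {f : α → List β} {P : α → β → Prop} (hf : Primrec f)
    (hP : PrimrecPred fun x : α × β => P x.1 x.2) : Primrec fun a => sel (f a) (P a) := by
  classical
  have := pr_flatMap (h := fun a e => if P a e then [e] else []) hf (Primrec.ite hP (Primrec.list_cons.comp Primrec.snd (Primrec.const []))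
    (Primrec.const []))
  refine this.of_eq fun a => ?_
  unfold sel
  congr

lemma pp_ex {f : α → List β} {P : α → β → Prop} (hf : Primrec f)
    (hP : PrimrecPred fun x : α × β => P x.1 x.2) : PrimrecPred fun a => ∃ b ∈ f a, P a b := by
  have h := PrimrecPred.not (Primrec.eq.comp (Primrec.list_length.comp (pr_sel hf hP))
    (Primrec.const 0))
  refine h.of_eq fun a => ?_
  rw [List.length_eq_zero_iff, List.eq_nil_iff_forall_not_mem]
  simp only [mem_sel]
  push Not
  rfl

lemma pp_all {f : α → List β} {P : α → β → Prop} (hf : Primrec f)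
    (hP : PrimrecPred fun x : α × β => P x.1 x.2) : PrimrecPred fun a => ∀ b ∈ f a, P a b := by
  have h := (pp_ex (P := fun a b => ¬ P a b) hf hP.not).not
  refine h.of_eq fun a => ?_
  push Not
  rfl

lemma pp_mem {f : α → List β} {h : α → β} (hf : Primrec f) (hh : Primrec h) :
    PrimrecPred fun a => h a ∈ f a := by
  classical
  have := pp_ex (P := fun a b => b = h a) hf (Primrec.eq.comp Primrec.snd (hh.comp Primrec.fst))
  refine this.of_eq fun a => ?_
  simp

end prim

/-! ### Values, environments and terms -/

def gS : L.Functions 1 := Unit.unit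
def pS : L.Functions 2 := Unit.unit
def rS : L.Relations 2 := Unit.unit

abbrev Zp := ℕ × ℕ
abbrev Ev := List Zp

def zv (v : Zp) : ℤ := (v.1 : ℤ) - v.2
def val (e : Ev) (i : ℕ) : ℤ := zv (e.getD i (0, 0))

/-- decoding of lists -/
def dl (n : ℕ) : List ℕ := Denumerable.ofNat (List ℕ) n

lemma dl_encode (l : List ℕ) : dl (Encodable.encode l) = l := Denumerable.ofNat_encode l
lemma encode_dl (n : ℕ) : Encodable.encode (dl n) = n := Denumerable.encode_ofNat n

noncomputable def Gz (k : ℕ) (v : Zp) : Zp :=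
  open scoped Classical in
  if ∃ m ∈ List.range (v.1 + 1), v.1 = v.2 + k ^ (k ^ m) then
    ((v.1 - v.2) * (v.1 - v.2), 0) else (0, 0)

lemma zv_Gz {k : ℕ} (hk : 2 ≤ k) {g : ℤ → ℤ}
    (hg1 : ∀ n : ℤ, (∃ m : ℕ, n = (k : ℤ) ^ (k ^ m)) → g n = n ^ 2)
    (hg2 : ∀ n : ℤ, (¬ ∃ m : ℕ, n = (k : ℤ) ^ (k ^ m)) → g n = 0) (v : Zp) :
    zv (Gz k v) = g (zv v) := by
  obtain ⟨a, b⟩ := v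
  unfold Gz
  split
  · rename_i h
    obtain ⟨m, -, h⟩ := h
    simp only at h
    rw [hg1 (zv (a, b)) ⟨m, by simp [zv, h]⟩]
    simp only [zv]
    rw [h, Nat.add_sub_cancel_left]
    push_cast
    ring
  · rename_i h
    rw [hg2]
    · simp [zv]
    · rintro ⟨m, hm⟩
      have h1 : a = b + k ^ (k ^ m) := by
        simp only [zv] at hm
        have : (a : ℤ) = b + (k : ℤ) ^ (k ^ m) := by linarith
        exact_mod_cast this
      refine h ⟨m, ?_, h1⟩
      have h2 : m < k ^ m := Nat.lt_pow_self (by omega)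
      have h3 : k ^ m < k ^ (k ^ m) := Nat.lt_pow_self (by omega)
      simp only [List.mem_range]
      omega

noncomputable def tstep (k : ℕ) (a : ℕ × Ev) (prev : List (List Zp)) : List Zp :=
  ((List.range a.1).flatMap fun i => cnd (dl prev.length = [4 * i + 2]) [a.2.getD i (0, 0)]) ++
  (((List.range prev.length).flatMap fun c1 => cnd (dl prev.length = gTok :: dl c1)
    ((prev.getD c1 []).map (Gz k))) ++
  ((List.range prev.length).flatMap fun c1 => (List.range prev.length).flatMap fun c2 =>
    cnd (dl prev.length = pTok :: (dl c1 ++ dl c2))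
    ((prev.getD c1 []).flatMap fun v => (prev.getD c2 []).map fun w =>
      (v.1 + w.1, v.2 + w.2))))

noncomputable def TV (k : ℕ) (a : ℕ × Ev) (c : ℕ) : List Zp := tstep k a (tbl (tstep k a) c)

lemma mem_TV {k : ℕ} {a : ℕ × Ev} {c : ℕ} {u : Zp} : u ∈ TV k a c ↔
    (∃ i < a.1, dl c = [4 * i + 2] ∧ u = a.2.getD i (0, 0)) ∨
    (∃ c1 < c, dl c = gTok :: dl c1 ∧ ∃ v ∈ TV k a c1, u = Gz k v) ∨
    (∃ c1 < c, ∃ c2 < c, dl c = pTok :: (dl c1 ++ dl c2) ∧ ∃ v ∈ TV k a c1, ∃ w ∈ TV k a c2,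
      u = (v.1 + w.1, v.2 + w.2)) := by
  rw [TV, tstep]
  simp only [List.mem_append, List.mem_flatMap, mem_cnd, tbl_length, List.mem_range,
    List.mem_singleton, List.mem_map]
  refine or_congr Iff.rfl (or_congr ?_ ?_)
  · refine exists_congr fun c1 => and_congr_right fun h => and_congr_right fun _ => ?_
    rw [tbl_get _ _ h]
    exact exists_congr fun v => and_congr_right fun _ => eq_comm
  · refine exists_congr fun c1 => and_congr_right fun h1 => exists_congr fun c2 =>
      and_congr_right fun h2 => and_congr_right fun _ => ?_
    rw [tbl_get _ _ h1, tbl_get _ _ h2]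
    exact exists_congr fun v => and_congr_right fun _ => exists_congr fun w =>
      and_congr_right fun _ => eq_comm

lemma dl_lt_cons {c c1 a : ℕ} {l : List ℕ} (h : dl c = a :: l) (h1 : dl c1 = l) : c1 < c := by
  have := lt_encode_cons a l
  rw [← h, ← h1, encode_dl, encode_dl] at this
  exact this

lemma ttoks_inj {d : ℕ} {t t' : L.Term (Empty ⊕ Fin d)} (h : ttoks t = ttoks t') : t = t' := by
  apply Encodable.encode_injective
  rw [← encode_ttoks, ← encode_ttoks, h]

section
variable {k : ℕ} (hk : 2 ≤ k) {g : ℤ → ℤ}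
    (hg1 : ∀ n : ℤ, (∃ m : ℕ, n = (k : ℤ) ^ (k ^ m)) → g n = n ^ 2)
    (hg2 : ∀ n : ℤ, (¬ ∃ m : ℕ, n = (k : ℤ) ^ (k ^ m)) → g n = 0)
include hk hg1 hg2

lemma TV_sound (d : ℕ) (e : Ev) (c : ℕ) : ∀ u ∈ TV k (d, e) c,
    ∃ t : L.Term (Empty ⊕ Fin d), ttoks t = dl c ∧ zv u = tval g t (val e) := by
  induction c using Nat.strong_induction_on with
  | _ c ih =>
    intro u hu
    rcases mem_TV.1 hu with ⟨i, hi, h, rfl⟩ | ⟨c1, h1, h, v, hv, rfl⟩ |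
      ⟨c1, h1, c2, h2, h, v, hv, w, hw, rfl⟩
    · exact ⟨.var (.inr ⟨i, hi⟩), by rw [ttoks_var, h], by rw [tval_var]; rfl⟩
    · obtain ⟨t, ht, htv⟩ := ih c1 h1 v hv
      refine ⟨.func gS (fun _ => t), by rw [ttoks_one, ht, h], ?_⟩
      rw [tval_one, zv_Gz hk hg1 hg2, htv]
    · obtain ⟨t, ht, htv⟩ := ih c1 h1 v hv
      obtain ⟨s, hs, hsv⟩ := ih c2 h2 w hw
      refine ⟨.func pS ![t, s], ?_, ?_⟩
      · rw [ttoks_two, h, ← ht, ← hs]; rfl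
      · rw [tval_two]
        simp only [Matrix.cons_val_zero, Matrix.cons_val_one]
        rw [← htv, ← hsv]
        simp only [zv]
        push_cast
        ring

omit hk hg1 hg2 in
lemma TV_complete {d : ℕ} (e : Ev) (t : L.Term (Empty ⊕ Fin d)) :
    ∀ c, ttoks t = dl c → ∃ u, u ∈ TV k (d, e) c := by
  induction t using term_ind with
  | h0 i => exact fun c h => ⟨_, mem_TV.2 (Or.inl ⟨i, i.2, by rw [← h, ttoks_var], rfl⟩)⟩
  | h1 f ts ih =>
    intro c h
    have h1 := dl_encode (ttoks (ts 0))
    obtain ⟨v, hv⟩ := ih _ h1.symm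
    rw [ttoks_one] at h
    refine ⟨_, mem_TV.2 (Or.inr (Or.inl ⟨_, dl_lt_cons h.symm h1, ?_, v, hv, rfl⟩))⟩
    rw [h1, h]
  | h2 f ts ih1 ih2 =>
    intro c h
    have h1 := dl_encode (ttoks (ts 0))
    have h2 := dl_encode (ttoks (ts 1))
    obtain ⟨v, hv⟩ := ih1 _ h1.symm
    obtain ⟨w, hw⟩ := ih2 _ h2.symm
    rw [ttoks_two] at h
    have h3 := dl_lt_cons h.symm (dl_encode _)
    refine ⟨_, mem_TV.2 (Or.inr (Or.inr ⟨_, (encode_le_append_left _ _).trans_lt h3, _,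
      (encode_le_append_right _ _).trans_lt h3, ?_, v, hv, w, hw, rfl⟩))⟩
    rw [h1, h2, h]

lemma TV_val {d : ℕ} (e : Ev) {t : L.Term (Empty ⊕ Fin d)} {c : ℕ} (h : ttoks t = dl c) {u : Zp}
    (hu : u ∈ TV k (d, e) c) : zv u = tval g t (val e) := by
  obtain ⟨t', h1, h2⟩ := TV_sound hk hg1 hg2 d e c u hu
  rw [h2, ttoks_inj (h1.trans h.symm)]

lemma TV_eq {d : ℕ} (e : Ev) {t s : L.Term (Empty ⊕ Fin d)} {c c' : ℕ} (h : ttoks t = dl c)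
    (h' : ttoks s = dl c') : (∃ v ∈ TV k (d, e) c, ∃ w ∈ TV k (d, e) c', v.1 + w.2 = w.1 + v.2) ↔
    tval g t (val e) = tval g s (val e) := by
  have key : ∀ v w : Zp, v.1 + w.2 = w.1 + v.2 ↔ zv v = zv w := by
    intro v w; simp only [zv]; omega
  constructor
  · rintro ⟨v, hv, w, hw, hvw⟩
    rwa [key, TV_val hk hg1 hg2 e h hv, TV_val hk hg1 hg2 e h' hw] at hvw
  · intro hh
    obtain ⟨v, hv⟩ := TV_complete e t c h
    obtain ⟨w, hw⟩ := TV_complete e s c' h'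
    refine ⟨v, hv, w, hw, ?_⟩
    rwa [key, TV_val hk hg1 hg2 e h hv, TV_val hk hg1 hg2 e h' hw]

lemma TV_lt {d : ℕ} (e : Ev) {t s : L.Term (Empty ⊕ Fin d)} {c c' : ℕ} (h : ttoks t = dl c)
    (h' : ttoks s = dl c') : (∃ v ∈ TV k (d, e) c, ∃ w ∈ TV k (d, e) c', v.1 + w.2 < w.1 + v.2) ↔
    tval g t (val e) < tval g s (val e) := by
  have key : ∀ v w : Zp, v.1 + w.2 < w.1 + v.2 ↔ zv v < zv w := by
    intro v w; simp only [zv]; omega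
  constructor
  · rintro ⟨v, hv, w, hw, hvw⟩
    rwa [key, TV_val hk hg1 hg2 e h hv, TV_val hk hg1 hg2 e h' hw] at hvw
  · intro hh
    obtain ⟨v, hv⟩ := TV_complete e t c h
    obtain ⟨w, hw⟩ := TV_complete e s c' h'
    refine ⟨v, hv, w, hw, ?_⟩
    rwa [key, TV_val hk hg1 hg2 e h hv, TV_val hk hg1 hg2 e h' hw]
end


def rng (k D j : ℕ) : List Zp :=
  (List.range (k ^ (k ^ (j * D)))).map (fun x => (x, 0)) ++
    (List.range (k ^ (k ^ (j * D)) + 1)).map (fun x => (0, x))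

def envs (k D : ℕ) : ℕ → List Ev
  | 0 => [ [] ]
  | d + 1 => (envs k D d).flatMap fun e => (rng k D (d + 1)).map fun x => e ++ [x]

lemma rng_bd {k D j : ℕ} (hk : 2 ≤ k) {x : Zp} (h : x ∈ rng k D j) :
    -(k : ℤ) ^ (k ^ (j * D)) ≤ zv x ∧ zv x < (k : ℤ) ^ (k ^ (j * D)) := by
  have hp : 0 < k ^ (k ^ (j * D)) := by positivity
  have hc : ((k ^ (k ^ (j * D)) : ℕ) : ℤ) = (k : ℤ) ^ (k ^ (j * D)) := by push_cast; rfl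
  rw [← hc]
  simp only [rng, List.mem_append, List.mem_map, List.mem_range] at h
  rcases h with ⟨a, ha, rfl⟩ | ⟨a, ha, rfl⟩ <;> simp only [zv] <;> omega

lemma rng_surj {k D j : ℕ} {x : ℤ}
    (h : -(k : ℤ) ^ (k ^ (j * D)) ≤ x ∧ x < (k : ℤ) ^ (k ^ (j * D))) :
    ∃ u ∈ rng k D j, zv u = x := by
  have hc : ((k ^ (k ^ (j * D)) : ℕ) : ℤ) = (k : ℤ) ^ (k ^ (j * D)) := by push_cast; rfl
  rw [← hc] at h
  simp only [rng, List.mem_append, List.mem_map, List.mem_range]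
  rcases le_total 0 x with h0 | h0
  · exact ⟨(x.toNat, 0), Or.inl ⟨_, by omega, rfl⟩, by simp only [zv]; omega⟩
  · exact ⟨(0, (-x).toNat), Or.inr ⟨_, by omega, rfl⟩, by simp only [zv]; omega⟩

lemma envs_length {k D d : ℕ} : ∀ e ∈ envs k D d, e.length = d := by
  induction d with
  | zero => simp [envs]
  | succ d ih =>
    intro e he
    simp only [envs, List.mem_flatMap, List.mem_map] at he
    obtain ⟨e', he', x, -, rfl⟩ := he
    simp [ih e' he']

lemma mem_envs_succ {k D d : ℕ} {e : Ev} {x : Zp} (he : e ∈ envs k D d) (hx : x ∈ rng k D (d + 1)) :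
    e ++ [x] ∈ envs k D (d + 1) := by
  simp only [envs, List.mem_flatMap, List.mem_map]
  exact ⟨e, he, x, hx, rfl⟩

lemma val_append_lt {e : Ev} {x : Zp} {i : ℕ} (h : i < e.length) : val (e ++ [x]) i = val e i := by
  rw [val, List.getD_append _ _ _ _ h, val]

lemma val_append_eq {e : Ev} {x : Zp} : val (e ++ [x]) e.length = zv x := by
  rw [val, List.getD_append_right _ _ _ _ le_rfl]; simp

lemma val_ge {e : Ev} {i : ℕ} (h : e.length ≤ i) : val e i = 0 := by
  rw [val, List.getD_eq_default _ _ h]; simp [zv]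

lemma envs_bd {k D d : ℕ} (hk : 2 ≤ k) : ∀ e ∈ envs k D d, ∀ i,
    -(k : ℤ) ^ (k ^ (d * D)) ≤ val e i ∧ val e i < (k : ℤ) ^ (k ^ (d * D)) := by
  induction d with
  | zero =>
    intro e he i
    simp only [envs, List.mem_singleton] at he
    subst he
    have hp : (0 : ℤ) < (k : ℤ) ^ (k ^ (0 * D)) := by positivity
    rw [val_ge (by simp)]
    constructor <;> linarith
  | succ d ih =>
    intro e he i
    simp only [envs, List.mem_flatMap, List.mem_map] at he
    obtain ⟨e', he', x, hx, rfl⟩ := he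
    have hmono : (k : ℤ) ^ (k ^ (d * D)) ≤ (k : ℤ) ^ (k ^ ((d + 1) * D)) := by
      apply pow_le_pow_right₀ (by norm_cast; omega)
      apply Nat.pow_le_pow_right (by omega)
      exact Nat.mul_le_mul_right _ (by omega)
    have hp : (0 : ℤ) < (k : ℤ) ^ (k ^ ((d + 1) * D)) := by positivity
    rcases lt_trichotomy i e'.length with h | h | h
    · rw [val_append_lt h]
      have := ih e' he' i
      constructor <;> linarith
    · rw [h, val_append_eq]
      exact rng_bd hk hx
    · rw [val_ge (by simp; omega)]
      constructor <;> linarith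

lemma fval_append {k D d : ℕ} (g : ℤ → ℤ) {e : Ev} (he : e ∈ envs k D d) (x : Zp)
    (f : L.BoundedFormula Empty (d + 1)) :
    fval g f (val (e ++ [x])) ↔ fval g f (Function.update (val e) d (zv x)) := by
  have hl := envs_length e he
  refine fval_congr g f fun i hi => ?_
  rcases (Nat.lt_succ_iff.1 hi).lt_or_eq with h | rfl
  · rw [Function.update_of_ne h.ne, val_append_lt (by omega)]
  · rw [Function.update_self]
    conv_lhs => rw [← hl]
    exact val_append_eq

/-! ### Formulas -/

abbrev FmT := List (ℕ × List Ev)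

noncomputable def stF (n : ℕ) : FmT :=
  (List.range n).flatMap fun m => cnd (dl n = [4 * (m + 2) + 3]) [(m, [])]

noncomputable def stEq (k D n : ℕ) : FmT :=
  (List.range n).flatMap fun d => (List.range n).flatMap fun c1 => (List.range n).flatMap fun c2 =>
    cnd (dl n = [2 * Nat.pair d c1, 2 * Nat.pair d c2] ∧ TV k (d, []) c1 ≠ [] ∧ TV k (d, []) c2 ≠ [])
      [(d, sel (envs k D d) fun e => ∃ v ∈ TV k (d, e) c1, ∃ w ∈ TV k (d, e) c2,
        v.1 + w.2 = w.1 + v.2)]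

noncomputable def stLt (k D n : ℕ) : FmT :=
  (List.range n).flatMap fun d => (List.range n).flatMap fun c1 => (List.range n).flatMap fun c2 =>
    cnd (dl n = [rTok, 4 * d + 3, 2 * Nat.pair d c1, 2 * Nat.pair d c2] ∧
        TV k (d, []) c1 ≠ [] ∧ TV k (d, []) c2 ≠ [])
      [(d, sel (envs k D d) fun e => ∃ v ∈ TV k (d, e) c1, ∃ w ∈ TV k (d, e) c2,
        v.1 + w.2 < w.1 + v.2)]

noncomputable def stImp (k D : ℕ) (prev : List FmT) : FmT :=
  (List.range prev.length).flatMap fun c1 => (List.range prev.length).flatMap fun c2 =>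
    cnd (dl prev.length = 3 :: (dl c1 ++ dl c2))
      ((prev.getD c1 []).flatMap fun A => (prev.getD c2 []).flatMap fun B =>
        cnd (A.1 = B.1) [(A.1, sel (envs k D A.1) fun e => ¬ e ∈ A.2 ∨ e ∈ B.2)])

noncomputable def stAll (k D : ℕ) (prev : List FmT) : FmT :=
  (List.range prev.length).flatMap fun c1 =>
    cnd (dl prev.length = 7 :: dl c1)
      ((prev.getD c1 []).flatMap fun A =>
        cnd (A.1 ≠ 0) [(A.1 - 1, sel (envs k D (A.1 - 1)) fun e =>
          ∀ x ∈ rng k D A.1, e ++ [x] ∈ A.2)])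

noncomputable def fstep (k D : ℕ) (prev : List FmT) : FmT :=
  stF prev.length ++ (stEq k D prev.length ++ (stLt k D prev.length ++
    (stImp k D prev ++ stAll k D prev)))

noncomputable def Fm (k D c : ℕ) : FmT := fstep k D (tbl (fstep k D) c)

lemma mem_Fm {k D c : ℕ} {X : ℕ × List Ev} : X ∈ Fm k D c ↔
    (∃ m < c, dl c = [4 * (m + 2) + 3] ∧ X = (m, [])) ∨
    (∃ d < c, ∃ c1 < c, ∃ c2 < c, (dl c = [2 * Nat.pair d c1, 2 * Nat.pair d c2] ∧
      TV k (d, []) c1 ≠ [] ∧ TV k (d, []) c2 ≠ []) ∧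
      X = (d, sel (envs k D d) fun e => ∃ v ∈ TV k (d, e) c1, ∃ w ∈ TV k (d, e) c2,
        v.1 + w.2 = w.1 + v.2)) ∨
    (∃ d < c, ∃ c1 < c, ∃ c2 < c, (dl c = [rTok, 4 * d + 3, 2 * Nat.pair d c1, 2 * Nat.pair d c2] ∧
      TV k (d, []) c1 ≠ [] ∧ TV k (d, []) c2 ≠ []) ∧
      X = (d, sel (envs k D d) fun e => ∃ v ∈ TV k (d, e) c1, ∃ w ∈ TV k (d, e) c2,
        v.1 + w.2 < w.1 + v.2)) ∨
    (∃ c1 < c, ∃ c2 < c, dl c = 3 :: (dl c1 ++ dl c2) ∧ ∃ A ∈ Fm k D c1, ∃ B ∈ Fm k D c2,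
      A.1 = B.1 ∧ X = (A.1, sel (envs k D A.1) fun e => ¬ e ∈ A.2 ∨ e ∈ B.2)) ∨
    (∃ c1 < c, dl c = 7 :: dl c1 ∧ ∃ A ∈ Fm k D c1,
      A.1 ≠ 0 ∧ X = (A.1 - 1, sel (envs k D (A.1 - 1)) fun e =>
          ∀ x ∈ rng k D A.1, e ++ [x] ∈ A.2)) := by
  rw [Fm, fstep, stF, stEq, stLt, stImp, stAll]
  simp only [List.mem_append, List.mem_flatMap, mem_cnd, tbl_length, List.mem_range,
    List.mem_singleton]
  refine or_congr Iff.rfl (or_congr Iff.rfl (or_congr Iff.rfl (or_congr ?_ ?_)))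
  · refine exists_congr fun c1 => and_congr_right fun h1 => exists_congr fun c2 =>
      and_congr_right fun h2 => and_congr_right fun _ => ?_
    rw [tbl_get _ _ h1, tbl_get _ _ h2]
    rfl
  · refine exists_congr fun c1 => and_congr_right fun h1 => and_congr_right fun _ => ?_
    rw [tbl_get _ _ h1]
    rfl

open Nat in
/-- step width -/
def Dl (N : ℕ) : ℕ := N + N ! + (N !)! * N

section
variable {k : ℕ} (hk : 2 ≤ k) {g : ℤ → ℤ}
    (hg1 : ∀ n : ℤ, (∃ m : ℕ, n = (k : ℤ) ^ (k ^ m)) → g n = n ^ 2)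
    (hg2 : ∀ n : ℤ, (¬ ∃ m : ℕ, n = (k : ℤ) ^ (k ^ m)) → g n = 0)
include hk hg1 hg2

lemma TV_term {d c : ℕ} (h : TV k (d, []) c ≠ []) :
    ∃ t : L.Term (Empty ⊕ Fin d), ttoks t = dl c := by
  obtain ⟨u, hu⟩ := List.exists_mem_of_ne_nil _ h
  obtain ⟨t, ht, -⟩ := TV_sound hk hg1 hg2 d [] c u hu
  exact ⟨t, ht⟩

omit hk hg1 hg2 in
lemma enc_of {d c : ℕ} {t : L.Term (Empty ⊕ Fin d)} (h : ttoks t = dl c) :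
    Encodable.encode t = c := by
  rw [← encode_ttoks, h, encode_dl]

lemma Fm_sound {R N : ℕ} (hN : cardBound R R ≤ N) (c : ℕ) : ∀ X ∈ Fm k (Dl N) c,
    ∃ f : L.BoundedFormula Empty X.1, ftoks f = dl c ∧ (X.1 + fsz f < R →
      ∀ e ∈ envs k (Dl N) X.1, e ∈ X.2 ↔ fval g f (val e)) := by
  induction c using Nat.strong_induction_on with
  | _ c ih =>
    intro X hX
    rcases mem_Fm.1 hX with ⟨m, -, h, rfl⟩ | ⟨d, -, c1, -, c2, -, ⟨h, ht, hs⟩, rfl⟩ |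
      ⟨d, -, c1, -, c2, -, ⟨h, ht, hs⟩, rfl⟩ | ⟨c1, h1, c2, h2, h, A, hA, B, hB, hAB, rfl⟩ |
      ⟨c1, h1, h, A, hA, hA0, rfl⟩
    · refine ⟨.falsum, by rw [ftoks_falsum, h], fun _ e _ => ?_⟩
      simpa using fval_falsum g (d := m) (val e)
    · obtain ⟨t, ht⟩ := TV_term hk hg1 hg2 ht
      obtain ⟨s, hs⟩ := TV_term hk hg1 hg2 hs
      refine ⟨.equal t s, by rw [ftoks_equal, h, enc_of ht, enc_of hs], fun _ e he => ?_⟩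
      rw [mem_sel, fval_equal, TV_eq hk hg1 hg2 e ht hs]
      exact and_iff_right he
    · obtain ⟨t, ht⟩ := TV_term hk hg1 hg2 ht
      obtain ⟨s, hs⟩ := TV_term hk hg1 hg2 hs
      refine ⟨.rel rS ![t, s], ?_, fun _ e he => ?_⟩
      · rw [ftoks_rel, h]
        simp only [Matrix.cons_val_zero, Matrix.cons_val_one]
        rw [enc_of ht, enc_of hs]
      · rw [mem_sel, fval_rel, TV_lt hk hg1 hg2 e ht hs]
        exact and_iff_right he
    · obtain ⟨a, A⟩ := A
      obtain ⟨b, B⟩ := B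
      simp only at hAB
      subst hAB
      obtain ⟨f1, e1, q1⟩ := ih c1 h1 _ hA
      obtain ⟨f2, e2, q2⟩ := ih c2 h2 _ hB
      refine ⟨.imp f1 f2, by rw [ftoks_imp, h, e1, e2], fun hR e he => ?_⟩
      simp only [fsz] at hR q1 q2
      rw [mem_sel, fval_imp, ← q1 (by omega) e he, ← q2 (by omega) e he, imp_iff_not_or]
      exact and_iff_right he
    · obtain ⟨a, A⟩ := A
      obtain _ | a := a
      · exact absurd rfl hA0
      obtain ⟨f1, e1, q1⟩ := ih c1 h1 _ hA
      simp only [Nat.add_sub_cancel] at e1 q1 ⊢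
      refine ⟨.all f1, by rw [ftoks_all, h, e1], fun hR e he => ?_⟩
      simp only [fsz] at hR
      rw [mem_sel, bounded_all hk hg1 hg2 (R := R) (N := N) f1 (by omega) hN (a * Dl N) (val e)
        (envs_bd hk e he), and_iff_right he]
      have hD : a * Dl N + (N + N.factorial + N.factorial.factorial * N) = (a + 1) * Dl N := by
        simp only [Dl]; ring
      rw [hD]
      constructor
      · intro H x hx
        obtain ⟨u, hu, rfl⟩ := rng_surj hx
        rw [← fval_append g he u f1]
        exact (q1 (by omega) _ (mem_envs_succ he hu)).1 (H u hu)
      · intro H u hu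
        rw [q1 (by omega) _ (mem_envs_succ he hu), fval_append g he u f1]
        exact H _ (rng_bd hk hu)

omit hk hg1 hg2 in
lemma Fm_complete {D : ℕ} (d : ℕ) (f : L.BoundedFormula Empty d) :
    ∃ S, (d, S) ∈ Fm k D (Encodable.encode (ftoks f)) := by
  have TVn : ∀ {d : ℕ} (t : L.Term (Empty ⊕ Fin d)), TV k (d, []) (Encodable.encode t) ≠ [] := by
    intro d t
    obtain ⟨u, hu⟩ := TV_complete (k := k) [] t (Encodable.encode t)
      (by rw [← encode_ttoks, dl_encode])
    exact List.ne_nil_of_mem hu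
  induction d, f using form_ind with
  | h0 d =>
    have := wt_le (ftoks (.falsum : L.BoundedFormula Empty d))
    rw [ftoks_falsum, wt_cons] at this
    exact ⟨_, mem_Fm.2 (Or.inl ⟨d, by rw [ftoks_falsum]; omega,
      by rw [dl_encode, ftoks_falsum], rfl⟩)⟩
  | h1 d t₁ t₂ =>
    have h := wt_le (ftoks (.equal t₁ t₂))
    have h1 := Nat.add_le_pair d (Encodable.encode t₁)
    have h2 := Nat.add_le_pair d (Encodable.encode t₂)
    rw [ftoks_equal, wt_cons, wt_cons] at h
    exact ⟨_, mem_Fm.2 (Or.inr (Or.inl ⟨d, by rw [ftoks_equal]; omega, Encodable.encode t₁,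
      by rw [ftoks_equal]; omega, Encodable.encode t₂, by rw [ftoks_equal]; omega,
      ⟨by rw [dl_encode, ftoks_equal], TVn _, TVn _⟩, rfl⟩))⟩
  | h2 d r ts =>
    have h := wt_le (ftoks (.rel r ts))
    have h1 := Nat.add_le_pair d (Encodable.encode (ts 0))
    have h2 := Nat.add_le_pair d (Encodable.encode (ts 1))
    rw [ftoks_rel, wt_cons, wt_cons, wt_cons, wt_cons] at h
    exact ⟨_, mem_Fm.2 (Or.inr (Or.inr (Or.inl ⟨d, by rw [ftoks_rel]; omega,
      Encodable.encode (ts 0), by rw [ftoks_rel]; omega, Encodable.encode (ts 1),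
      by rw [ftoks_rel]; omega, ⟨by rw [dl_encode, ftoks_rel], TVn _, TVn _⟩, rfl⟩)))⟩
  | h3 d f₁ f₂ ih1 ih2 =>
    obtain ⟨A, hA⟩ := ih1
    obtain ⟨B, hB⟩ := ih2
    have h3 := lt_encode_cons 3 (ftoks f₁ ++ ftoks f₂)
    rw [← ftoks_imp] at h3
    exact ⟨_, mem_Fm.2 (Or.inr (Or.inr (Or.inr (Or.inl ⟨_,
      (encode_le_append_left _ _).trans_lt h3, _, (encode_le_append_right _ _).trans_lt h3,
      by rw [dl_encode, dl_encode, dl_encode, ftoks_imp], _, hA, _, hB, rfl, rfl⟩))))⟩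
  | h4 d f ih =>
    obtain ⟨A, hA⟩ := ih
    have h3 := lt_encode_cons 7 (ftoks f)
    rw [← ftoks_all] at h3
    exact ⟨_, mem_Fm.2 (Or.inr (Or.inr (Or.inr (Or.inr ⟨_, h3,
      by rw [dl_encode, dl_encode, ftoks_all], _, hA, by simp, rfl⟩))))⟩


omit hk hg1 hg2 in
lemma ftoks_inj {f f' : L.Sentence} (h : ftoks f = ftoks f') : f = f' := by
  apply Encodable.encode_injective
  rw [← encode_ftoks, ← encode_ftoks, h]

lemma accept_iff (c : ℕ) : (∃ A ∈ Fm k (Dl (cardBound (4 * c + 1) (4 * c + 1))) c,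
    A.1 = 0 ∧ [] ∈ A.2) ↔ c ∈ theoryCodes g := by
  have hsz : ∀ f : L.Sentence, ftoks f = dl c → 0 + fsz f < 4 * c + 1 := by
    intro f hf
    have h1 := fsz_le 0 f
    have h2 := wt_le (ftoks f)
    rw [hf, encode_dl, ← hf] at h2
    omega
  have hre : ∀ f : L.Sentence, @Sentence.Realize L ℤ (S g) f ↔ fval g f (val []) := by
    intro f
    unfold fval Sentence.Realize Formula.Realize
    apply iff_of_eq
    congr 1 <;> exact Subsingleton.elim _ _
  have hm : ([] : Ev) ∈ envs k (Dl (cardBound (4 * c + 1) (4 * c + 1))) 0 := by simp [envs]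
  constructor
  · rintro ⟨⟨a, A⟩, hA, h0, hm'⟩
    simp only at h0
    subst h0
    obtain ⟨f, h1, h2⟩ := Fm_sound hk hg1 hg2 le_rfl c _ hA
    refine ⟨f, by rw [← encode_ftoks, h1, encode_dl], ?_⟩
    rw [hre]
    exact (h2 (hsz f h1) [] hm).1 hm'
  · rintro ⟨f, rfl, hf⟩
    rw [hre] at hf
    obtain ⟨A, hA⟩ := Fm_complete (k := k) (D := Dl (cardBound (4 * (Encodable.encode f) + 1)
      (4 * (Encodable.encode f) + 1))) 0 f
    rw [encode_ftoks] at hA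
    refine ⟨_, hA, rfl, ?_⟩
    obtain ⟨f', h1, h2⟩ := Fm_sound hk hg1 hg2 le_rfl _ _ hA
    have : f' = f := ftoks_inj (by rw [h1, ← encode_ftoks, dl_encode])
    subst this
    exact (h2 (hsz _ h1) [] hm).2 hf
end

/-! ### Primitive recursiveness -/
section prim2
variable {α β σ : Type} [Primcodable α] [Primcodable β] [Primcodable σ]

lemma p_id : Primrec fun a : α => a := Primrec.id
lemma p_fst {f : α → β × σ} (h : Primrec f) : Primrec fun a => (f a).1 := Primrec.fst.comp h
lemma p_snd {f : α → β × σ} (h : Primrec f) : Primrec fun a => (f a).2 := Primrec.snd.comp h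
lemma p_pair {f : α → β} {h : α → σ} (hf : Primrec f) (hh : Primrec h) :
    Primrec fun a => (f a, h a) := Primrec.pair hf hh
lemma p_add {f h : α → ℕ} (hf : Primrec f) (hh : Primrec h) : Primrec fun a => f a + h a :=
  Primrec.nat_add.comp hf hh
lemma p_mul {f h : α → ℕ} (hf : Primrec f) (hh : Primrec h) : Primrec fun a => f a * h a :=
  Primrec.nat_mul.comp hf hh
lemma p_sub {f h : α → ℕ} (hf : Primrec f) (hh : Primrec h) : Primrec fun a => f a - h a :=
  Primrec.nat_sub.comp hf hh
lemma p_npair {f h : α → ℕ} (hf : Primrec f) (hh : Primrec h) :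
    Primrec fun a => Nat.pair (f a) (h a) := Primrec₂.natPair.comp hf hh
lemma p_pow {f h : α → ℕ} (hf : Primrec f) (hh : Primrec h) : Primrec fun a => f a ^ h a :=
  Primrec₂.comp (f := fun a b : ℕ => a ^ b) (Primrec₂.unpaired'.1 Nat.Primrec.pow) hf hh
lemma p_fac {f : α → ℕ} (hf : Primrec f) : Primrec fun a => (f a).factorial := by
  have h : Primrec fun n : ℕ => n.factorial := by
    refine (Primrec.nat_rec₁ (f := fun n x : ℕ => (n + 1) * x) 1
      (p_mul (p_add (p_fst p_id) (Primrec.const 1)) (p_snd p_id)).to₂).of_eq fun n => ?_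
    induction n with
    | zero => rfl
    | succ n ih => simp only [Nat.factorial, ← ih]
  exact h.comp hf
lemma p_dl {f : α → ℕ} (hf : Primrec f) : Primrec fun a => dl (f a) :=
  (Primrec.ofNat (List ℕ)).comp hf
lemma p_cons {f : α → β} {h : α → List β} (hf : Primrec f) (hh : Primrec h) :
    Primrec fun a => f a :: h a := Primrec.list_cons.comp hf hh
lemma p_app {f h : α → List β} (hf : Primrec f) (hh : Primrec h) :
    Primrec fun a => f a ++ h a := Primrec.list_append.comp hf hh
lemma p_len {f : α → List β} (hf : Primrec f) : Primrec fun a => (f a).length :=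
  Primrec.list_length.comp hf
lemma p_range {f : α → ℕ} (hf : Primrec f) : Primrec fun a => List.range (f a) :=
  Primrec.list_range.comp hf
lemma p_getD {f : α → List β} {h : α → ℕ} {z : β} (hf : Primrec f) (hh : Primrec h) :
    Primrec fun a => (f a).getD (h a) z := (Primrec.list_getD z).comp hf hh
lemma p_map {f : α → List β} {h : α → β → σ} (hf : Primrec f)
    (hh : Primrec fun x : α × β => h x.1 x.2) : Primrec fun a => (f a).map (h a) :=
  Primrec.list_map hf hh.to₂
lemma p_eq {f h : α → β} (hf : Primrec f) (hh : Primrec h) : PrimrecPred fun a => f a = h a := by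
  classical exact Primrec.eq.comp hf hh
lemma p_lt {f h : α → ℕ} (hf : Primrec f) (hh : Primrec h) : PrimrecPred fun a => f a < h a :=
  Primrec.nat_lt.comp hf hh
lemma p_and {P Q : α → Prop} (hP : PrimrecPred P) (hQ : PrimrecPred Q) :
    PrimrecPred fun a => P a ∧ Q a := hP.and hQ
lemma p_or {P Q : α → Prop} (hP : PrimrecPred P) (hQ : PrimrecPred Q) :
    PrimrecPred fun a => P a ∨ Q a := hP.or hQ
lemma p_not {P : α → Prop} (hP : PrimrecPred P) : PrimrecPred fun a => ¬ P a := hP.not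
lemma p_ne {f h : α → β} (hf : Primrec f) (hh : Primrec h) : PrimrecPred fun a => f a ≠ h a :=
  (p_eq hf hh).not

variable {k : ℕ}

lemma p_Gz {f : α → Zp} (hf : Primrec f) : Primrec fun a => Gz k (f a) := by
  have h : Primrec fun v : Zp => Gz k v := by
    unfold Gz
    refine @Primrec.ite _ _ _ _ _ (fun _ => Classical.propDecidable _) _ _ ?_ ?_ (Primrec.const _)
    · refine pp_ex ?_ ?_ <;> repeat with_reducible first
        | exact p_id | exact Primrec.const _ | apply p_fst | apply p_snd | apply p_range | apply p_eq | apply p_add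
        | apply p_pow
    · repeat with_reducible first
        | exact p_id | exact Primrec.const _ | apply p_fst | apply p_snd | apply p_pair | apply p_mul | apply p_sub
       
  exact h.comp hf

lemma prim_tstep : Primrec₂ (tstep k) := by
  change Primrec fun x : (ℕ × Ev) × List (List Zp) => tstep k x.1 x.2
  unfold tstep
  repeat with_reducible first
      | exact p_id | exact Primrec.const _ | apply p_fst | apply p_snd | apply p_Gz | apply p_app | apply pr_flatMap
      | apply p_range | apply pr_cnd | apply p_eq | apply p_cons | apply p_map | apply p_getD
      | apply p_dl | apply p_len | apply p_pair | apply p_add | apply p_mul | apply p_fst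
      | apply p_snd

lemma p_TV {f : α → ℕ × Ev} {h : α → ℕ} (hf : Primrec f) (hh : Primrec h) :
    Primrec fun a => TV k (f a) (h a) := by
  have h : Primrec₂ (TV k) := by
    unfold TV
    exact prim_tstep.comp Primrec.fst (pr_tbl prim_tstep)
  exact h.comp hf ‹_›

lemma p_rng {f h : α → ℕ} (hf : Primrec f) (hh : Primrec h) :
    Primrec fun a => rng k (f a) (h a) := by
  unfold rng
  repeat with_reducible first
      | exact hf | exact hh | exact p_id | exact Primrec.const _ | apply p_fst | apply p_snd | apply p_app | apply p_map
      | apply p_range | apply p_pair | apply p_add | apply p_mul | apply p_pow | apply p_fst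
      | apply p_snd

lemma p_envs {f h : α → ℕ} (hf : Primrec f) (hh : Primrec h) :
    Primrec fun a => envs k (f a) (h a) := by
  have key : Primrec₂ (envs k) := by
    refine (Primrec.nat_rec (α := ℕ) (β := List Ev) (f := fun _ => [ [] ])
      (g := fun D x => x.2.flatMap fun e => (rng k D (x.1 + 1)).map fun x => e ++ [x])
      (Primrec.const _) ?_).of_eq fun D d => ?_
    · refine Primrec.to₂ (α := ℕ) (β := ℕ × List Ev) (f := fun y => y.2.2.flatMap fun e =>
        (rng k y.1 (y.2.1 + 1)).map fun x => e ++ [x]) ?_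
      repeat with_reducible first
          | exact p_id | exact Primrec.const _ | apply p_fst | apply p_snd | apply p_rng | apply p_app | apply pr_flatMap
          | apply p_cons | apply p_map | apply p_add
    · induction d with
      | zero => rfl
      | succ n ih => simp only [envs, ← ih]
  exact key.comp hf hh

lemma p_stF {f : α → ℕ} (hf : Primrec f) : Primrec fun a => stF (f a) := by
  unfold stF
  repeat with_reducible first
      | exact hf | exact p_id | exact Primrec.const _ | apply p_fst | apply p_snd | apply pr_flatMap | apply p_range
      | apply pr_cnd | apply p_eq | apply p_cons | apply p_dl | apply p_pair | apply p_add
      | apply p_mul | exact hf.comp (by assumption) | apply hf.comp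

lemma prim_stEq : Primrec fun x : ℕ × ℕ => stEq k x.1 x.2 := by
  unfold stEq
  repeat with_reducible first
      | exact p_id | exact Primrec.const _ | apply p_fst | apply p_snd | apply p_TV | apply p_envs | apply pr_flatMap
      | apply p_range | apply pr_cnd | apply pr_sel | apply pp_ex | apply p_and | apply p_ne
      | apply p_eq | apply p_cons | apply p_dl | apply p_pair | apply p_npair | apply p_add
      | apply p_mul

lemma prim_stLt : Primrec fun x : ℕ × ℕ => stLt k x.1 x.2 := by
  unfold stLt
  repeat with_reducible first
      | exact p_id | exact Primrec.const _ | apply p_fst | apply p_snd | apply p_TV | apply p_envs | apply pr_flatMap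
      | apply p_range | apply pr_cnd | apply pr_sel | apply pp_ex | apply p_and | apply p_ne
      | apply p_eq | apply p_lt | apply p_cons | apply p_dl | apply p_pair | apply p_npair
      | apply p_add | apply p_mul

lemma prim_stImp : Primrec fun x : ℕ × List FmT => stImp k x.1 x.2 := by
  unfold stImp
  repeat with_reducible first
      | exact p_id | exact Primrec.const _ | apply p_fst | apply p_snd | apply p_envs | apply pr_flatMap | apply p_range
      | apply pr_cnd | apply pr_sel | apply p_or | apply p_not | apply pp_mem | apply p_eq
      | apply p_cons | apply p_app | apply p_getD | apply p_len | apply p_dl | apply p_pair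
     

lemma prim_stAll : Primrec fun x : ℕ × List FmT => stAll k x.1 x.2 := by
  unfold stAll
  repeat with_reducible first
      | exact p_id | exact Primrec.const _ | apply p_fst | apply p_snd | apply p_envs | apply p_rng | apply pr_flatMap
      | apply p_range | apply pr_cnd | apply pr_sel | apply pp_all | apply p_ne | apply pp_mem
      | apply p_eq | apply p_cons | apply p_app | apply p_getD | apply p_len | apply p_dl
      | apply p_pair | apply p_sub

lemma prim_fstep : Primrec₂ (fstep k) := by
  change Primrec fun x : ℕ × List FmT => fstep k x.1 x.2
  unfold fstep
  have hl : Primrec fun x : ℕ × List FmT => (x.1, x.2.length) :=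
    p_pair (p_fst p_id) (p_len (p_snd p_id))
  exact p_app (p_stF (p_len (p_snd p_id))) (p_app (prim_stEq.comp hl) (p_app (prim_stLt.comp hl)
    (p_app prim_stImp prim_stAll)))

lemma prim_Fm : Primrec₂ (Fm k) := by
  unfold Fm
  exact prim_fstep.comp Primrec.fst (pr_tbl prim_fstep)

lemma p_cardBound {f h : α → ℕ} (hf : Primrec f) (hh : Primrec h) :
    Primrec fun a => cardBound (f a) (h a) := by
  have key : Primrec₂ cardBound := by
    refine (Primrec.nat_rec (α := ℕ) (β := ℕ) (f := fun R => 2 ^ (R * R * R * 4 + 4 * R))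
      (g := fun R x => 2 ^ (R * x.2)) ?_ ?_).of_eq fun R n => ?_
    · repeat with_reducible first
        | exact p_id | exact Primrec.const _ | apply p_fst | apply p_snd | apply p_pow | apply p_add | apply p_mul
    · refine Primrec.to₂ (α := ℕ) (β := ℕ × ℕ) (f := fun y => 2 ^ (y.1 * y.2.2)) ?_
      repeat with_reducible first
          | exact p_id | exact Primrec.const _ | apply p_fst | apply p_snd | apply p_pow | apply p_mul | apply p_fst
          | apply p_snd
    · induction n with
      | zero => rfl
      | succ n ih => simp only [cardBound, ← ih]
  exact key.comp hf hh

lemma p_Dl {f : α → ℕ} (hf : Primrec f) : Primrec fun a => Dl (f a) := by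
  unfold Dl
  repeat with_reducible first
      | exact hf | apply p_add | apply p_mul | apply p_fac

lemma prim_accept : PrimrecPred fun c : ℕ =>
    ∃ A ∈ Fm k (Dl (cardBound (4 * c + 1) (4 * c + 1))) c, A.1 = 0 ∧ [] ∈ A.2 := by
  have h1 : Primrec fun c : ℕ => 4 * c + 1 :=
    p_add (p_mul (Primrec.const 4) p_id) (Primrec.const 1)
  refine pp_ex (prim_Fm.comp (p_Dl (p_cardBound h1 h1)) p_id) ?_
  exact p_and (p_eq (p_fst (p_snd p_id)) (Primrec.const 0))
    (pp_mem (p_snd (p_snd p_id)) (Primrec.const _))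
end prim2

theorem main_result {k : ℕ} (hk : 2 ≤ k) {g : ℤ → ℤ}
    (hg1 : ∀ n : ℤ, (∃ m : ℕ, n = (k : ℤ) ^ (k ^ m)) → g n = n ^ 2)
    (hg2 : ∀ n : ℤ, (¬ ∃ m : ℕ, n = (k : ℤ) ^ (k ^ m)) → g n = 0) :
    ComputablePred (fun c => c ∈ theoryCodes g) := by
  have h : PrimrecPred (fun c => c ∈ theoryCodes g) :=
    prim_accept.of_eq fun c => accept_iff hk hg1 hg2 c
  obtain ⟨d, hd⟩ := h
  exact ⟨d, hd.to_comp⟩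

open scoped Classical in
theorem decidable (k : ℕ) (hk : 2 ≤ k) (g : ℤ → ℤ)
    (hg : ∀ n : ℤ, g n = if ∃ m : ℕ, n = (k : ℤ) ^ (k ^ m) then n ^ 2 else 0) :
    ComputablePred (fun c => c ∈ theoryCodes g) := by
  refine main_result hk (fun n h => ?_) (fun n h => ?_)
  · rw [hg, if_pos h]
  · rw [hg, if_neg h]

end Stmt4
end

section
/- There exists a real constant C ≥ 1, depending only on α and β, such that for all positive integers n₀, n₁ with n₀ ≥ C and n₁ ≥ C·n₀, the following are equivalent: (1) there exists a positive integer n₂ with n₂ ≥ C·n₁ such that Δ²g(n₀, n₁, n₂) = 0; (2) |⟨α·n₀⟩ + ⟨α·n₁⟩| < 1/2. -/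
/-!
STATEMENT 6: existence of n₂ with Δ²g(n₀,n₁,n₂) = 0 is equivalent to
|⟨α·n₀⟩ + ⟨α·n₁⟩| < 1/2.
-/

namespace Stmt6

/-- The signed fractional part `⟨x⟩ = x - ⌊x⌉ ∈ [-1/2, 1/2)`. -/
noncomputable def sfrac (x : ℝ) : ℝ := x - round x

/-- The second symmetric discrete derivative. -/
def Δ2 (g : ℤ → ℤ) (n₀ n₁ n₂ : ℤ) : ℤ :=
  g (n₀ + n₁ + n₂) - g (n₀ + n₁) - g (n₁ + n₂) - g (n₂ + n₀)
    + g n₀ + g n₁ + g n₂ - g 0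

/-- `x` is within `ε` of an integer. -/
def Near (ε x : ℝ) : Prop := ∃ z : ℤ, |x - z| < ε

lemma near_of_color {M : ℕ} (hM : 0 < M) {x y : ℝ}
    (h : ((⌊x * M⌋ : ℤ) : ZMod M) = ((⌊y * M⌋ : ℤ) : ZMod M)) :
    ∃ z : ℤ, |y - x - z| < 1 / M := by
  rw [ZMod.intCast_eq_intCast_iff_dvd_sub] at h
  obtain ⟨k, hk⟩ := h
  refine ⟨k, ?_⟩
  have hM' : (0 : ℝ) < M := by exact_mod_cast hM
  have hk' : (⌊y * M⌋ : ℝ) - ⌊x * M⌋ = M * k := by exact_mod_cast hk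
  have h1 := Int.floor_le (y * M)
  have h2 := Int.lt_floor_add_one (y * M)
  have h3 := Int.floor_le (x * M)
  have h4 := Int.lt_floor_add_one (x * M)
  have h5 : |(y - x - k) * M| < 1 := by
    rw [abs_lt]; constructor <;> nlinarith
  rw [abs_mul, abs_of_pos hM'] at h5
  rwa [lt_div_iff₀ hM']

lemma quad (ε : ℝ) (hε : 0 < ε) :
    ∃ K : ℕ, ∀ γ : ℝ, ∃ k : ℕ, 1 ≤ k ∧ k ≤ K ∧ Near ε ((k : ℝ) ^ 2 * γ) := by
  classical
  obtain ⟨M, hM⟩ := exists_nat_gt (2 / ε)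
  have hM0 : (0 : ℝ) < M := lt_trans (by positivity) hM
  have hMn : 0 < M := by exact_mod_cast hM0
  have : NeZero M := ⟨hMn.ne'⟩
  obtain ⟨ι, _, hι⟩ := Combinatorics.Line.exists_mono_in_high_dimension (Fin 3) (ZMod M)
  refine ⟨Fintype.card ι, fun γ => ?_⟩
  obtain ⟨l, c, hl⟩ := hι fun v =>
    ((⌊(((∑ i, (v i : ℕ) : ℕ) : ℝ) ^ 2 * γ / 2) * M⌋ : ℤ) : ZMod M)
  set d := (Finset.univ.filter fun i => l.idxFun i = none).card with hd
  have key : ∃ b : ℕ, ∀ x : Fin 3, (∑ i, ((l x i : Fin 3) : ℕ)) = d * (x : ℕ) + b := by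
    refine ⟨∑ i ∈ Finset.univ.filter (fun i => ¬ l.idxFun i = none),
      (((l.idxFun i).getD 0 : Fin 3) : ℕ), fun x => ?_⟩
    rw [← Finset.sum_filter_add_sum_filter_not Finset.univ (fun i => l.idxFun i = none)]
    congr 1
    · rw [hd, ← smul_eq_mul, ← Finset.sum_const]
      apply Finset.sum_congr rfl
      intro i hi
      rw [Finset.mem_filter] at hi
      rw [l.apply_none _ _ hi.2]
    · apply Finset.sum_congr rfl
      intro i hi
      rw [Finset.mem_filter] at hi
      obtain ⟨y, hy⟩ := Option.ne_none_iff_exists.mp hi.2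
      simp [← hy]
  obtain ⟨b, hb⟩ := key
  refine ⟨d, ?_, Finset.card_le_univ _, ?_⟩
  · obtain ⟨i, hi⟩ := l.proper
    exact Finset.card_pos.mpr ⟨i, by simp [hi]⟩
  have e0 := hl 0
  have e1 := hl 1
  have e2 := hl 2
  simp only [hb] at e0 e1 e2
  obtain ⟨z1, h1⟩ := near_of_color hMn (e0.trans e1.symm)
  obtain ⟨z2, h2⟩ := near_of_color hMn (e1.trans e2.symm)
  refine ⟨z2 - z1, ?_⟩
  have hMe : 2 * (1 / (M : ℝ)) < ε := by
    rw [div_lt_iff₀ hε] at hM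
    rw [← mul_div_assoc, div_lt_iff₀ hM0]; linarith
  push_cast at h1 h2 ⊢
  simp only [Fin.val_zero, Fin.val_one, Fin.val_two] at h1 h2
  push_cast at h1 h2
  rw [abs_lt] at h1 h2 ⊢
  constructor <;> nlinarith

lemma dirichlet (ε : ℝ) (hε : 0 < ε) (a b c : ℝ) (N : ℕ) :
    ∃ m : ℕ, N ≤ m ∧ 1 ≤ m ∧ Near ε (m * a) ∧ Near ε (m * b) ∧ Near ε (m * c) := by
  obtain ⟨M, hM⟩ := exists_nat_gt (1 / ε)
  have hM0 : (0 : ℝ) < M := lt_trans (by positivity) hM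
  have hMn : 0 < M := by exact_mod_cast hM0
  have : NeZero M := ⟨hMn.ne'⟩
  have hMe : 1 / (M : ℝ) < ε := by
    rw [div_lt_iff₀ hε] at hM
    rw [div_lt_iff₀ hM0]; linarith
  let col : ℝ → ℕ → ZMod M := fun x n => ((⌊((n * (N + 1) : ℕ) * x) * M⌋ : ℤ) : ZMod M)
  obtain ⟨s, t, hst, h⟩ := Finite.exists_ne_map_eq_of_infinite
    (fun n : ℕ => (col a n, col b n, col c n))
  wlog hlt : s < t generalizing s t
  · exact this t s hst.symm h.symm (lt_of_le_of_ne (not_lt.mp hlt) hst.symm)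
  simp only [Prod.mk.injEq] at h
  obtain ⟨h1, h2, h3⟩ := h
  obtain ⟨d, rfl⟩ := Nat.exists_eq_add_of_lt hlt
  have aux : ∀ x, col x s = col x (s + d + 1) → Near ε (((d + 1) * (N + 1) : ℕ) * x) := by
    intro x hx
    obtain ⟨z, hz⟩ := near_of_color hMn hx
    refine ⟨z, lt_of_le_of_lt (le_of_eq ?_) (hz.trans hMe)⟩
    congr 1; push_cast; ring
  exact ⟨(d + 1) * (N + 1), by nlinarith [Nat.zero_le (d * (N + 1))], Nat.succ_le_of_lt (by positivity), aux a h1, aux b h2, aux c h3⟩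

lemma round_eq' {x : ℝ} {z : ℤ} (h : |x - z| < 1 / 2) : round x = z := by
  rw [round_eq, Int.floor_eq_iff]
  rw [abs_lt] at h
  constructor <;> linarith

lemma recur (α β : ℝ) (ε : ℝ) (hε : 0 < ε) (hε2 : ε < 1 / 2) (N : ℕ) :
    ∃ n : ℤ, (N : ℤ) ≤ n ∧ 0 < n ∧ |α * n - round (α * n)| < ε ∧ Near ε (β * n) ∧
      Near ε (β * round (α * n)) ∧ Near ε (β * n * round (α * n)) := by
  obtain ⟨K, hK⟩ := quad ε hε
  have hb := abs_nonneg β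
  set D : ℝ := (K + 1) * (1 + |β|) with hD
  have hDpos : 0 < D := by positivity
  obtain ⟨m, hNm, hm1, ⟨L, hL⟩, ⟨p, hp⟩, ⟨q, hq⟩⟩ := dirichlet (ε / D) (by positivity) α β (α * β) N
  obtain ⟨k, hk1, hkK, r, hr⟩ := hK (β * m * L)
  have hkK' : (k : ℝ) ≤ K := by exact_mod_cast hkK
  have hk0 : (0 : ℝ) ≤ k := by positivity
  set δ := ε / D with hδ
  have hδ0 : 0 < δ := by positivity
  have hδD : δ * D = ε := by rw [hδ]; field_simp
  have hbig : ∀ t : ℝ, |t| ≤ δ * (1 + |β|) → |k * t| < ε := by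
    intro t ht
    rw [abs_mul, abs_of_nonneg hk0, ← hδD, hD]
    have : 0 < δ * (1 + |β|) := by positivity
    nlinarith [abs_nonneg t]
  have hsm : δ ≤ δ * (1 + |β|) := by nlinarith
  have hkL : |α * ((k * m : ℕ) : ℤ) - ((k * L : ℤ) : ℝ)| < ε := by
    have := hbig (m * α - L) (hL.le.trans hsm)
    convert this using 2
    push_cast; ring
  have hround : round (α * ((k * m : ℕ) : ℤ)) = k * L := round_eq' (hkL.trans hε2)
  refine ⟨((k * m : ℕ) : ℤ), ?_, ?_, ?_, ⟨k * p, ?_⟩, ⟨k * q, ?_⟩, ⟨r, ?_⟩⟩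
  · norm_cast; nlinarith
  · have : 0 < k * m := by positivity
    exact_mod_cast this
  · rw [hround]; exact hkL
  · have := hbig (m * β - p) (hp.le.trans hsm)
    convert this using 2
    push_cast; ring
  · rw [hround]
    have h1 : |β * L - q| ≤ δ * (1 + |β|) := by
      have : β * L - q = -(β * (m * α - L)) + (m * (α * β) - q) := by ring
      rw [this]
      refine (abs_add_le _ _).trans ?_
      rw [abs_neg, abs_mul]
      nlinarith
    convert hbig _ h1 using 2
    push_cast; ring
  · rw [hround]
    convert hr using 2
    push_cast; ring

lemma round_cont (x : ℝ) (hx : ∀ z : ℤ, x ≠ z + 1 / 2) :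
    ∃ η > 0, ∀ (y : ℝ) (z : ℤ), |y - (x + z)| < η → round y = round x + z := by
  have h1 : |x - round x| < 1 / 2 := by
    refine lt_of_le_of_ne (abs_sub_round x) fun h => ?_
    rcases (abs_eq (by norm_num)).mp h with h | h
    · exact hx (round x) (by linarith)
    · exact hx (round x - 1) (by push_cast; linarith)
  refine ⟨1 / 2 - |x - round x|, by linarith, fun y z h => round_eq' ?_⟩
  have : y - ((round x + z : ℤ) : ℝ) = (y - (x + z)) + (x - round x) := by push_cast; ring
  rw [this]
  exact (abs_add_le _ _).trans_lt (by linarith)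

lemma irr_of_ind (α : ℝ) (hind : LinearIndependent ℚ ![(1 : ℝ), α, α ^ 2]) : Irrational α := by
  rintro ⟨q, hq⟩
  rw [Fintype.linearIndependent_iff] at hind
  have := hind ![-q, 1, 0] (by simp [Fin.sum_univ_three, Rat.smul_def, hq]) 1
  simp at this

lemma not_half (β : ℝ) (hβ' : (∃ b : ℤ, β = (b : ℝ)) ∨ Irrational β) (h : ℤ) (z : ℤ) :
    β * h ≠ z + 1 / 2 := by
  intro e
  have hint : ∀ w : ℤ, (w : ℝ) ≠ z + 1 / 2 := by
    intro w hw
    have : (2 * w : ℝ) = 2 * z + 1 := by linarith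
    have : 2 * w = 2 * z + 1 := by exact_mod_cast this
    omega
  rcases hβ' with ⟨b, rfl⟩ | hirr
  · exact hint (b * h) (by push_cast; exact e)
  · by_cases h0 : h = 0
    · subst h0
      exact hint 0 (by simpa using e)
    · exact (hirr.mul_intCast h0) ⟨z + 1 / 2, by push_cast; exact e.symm⟩

lemma round_lt (α : ℝ) (hα : Irrational α) (n : ℤ) : |α * n - round (α * n)| < 1 / 2 := by
  refine lt_of_le_of_ne (abs_sub_round _) fun h => ?_
  rcases (abs_eq (by norm_num)).mp h with h | h
  · exact not_half α (Or.inr hα) n (round (α * n)) (by linarith)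
  · exact not_half α (Or.inr hα) n (round (α * n) - 1) (by push_cast; linarith)

lemma forward_arith (β : ℝ) (hβ : 0 < β) (n₀ n₁ n₂ c₀ c₁ c₂ : ℤ) (C : ℝ) (hC : C = 7 + 4 / β)
    (h0 : 0 < n₀) (h1 : 0 < n₁) (h0C : C ≤ n₀) (h1C : C * n₀ ≤ n₁) (h2C : C * n₁ ≤ n₂)
    (b0 : |c₀| ≤ 3) (b1 : |c₁| ≤ 3)
    (h : |β * ((c₂ * n₂ + c₁ * n₁ + c₀ * n₀ : ℤ) : ℝ)| ≤ 7 / 2) :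
    c₂ = 0 ∧ c₁ = 0 ∧ c₀ = 0 := by
  have hβC : β * C = 7 * β + 4 := by rw [hC]; field_simp
  have hC7 : 7 ≤ C := by rw [hC]; have : 0 < 4 / β := by positivity
                         linarith
  have h0' : (1 : ℝ) ≤ n₀ := by exact_mod_cast h0
  have h1' : (1 : ℝ) ≤ n₁ := by exact_mod_cast h1
  have h01 : (n₀ : ℝ) ≤ n₁ := by nlinarith
  have h2' : (1 : ℝ) ≤ n₂ := by nlinarith
  rw [abs_mul, abs_of_pos hβ] at h
  -- generic step
  have b0' : |(c₀ : ℝ)| ≤ 3 := by exact_mod_cast b0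
  have b1' : |(c₁ : ℝ)| ≤ 3 := by exact_mod_cast b1
  have t0 : |(c₀ : ℝ) * n₀| ≤ 3 * n₀ := by
    rw [abs_mul, abs_of_pos (by linarith : (0 : ℝ) < n₀)]; nlinarith
  have t1 : |(c₁ : ℝ) * n₁| ≤ 3 * n₁ := by
    rw [abs_mul, abs_of_pos (by linarith : (0 : ℝ) < n₁)]; nlinarith
  have step : ∀ (c n : ℤ) (y : ℝ), (0 : ℝ) < n → c ≠ 0 → |(c : ℝ) * n + y| ≥ n - |y| := by
    intro c n y hn hc
    have : (1 : ℝ) ≤ |(c : ℝ)| := by exact_mod_cast Int.one_le_abs hc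
    have h3 : (n : ℝ) ≤ |(c : ℝ) * n| := by
      rw [abs_mul, abs_of_pos hn]; nlinarith
    have h4 := abs_sub_abs_le_abs_sub ((c : ℝ) * n) (-y)
    rw [abs_neg, sub_neg_eq_add] at h4
    linarith
  push_cast at h
  have p1 : β * (C * n₁) = 7 * (β * n₁) + 4 * n₁ := by rw [← mul_assoc, hβC]; ring
  have p0 : β * (C * n₀) = 7 * (β * n₀) + 4 * n₀ := by rw [← mul_assoc, hβC]; ring
  have q2 := mul_le_mul_of_nonneg_left h2C hβ.le
  have q1 := mul_le_mul_of_nonneg_left h1C hβ.le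
  have q0 := mul_le_mul_of_nonneg_left h0C hβ.le
  have q01 := mul_le_mul_of_nonneg_left h01 hβ.le
  have z1 : 0 < β * n₁ := by positivity
  have z0 : 0 < β * n₀ := by positivity
  have hc2 : c₂ = 0 := by
    by_contra hc
    have := step c₂ n₂ (c₁ * n₁ + c₀ * n₀) (by linarith) hc
    rw [← add_assoc] at this
    have h5 := abs_add_le ((c₁ : ℝ) * n₁) (c₀ * n₀)
    have h6 : (n₂ : ℝ) - 3 * n₁ - 3 * n₀ ≤ |(c₂ : ℝ) * n₂ + c₁ * n₁ + c₀ * n₀| := by linarith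
    have h7 := mul_le_mul_of_nonneg_left h6 hβ.le
    nlinarith
  subst hc2
  have hc1 : c₁ = 0 := by
    by_contra hc
    have := step c₁ n₁ (c₀ * n₀) (by linarith) hc
    simp only [Int.cast_zero, zero_mul, zero_add] at h
    have h6 : (n₁ : ℝ) - 3 * n₀ ≤ |(c₁ : ℝ) * n₁ + c₀ * n₀| := by linarith
    have h7 := mul_le_mul_of_nonneg_left h6 hβ.le
    nlinarith
  subst hc1
  refine ⟨rfl, rfl, ?_⟩
  by_contra hc
  have := step c₀ n₀ 0 (by linarith) hc
  simp only [Int.cast_zero, zero_mul, zero_add, add_zero, abs_zero, sub_zero] at h this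
  have h7 := mul_le_mul_of_nonneg_left this hβ.le
  nlinarith

lemma forward (α β : ℝ) (hβ : 0 < β) (hirr : Irrational α)
    (g : ℤ → ℤ) (hg : ∀ n : ℤ, g n = round (β * n * round (α * n)))
    (n₀ n₁ n₂ : ℤ) (C : ℝ) (hC : C = 7 + 4 / β)
    (h0 : 0 < n₀) (h1 : 0 < n₁) (h0C : C ≤ n₀) (h1C : C * n₀ ≤ n₁) (h2C : C * n₁ ≤ n₂)
    (h : Δ2 g n₀ n₁ n₂ = 0) : |sfrac (α * n₀) + sfrac (α * n₁)| < 1 / 2 := by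
  have g0 : g 0 = 0 := by simp [hg]
  have hgb : ∀ n : ℤ, |β * (n * round (α * n)) - g n| ≤ 1 / 2 := by
    intro n
    rw [hg, ← mul_assoc]; exact abs_sub_round _
  have hr := round_lt α hirr
  unfold Δ2 at h
  rw [g0] at h
  have h' : (g (n₀ + n₁ + n₂) : ℝ) - g (n₀ + n₁) - g (n₁ + n₂) - g (n₂ + n₀)
    + g n₀ + g n₁ + g n₂ = 0 := by
    have : g (n₀ + n₁ + n₂) - g (n₀ + n₁) - g (n₁ + n₂) - g (n₂ + n₀)
      + g n₀ + g n₁ + g n₂ = 0 := by linarith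
    exact_mod_cast this
  have a0 := hgb n₀
  have a1 := hgb n₁
  have a2 := hgb n₂
  have a01 := hgb (n₀ + n₁)
  have a12 := hgb (n₁ + n₂)
  have a20 := hgb (n₂ + n₀)
  have a012 := hgb (n₀ + n₁ + n₂)
  have r0 := hr n₀
  have r1 := hr n₁
  have r2 := hr n₂
  have r01 := hr (n₀ + n₁)
  have r12 := hr (n₁ + n₂)
  have r20 := hr (n₂ + n₀)
  have r012 := hr (n₀ + n₁ + n₂)
  unfold sfrac
  generalize round (α * ((n₀ + n₁ + n₂ : ℤ) : ℝ)) = L012 at *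
  generalize round (α * ((n₀ + n₁ : ℤ) : ℝ)) = L01 at *
  generalize round (α * ((n₁ + n₂ : ℤ) : ℝ)) = L12 at *
  generalize round (α * ((n₂ + n₀ : ℤ) : ℝ)) = L20 at *
  generalize round (α * (n₀ : ℝ)) = L0 at *
  generalize round (α * (n₁ : ℝ)) = L1 at *
  generalize round (α * (n₂ : ℝ)) = L2 at *
  obtain ⟨e01, rfl⟩ : ∃ e, L01 = L0 + L1 + e := ⟨L01 - L0 - L1, by ring⟩
  obtain ⟨e12, rfl⟩ : ∃ e, L12 = L1 + L2 + e := ⟨L12 - L1 - L2, by ring⟩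
  obtain ⟨e20, rfl⟩ : ∃ e, L20 = L2 + L0 + e := ⟨L20 - L2 - L0, by ring⟩
  obtain ⟨e012, rfl⟩ : ∃ e, L012 = L0 + L1 + L2 + e := ⟨L012 - L0 - L1 - L2, by ring⟩
  push_cast at *
  rw [abs_le] at a0 a1 a2 a01 a12 a20 a012
  rw [abs_lt] at r0 r1 r2 r01 r12 r20 r012
  have small : ∀ e : ℤ, (e : ℝ) < 2 → -2 < (e : ℝ) → -1 ≤ e ∧ e ≤ 1 := by
    intro e u v
    have u' : e < 2 := by exact_mod_cast u
    have v' : -2 < e := by exact_mod_cast v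
    omega
  have s01 := small e01 (by linarith) (by linarith)
  have s12 := small e12 (by linarith) (by linarith)
  have s20 := small e20 (by linarith) (by linarith)
  have s012 := small e012 (by linarith) (by linarith)
  -- the coefficient of n₀ could a priori be 3 in absolute value
  have := forward_arith β hβ n₀ n₁ n₂ (e012 - e01 - e20) (e012 - e01 - e12) (e012 - e12 - e20)
    C hC h0 h1 h0C h1C h2C (by rw [abs_le]; omega) (by rw [abs_le]; omega)
    (by push_cast; rw [abs_le]; constructor <;> linarith)
  have he : e01 = 0 := by omega
  subst he
  rw [abs_lt]
  push_cast at r01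
  constructor <;> linarith

lemma round_add' (α : ℝ) (m n : ℤ)
    (h : |(α * m - round (α * m)) + (α * n - round (α * n))| < 1 / 2) :
    round (α * ((m + n : ℤ) : ℝ)) = round (α * m) + round (α * n) := by
  apply round_eq'
  convert h using 2
  push_cast; ring

lemma shift (α β : ℝ) (g : ℤ → ℤ) (hg : ∀ n : ℤ, g n = round (β * n * round (α * n)))
    (m n p q r : ℤ) (ε η : ℝ)
    (hη : ∀ (y : ℝ) (z : ℤ), |y - (β * ((m * round (α * m) : ℤ) : ℝ) + z)| < η →
      round y = round (β * ((m * round (α * m) : ℤ) : ℝ)) + z)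
    (hR : round (α * ((m + n : ℤ) : ℝ)) = round (α * m) + round (α * n))
    (hp : |β * n - p| < ε) (hq : |β * round (α * n) - q| < ε)
    (hr : |β * n * round (α * n) - r| < ε)
    (hε : ε * (1 + |(m : ℝ)| + |(round (α * m) : ℝ)|) ≤ η) :
    g (m + n) = g m + (r + m * q + round (α * m) * p) := by
  rw [hg, hg m, hR]
  generalize round (α * m) = L at *
  generalize round (α * n) = T at *
  rw [hη _ (r + m * q + L * p)]
  · congr 2; push_cast; ring
  · push_cast
    have : β * (m + n) * (L + T) - (β * (m * L) + (r + m * q + L * p))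
        = (β * n * T - r) + m * (β * T - q) + L * (β * n - p) := by ring
    rw [this]
    have h1 := abs_add_three (β * n * T - r) (m * (β * T - q)) (L * (β * n - p))
    rw [abs_mul, abs_mul] at h1
    have h2 := mul_le_mul_of_nonneg_left hq.le (abs_nonneg (m : ℝ))
    have h3 := mul_le_mul_of_nonneg_left hp.le (abs_nonneg (L : ℝ))
    linarith

lemma backward (α β : ℝ) (hirr : Irrational α)
    (hβ' : (∃ b : ℤ, β = (b : ℝ)) ∨ Irrational β)
    (g : ℤ → ℤ) (hg : ∀ n : ℤ, g n = round (β * n * round (α * n)))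
    (n₀ n₁ : ℤ) (B : ℝ) (h : |sfrac (α * n₀) + sfrac (α * n₁)| < 1 / 2) :
    ∃ n₂ : ℤ, 0 < n₂ ∧ B ≤ (n₂ : ℝ) ∧ Δ2 g n₀ n₁ n₂ = 0 := by
  unfold sfrac at h
  have g0 : g 0 = 0 := by simp [hg]
  have R01 := round_add' α n₀ n₁ h
  -- a common choice of ε for a single m
  have choose_eps : ∀ m : ℤ, ∃ ε₀ > 0, ∀ ε, 0 < ε → ε ≤ ε₀ → ∀ n p q r : ℤ,
      |α * n - round (α * n)| < ε → |β * n - p| < ε → |β * round (α * n) - q| < ε →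
      |β * n * round (α * n) - r| < ε →
      g (m + n) = g m + (r + m * q + round (α * m) * p) := by
    intro m
    obtain ⟨η, hη0, hη⟩ := round_cont (β * ((m * round (α * m) : ℤ) : ℝ))
      (not_half β hβ' (m * round (α * m)))
    have hm := round_lt α hirr m
    have hD : 0 < 1 + |(m : ℝ)| + |(round (α * m) : ℝ)| := by positivity
    refine ⟨min (1 / 2 - |α * m - round (α * m)|) (η / (1 + |(m : ℝ)| + |(round (α * m) : ℝ)|)),
      lt_min (by linarith) (by positivity), ?_⟩
    intro ε hε hle n p q r hn hp hq hr
    have l1 := hle.trans (min_le_left _ _)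
    have l2 := hle.trans (min_le_right _ _)
    rw [le_div_iff₀ hD] at l2
    exact shift α β g hg m n p q r ε η hη
      (round_add' α m n ((abs_add_le _ _).trans_lt (by linarith))) hp hq hr l2
  obtain ⟨ε0, p0, H0⟩ := choose_eps n₀
  obtain ⟨ε1, p1, H1⟩ := choose_eps n₁
  obtain ⟨ε2, p2, H2⟩ := choose_eps (n₀ + n₁)
  obtain ⟨ε3, p3, H3⟩ := choose_eps 0
  obtain ⟨ε, hε, hl0, hl1, hl2, hl3, hl4⟩ :
      ∃ ε, 0 < ε ∧ ε ≤ ε0 ∧ ε ≤ ε1 ∧ ε ≤ ε2 ∧ ε ≤ ε3 ∧ ε < 1 / 2 := by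
    refine ⟨min ε0 (min ε1 (min ε2 (min ε3 (1 / 4)))), by positivity, ?_, ?_, ?_, ?_, ?_⟩
    · simp
    · simp
    · simp
    · simp
    · norm_num
  obtain ⟨N, hN⟩ := exists_nat_ge B
  obtain ⟨n, hNn, hn, hs, ⟨p, hp⟩, ⟨q, hq⟩, ⟨r, hr⟩⟩ := recur α β ε hε hl4 N
  refine ⟨n, hn, hN.trans (by exact_mod_cast hNn), ?_⟩
  have k0 := H0 ε hε hl0 n p q r hs hp hq hr
  have k1 := H1 ε hε hl1 n p q r hs hp hq hr
  have k2 := H2 ε hε hl2 n p q r hs hp hq hr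
  have k3 := H3 ε hε hl3 n p q r hs hp hq hr
  rw [R01] at k2
  simp only [zero_add, g0, zero_mul, Int.cast_zero, mul_zero, round_zero, add_zero] at k3
  unfold Δ2
  rw [add_comm n n₀, k2, k1, k0, k3, g0]
  ring

theorem characterization (α β : ℝ) (hα : 0 < α) (hβ : 0 < β)
    (hind : LinearIndependent ℚ ![(1 : ℝ), α, α ^ 2])
    (hβ' : (∃ b : ℤ, β = (b : ℝ)) ∨ Irrational β)
    (g : ℤ → ℤ) (hg : ∀ n : ℤ, g n = round (β * n * round (α * n))) :
    ∃ C : ℝ, 1 ≤ C ∧ ∀ n₀ n₁ : ℤ, 0 < n₀ → 0 < n₁ →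
      C ≤ (n₀ : ℝ) → C * n₀ ≤ (n₁ : ℝ) →
      ((∃ n₂ : ℤ, 0 < n₂ ∧ C * n₁ ≤ (n₂ : ℝ) ∧ Δ2 g n₀ n₁ n₂ = 0) ↔
        |sfrac (α * n₀) + sfrac (α * n₁)| < 1 / 2) := by
  have hirr := irr_of_ind α hind
  have hp : 0 < 4 / β := by positivity
  refine ⟨7 + 4 / β, by linarith, fun n₀ n₁ h0 h1 h0C h1C => ⟨?_, fun h => ?_⟩⟩
  · rintro ⟨n₂, _, h2C, h⟩
    exact forward α β hβ hirr g hg n₀ n₁ n₂ _ rfl h0 h1 h0C h1C h2C h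
  · exact backward α β hirr hβ' g hg n₀ n₁ _ h

end Stmt6
end
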